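/- arXiv:2401.10093 — 4 statements merged into one kernel-verified Lean document; each statement's English description precedes it below -/
import Mathlib

section
/- Let Z : ℤ⁴ → ℂ be a central charge whose values on the four standard basis vectors lie in ℍ, set θ := φ(1,1,0,0), and assume: (a) for every nonzero d ∈ ℕ⁴ one has φ(d) = θ if and only if d lies in the subgroup of ℤ⁴ generated by (1,1,0,0) and (0,0,1,1); (b) φ(0,1,0,0) < θ < φ(0,0,1,0); (c) φ(0,0,0,1) < θ < φ(1,0,0,0). Then a nonzero representation of the quiver with potential (Q, W) whose phase equals θ is stable if and only if it is isomorphic to M(b₁), M(c₂) or M(b₂a₃c₁); in particular, up to isomorphism there are precisely three stable representations of phase θ. -/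
/-!
# Statement 1

Work over `ℂ`.  Let `Q` be the quiver with vertices `A, B, C, D` and arrows
`a₁, a₂ : D → A`, `b₁ : A → B`, `b₂ : A → C`, `a₃ : C → B`, `c₁ : B → D`, `c₂ : C → D`,
with potential `W = a₁b₁c₁ + a₂b₂c₂`, whose Jacobian relations are `f_{b₁}∘f_{a₁} = 0`,
`f_{c₁}∘f_{b₁} = 0`, `f_{a₁}∘f_{c₁} = 0`, `f_{b₂}∘f_{a₂} = 0`, `f_{c₂}∘f_{b₂} = 0`,
`f_{a₂}∘f_{c₂} = 0`.

Let `Z : ℤ⁴ → ℂ` be a central charge whose values on the four standard basis vectors lie in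
`ℍ`, set `θ := φ(1,1,0,0)`, and assume: (a) for every nonzero `d ∈ ℕ⁴` one has `φ(d) = θ`
iff `d` lies in the subgroup of `ℤ⁴` generated by `(1,1,0,0)` and `(0,0,1,1)`;
(b) `φ(0,1,0,0) < θ < φ(0,0,1,0)`; (c) `φ(0,0,0,1) < θ < φ(1,0,0,0)`.  Then a nonzero
representation of `(Q, W)` whose phase equals `θ` is stable if and only if it is isomorphic
to `M(b₁)`, `M(c₂)` or `M(b₂a₃c₁)`; in particular, up to isomorphism there are precisely
three stable representations of phase `θ`.

(Dimension vectors are ordered `(dim V_A, dim V_B, dim V_C, dim V_D)`.)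
-/

noncomputable section
open Module

/-- The set `ℍ = {r·exp(iπφ) : r > 0, 0 < φ ≤ 1} ⊆ ℂ`. -/
def UpperH : Set ℂ :=
  {z | ∃ r φ : ℝ, 0 < r ∧ 0 < φ ∧ φ ≤ 1 ∧ z = (r : ℂ) * Complex.exp ((Real.pi * φ : ℝ) * Complex.I)}

/-- The phase `φ ∈ (0, 1]` of a complex number `z ∈ ℍ`: if `z = r·exp(iπφ)` with `r > 0` and
`0 < φ ≤ 1`, then `Complex.arg z = π·φ`, so that `phase z = φ` is the unique `φ ∈ (0,1]`
with `z ∈ ℝ_{>0}·exp(iπφ)`. -/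
def phase (z : ℂ) : ℝ := Complex.arg z / Real.pi

/-- A representation of the quiver `Q` (vertices `A, B, C, D`; arrows `a₁, a₂ : D → A`,
`b₁ : A → B`, `b₂ : A → C`, `a₃ : C → B`, `c₁ : B → D`, `c₂ : C → D`) satisfying the
Jacobian relations of the potential `W = a₁b₁c₁ + a₂b₂c₂`. -/
structure Rep4 where
  VA : Type
  VB : Type
  VC : Type
  VD : Type
  [acgA : AddCommGroup VA]
  [acgB : AddCommGroup VB]
  [acgC : AddCommGroup VC]
  [acgD : AddCommGroup VD]
  [modA : Module ℂ VA]
  [modB : Module ℂ VB]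
  [modC : Module ℂ VC]
  [modD : Module ℂ VD]
  [fdA : FiniteDimensional ℂ VA]
  [fdB : FiniteDimensional ℂ VB]
  [fdC : FiniteDimensional ℂ VC]
  [fdD : FiniteDimensional ℂ VD]
  fa1 : VD →ₗ[ℂ] VA
  fa2 : VD →ₗ[ℂ] VA
  fb1 : VA →ₗ[ℂ] VB
  fb2 : VA →ₗ[ℂ] VC
  fa3 : VC →ₗ[ℂ] VB
  fc1 : VB →ₗ[ℂ] VD
  fc2 : VC →ₗ[ℂ] VD
  rel_ba1 : fb1 ∘ₗ fa1 = 0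
  rel_cb1 : fc1 ∘ₗ fb1 = 0
  rel_ac1 : fa1 ∘ₗ fc1 = 0
  rel_ba2 : fb2 ∘ₗ fa2 = 0
  rel_cb2 : fc2 ∘ₗ fb2 = 0
  rel_ac2 : fa2 ∘ₗ fc2 = 0

attribute [instance] Rep4.acgA Rep4.acgB Rep4.acgC Rep4.acgD Rep4.modA Rep4.modB Rep4.modC
  Rep4.modD Rep4.fdA Rep4.fdB Rep4.fdC Rep4.fdD

namespace Rep4

/-- The dimension vector `(dim V_A, dim V_B, dim V_C, dim V_D)`. -/
def dimVec (M : Rep4) : ℕ × ℕ × ℕ × ℕ :=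
  (finrank ℂ M.VA, finrank ℂ M.VB, finrank ℂ M.VC, finrank ℂ M.VD)

/-- A subrepresentation: a quadruple of submodules closed under the seven structure maps. -/
structure Sub (M : Rep4) where
  SA : Submodule ℂ M.VA
  SB : Submodule ℂ M.VB
  SC : Submodule ℂ M.VC
  SD : Submodule ℂ M.VD
  mapsto_a1 : ∀ x ∈ SD, M.fa1 x ∈ SA
  mapsto_a2 : ∀ x ∈ SD, M.fa2 x ∈ SA
  mapsto_b1 : ∀ x ∈ SA, M.fb1 x ∈ SB
  mapsto_b2 : ∀ x ∈ SA, M.fb2 x ∈ SC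
  mapsto_a3 : ∀ x ∈ SC, M.fa3 x ∈ SB
  mapsto_c1 : ∀ x ∈ SB, M.fc1 x ∈ SD
  mapsto_c2 : ∀ x ∈ SC, M.fc2 x ∈ SD

/-- The dimension vector of a subrepresentation. -/
def Sub.dimVec {M : Rep4} (L : M.Sub) : ℕ × ℕ × ℕ × ℕ :=
  (finrank ℂ L.SA, finrank ℂ L.SB, finrank ℂ L.SC, finrank ℂ L.SD)

/-- The subrepresentation is nonzero. -/
def Sub.Nonzero {M : Rep4} (L : M.Sub) : Prop :=
  L.SA ≠ ⊥ ∨ L.SB ≠ ⊥ ∨ L.SC ≠ ⊥ ∨ L.SD ≠ ⊥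

/-- The subrepresentation is proper. -/
def Sub.Proper {M : Rep4} (L : M.Sub) : Prop :=
  L.SA ≠ ⊤ ∨ L.SB ≠ ⊤ ∨ L.SC ≠ ⊤ ∨ L.SD ≠ ⊤

end Rep4

/-- The value of the central charge on a dimension vector in `ℕ⁴`. -/
def chargeOf4 (Z : ℤ × ℤ × ℤ × ℤ →+ ℂ) (d : ℕ × ℕ × ℕ × ℕ) : ℂ :=
  Z ((d.1 : ℤ), (d.2.1 : ℤ), (d.2.2.1 : ℤ), (d.2.2.2 : ℤ))

/-- A nonzero representation `M` is stable if `φ(dim L) < φ(dim M)` for every nonzero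
proper subrepresentation `L` of `M`. -/
def IsStable4 (Z : ℤ × ℤ × ℤ × ℤ →+ ℂ) (M : Rep4) : Prop :=
  M.dimVec ≠ (0, 0, 0, 0) ∧
    ∀ L : M.Sub, L.Nonzero → L.Proper →
      phase (chargeOf4 Z L.dimVec) < phase (chargeOf4 Z M.dimVec)

/-- Isomorphism of representations. -/
def RepIso4 (M N : Rep4) : Prop :=
  ∃ (eA : M.VA ≃ₗ[ℂ] N.VA) (eB : M.VB ≃ₗ[ℂ] N.VB) (eC : M.VC ≃ₗ[ℂ] N.VC)
    (eD : M.VD ≃ₗ[ℂ] N.VD),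
    (∀ x, eA (M.fa1 x) = N.fa1 (eD x)) ∧ (∀ x, eA (M.fa2 x) = N.fa2 (eD x)) ∧
    (∀ x, eB (M.fb1 x) = N.fb1 (eA x)) ∧ (∀ x, eC (M.fb2 x) = N.fb2 (eA x)) ∧
    (∀ x, eB (M.fa3 x) = N.fa3 (eC x)) ∧ (∀ x, eD (M.fc1 x) = N.fc1 (eB x)) ∧
    (∀ x, eD (M.fc2 x) = N.fc2 (eC x))

/-- The string module `M(b₁)`: `V_A = V_B = ℂ`, `V_C = V_D = 0`, `f_{b₁} = id`, all other
data zero. -/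
def Mb1 : Rep4 where
  VA := ℂ
  VB := ℂ
  VC := Fin 0 → ℂ
  VD := Fin 0 → ℂ
  fa1 := 0
  fa2 := 0
  fb1 := LinearMap.id
  fb2 := 0
  fa3 := 0
  fc1 := 0
  fc2 := 0
  rel_ba1 := by simp
  rel_cb1 := by simp
  rel_ac1 := by simp
  rel_ba2 := by simp
  rel_cb2 := by simp
  rel_ac2 := by simp

/-- The string module `M(c₂)`: `V_C = V_D = ℂ`, `V_A = V_B = 0`, `f_{c₂} = id`, all other
data zero. -/
def Mc2 : Rep4 where
  VA := Fin 0 → ℂ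
  VB := Fin 0 → ℂ
  VC := ℂ
  VD := ℂ
  fa1 := 0
  fa2 := 0
  fb1 := 0
  fb2 := 0
  fa3 := 0
  fc1 := 0
  fc2 := LinearMap.id
  rel_ba1 := by simp
  rel_cb1 := by simp
  rel_ac1 := by simp
  rel_ba2 := by simp
  rel_cb2 := by simp
  rel_ac2 := by simp

/-- The string module `M(b₂a₃c₁)`: `V_A = V_B = V_C = V_D = ℂ`,
`f_{b₂} = f_{a₃} = f_{c₁} = id`, all other maps zero. -/
def Mb2a3c1 : Rep4 where
  VA := ℂ
  VB := ℂ
  VC := ℂ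
  VD := ℂ
  fa1 := 0
  fa2 := 0
  fb1 := 0
  fb2 := LinearMap.id
  fa3 := LinearMap.id
  fc1 := LinearMap.id
  fc2 := 0
  rel_ba1 := by simp
  rel_cb1 := by simp
  rel_ac1 := by simp
  rel_ba2 := by simp
  rel_cb2 := by simp
  rel_ac2 := by simp

/-!
Measured against the ray through `w = Z(1,1,0,0)`, phases become signs of the additive form
`θ(d) = w ∧ Z(d)`, so stability at the phase of `w` is King stability for `θ`, and Schur's lemma
applies: a nonzero morphism between stable representations is an isomorphism. The three string
modules are stable, and each defect of a stable representation `M` (a kernel of `b₂` or `a₃`, a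
cokernel of `c₁` or `a₃`) yields a nonzero morphism between `M` and `M(b₁)` or `M(c₂)`. If there is
no defect, the relations kill `a₁` and `a₂`, the equality of dimensions makes `c₁` injective, so
that `b₁ = 0`, and every vector of `V_A` generates an image of `M(b₂a₃c₁)`.
-/

attribute [local instance] Complex.finrank_real_complex_fact

section Phase

theorem mem_upperH_iff_arg_pos {z : ℂ} : z ∈ UpperH ↔ 0 < z.arg := by
  have hπ := Real.pi_pos
  constructor
  · rintro ⟨r, φ, hr, hφ0, hφ1, rfl⟩
    rw [Complex.exp_mul_I, Complex.arg_mul_cos_add_sin_mul_I hr ⟨by nlinarith, by nlinarith⟩]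
    positivity
  · intro hz
    have hz0 : z ≠ 0 := by rintro rfl; simp at hz
    refine ⟨‖z‖, z.arg / Real.pi, norm_pos_iff.mpr hz0, by positivity,
      (div_le_one hπ).mpr z.arg_le_pi, ?_⟩
    rw [mul_div_cancel₀ _ hπ.ne', Complex.norm_mul_exp_arg_mul_I]

theorem mem_upperH_iff_im_re {z : ℂ} : z ∈ UpperH ↔ 0 ≤ z.im ∧ ¬(0 ≤ z.re ∧ z.im = 0) := by
  rw [mem_upperH_iff_arg_pos, lt_iff_le_and_ne, Complex.arg_nonneg_iff, ne_comm, Ne,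
    Complex.arg_eq_zero_iff]

/-- `UpperH` as an additive subsemigroup of `ℂ`; it contains the charges of all nonzero
dimension vectors. -/
def upperHSubsemigroup : AddSubsemigroup ℂ where
  carrier := UpperH
  add_mem' {z w} hz hw := by
    rw [mem_upperH_iff_im_re] at *
    simp only [Complex.add_re, Complex.add_im]
    grind

theorem areaForm_eq_norm_mul_sin (w z : ℂ) :
    Complex.orientation.areaForm w z = ‖w‖ * ‖z‖ * Real.sin (z.arg - w.arg) := by
  rw [Complex.areaForm, Complex.mul_im, Complex.conj_re, Complex.conj_im, Real.sin_sub,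
    ← Complex.norm_mul_cos_arg w, ← Complex.norm_mul_sin_arg w, ← Complex.norm_mul_cos_arg z,
    ← Complex.norm_mul_sin_arg z]
  ring

theorem sin_neg_iff_of_abs_lt_pi {x : ℝ} (hx : |x| < Real.pi) : Real.sin x < 0 ↔ x < 0 := by
  obtain ⟨hlo, hhi⟩ := abs_lt.mp hx
  refine ⟨fun h => ?_, fun h => Real.sin_neg_of_neg_of_neg_pi_lt h hlo⟩
  contrapose! h
  exact Real.sin_nonneg_of_nonneg_of_le_pi h hhi.le

theorem phase_lt_phase_iff {z w : ℂ} (hz : z ∈ UpperH) (hw : w ∈ UpperH) :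
    phase z < phase w ↔ Complex.orientation.areaForm w z < 0 := by
  rw [mem_upperH_iff_arg_pos] at hz hw
  have hz0 : z ≠ 0 := by rintro rfl; simp at hz
  have hw0 : w ≠ 0 := by rintro rfl; simp at hw
  have hnorm : 0 < ‖w‖ * ‖z‖ := by positivity
  have hdiff : |z.arg - w.arg| < Real.pi :=
    abs_lt.mpr ⟨by linarith [w.arg_le_pi], by linarith [z.arg_le_pi]⟩
  rw [phase, phase, div_lt_div_iff_of_pos_right Real.pi_pos, areaForm_eq_norm_mul_sin,
    ← smul_eq_mul (_ * _), smul_neg_iff_of_pos_left hnorm, sin_neg_iff_of_abs_lt_pi hdiff, sub_neg]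

theorem areaForm_eq_zero_of_phase_eq {z w : ℂ} (h : phase z = phase w) :
    Complex.orientation.areaForm w z = 0 := by
  rw [phase, phase, div_left_inj' Real.pi_ne_zero] at h
  rw [areaForm_eq_norm_mul_sin, h, sub_self, Real.sin_zero, mul_zero]

end Phase

section Charge

theorem map_dimVec_mem_of_basis {G : Type*} [AddCommMonoid G] (f : ℕ × ℕ × ℕ × ℕ →+ G)
    (S : AddSubsemigroup G) (hA : f (1, 0, 0, 0) ∈ S) (hB : f (0, 1, 0, 0) ∈ S)
    (hC : f (0, 0, 1, 0) ∈ S) (hD : f (0, 0, 0, 1) ∈ S) {d : ℕ × ℕ × ℕ × ℕ} (hd : d ≠ 0) :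
    f d ∈ S := by
  let N : AddSubmonoid (ℕ × ℕ × ℕ × ℕ) :=
    { carrier := {d | d = 0 ∨ f d ∈ S}
      zero_mem' := Or.inl rfl
      add_mem' := by
        rintro d e (rfl | hd) (rfl | he)
        · exact Or.inl (add_zero 0)
        · exact Or.inr (by rwa [zero_add])
        · exact Or.inr (by rwa [add_zero])
        · exact Or.inr (by rw [map_add]; exact S.add_mem hd he) }
  have hsum : d = d.1 • (1, 0, 0, 0) + d.2.1 • (0, 1, 0, 0) + d.2.2.1 • (0, 0, 1, 0) +
      d.2.2.2 • (0, 0, 0, 1) := by simp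
  have hdN : d ∈ N := by
    rw [hsum]
    exact add_mem (add_mem (add_mem (nsmul_mem (Or.inr hA) _) (nsmul_mem (Or.inr hB) _))
      (nsmul_mem (Or.inr hC) _)) (nsmul_mem (Or.inr hD) _)
  exact hdN.resolve_left hd

/-- The central charge `Z` as an additive map on dimension vectors in `ℕ⁴`. -/
def chargeHom (Z : ℤ × ℤ × ℤ × ℤ →+ ℂ) : ℕ × ℕ × ℕ × ℕ →+ ℂ where
  toFun := chargeOf4 Z
  map_zero' := map_zero Z
  map_add' d e := by simp [chargeOf4, ← map_add]

theorem chargeOf4_mem_upperH {Z : ℤ × ℤ × ℤ × ℤ →+ ℂ}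
    (hA : Z (1, 0, 0, 0) ∈ UpperH) (hB : Z (0, 1, 0, 0) ∈ UpperH)
    (hC : Z (0, 0, 1, 0) ∈ UpperH) (hD : Z (0, 0, 0, 1) ∈ UpperH)
    {d : ℕ × ℕ × ℕ × ℕ} (hd : d ≠ 0) : chargeOf4 Z d ∈ UpperH :=
  map_dimVec_mem_of_basis (chargeHom Z) upperHSubsemigroup hA hB hC hD hd

/-- The additive form `d ↦ w ∧ Z(d)` on dimension vectors. Its sign compares the phase of `Z(d)`
with that of `w`, so it is the weight for which stability at the phase of `w` is King stability. -/
def chargeWeight (Z : ℤ × ℤ × ℤ × ℤ →+ ℂ) (w : ℂ) : ℕ × ℕ × ℕ × ℕ →+ ℝ :=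
  (Complex.orientation.areaForm w).toAddMonoidHom.comp (chargeHom Z)

theorem mem_closure_iff_exists_eq {d : ℕ × ℕ × ℕ × ℕ} :
    ((d.1 : ℤ), (d.2.1 : ℤ), (d.2.2.1 : ℤ), (d.2.2.2 : ℤ)) ∈
      AddSubgroup.closure
        ({((1 : ℤ), (1 : ℤ), (0 : ℤ), (0 : ℤ)), ((0 : ℤ), (0 : ℤ), (1 : ℤ), (1 : ℤ))} :
          Set (ℤ × ℤ × ℤ × ℤ)) ↔ ∃ m n, d = (m, m, n, n) := by
  obtain ⟨a, b, c, e⟩ := d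
  rw [AddSubgroup.mem_closure_pair]
  constructor
  · rintro ⟨m, n, hmn⟩
    simp only [Prod.smul_mk, Int.zsmul_eq_mul, mul_one, mul_zero, Prod.mk_add_mk, add_zero,
      zero_add, Prod.mk.injEq] at hmn
    exact ⟨a, c, by grind⟩
  · rintro ⟨m, n, hd⟩
    exact ⟨m, n, by simp_all⟩

end Charge

theorem finrank_le_of_injective_of_mapsTo {K V W : Type*} [DivisionRing K] [AddCommGroup V]
    [Module K V] [AddCommGroup W] [Module K W] [FiniteDimensional K W] {S : Submodule K V}
    {T : Submodule K W} (f : V →ₗ[K] W) (hf : Function.Injective f) (h : ∀ x ∈ S, f x ∈ T) :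
    finrank K S ≤ finrank K T :=
  LinearMap.finrank_le_finrank_of_injective (f := f.restrict h)
    fun _ _ hxy => Subtype.ext (hf (congrArg Subtype.val hxy))

namespace Rep4

variable {M N : Rep4}

section Subrepresentations

theorem Sub.nonzero_iff (L : M.Sub) : L.Nonzero ↔ L.dimVec ≠ 0 := by
  simp only [Sub.Nonzero, Sub.dimVec, ne_eq, ← Prod.mk_zero_zero, Prod.mk.injEq,
    Submodule.finrank_eq_zero]
  tauto

theorem Sub.proper_iff (L : M.Sub) : L.Proper ↔ L.dimVec ≠ M.dimVec := by
  have finrank_eq_iff {V : Type} [AddCommGroup V] [Module ℂ V] [FiniteDimensional ℂ V]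
      (S : Submodule ℂ V) : finrank ℂ S = finrank ℂ V ↔ S = ⊤ :=
    ⟨Submodule.eq_top_of_finrank_eq, fun h => by rw [h, finrank_top]⟩
  simp only [Sub.Proper, Sub.dimVec, Rep4.dimVec, ne_eq, Prod.mk.injEq, finrank_eq_iff]
  tauto

theorem Sub.dimVec_le (L : M.Sub) : L.dimVec ≤ M.dimVec :=
  ⟨Submodule.finrank_le _, Submodule.finrank_le _, Submodule.finrank_le _, Submodule.finrank_le _⟩

instance : Top M.Sub where
  top :=
    { SA := ⊤
      SB := ⊤
      SC := ⊤
      SD := ⊤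
      mapsto_a1 _ _ := trivial
      mapsto_a2 _ _ := trivial
      mapsto_b1 _ _ := trivial
      mapsto_b2 _ _ := trivial
      mapsto_a3 _ _ := trivial
      mapsto_c1 _ _ := trivial
      mapsto_c2 _ _ := trivial }

end Subrepresentations

section Morphisms

/-- Morphisms of representations: linear maps at the four vertices commuting with the seven
arrows. -/
structure Hom (M N : Rep4) where
  mapA : M.VA →ₗ[ℂ] N.VA
  mapB : M.VB →ₗ[ℂ] N.VB
  mapC : M.VC →ₗ[ℂ] N.VC
  mapD : M.VD →ₗ[ℂ] N.VD
  comm_a1 : ∀ x, mapA (M.fa1 x) = N.fa1 (mapD x)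
  comm_a2 : ∀ x, mapA (M.fa2 x) = N.fa2 (mapD x)
  comm_b1 : ∀ x, mapB (M.fb1 x) = N.fb1 (mapA x)
  comm_b2 : ∀ x, mapC (M.fb2 x) = N.fb2 (mapA x)
  comm_a3 : ∀ x, mapB (M.fa3 x) = N.fa3 (mapC x)
  comm_c1 : ∀ x, mapD (M.fc1 x) = N.fc1 (mapB x)
  comm_c2 : ∀ x, mapD (M.fc2 x) = N.fc2 (mapC x)

namespace Hom

/-- The morphism `g` is not zero. -/
def Nonzero (g : Hom M N) : Prop :=
  g.mapA ≠ 0 ∨ g.mapB ≠ 0 ∨ g.mapC ≠ 0 ∨ g.mapD ≠ 0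

/-- The kernel of a morphism, as a subrepresentation of its source. -/
def ker (g : Hom M N) : M.Sub where
  SA := LinearMap.ker g.mapA
  SB := LinearMap.ker g.mapB
  SC := LinearMap.ker g.mapC
  SD := LinearMap.ker g.mapD
  mapsto_a1 x hx := by rw [LinearMap.mem_ker] at *; rw [g.comm_a1, hx, map_zero]
  mapsto_a2 x hx := by rw [LinearMap.mem_ker] at *; rw [g.comm_a2, hx, map_zero]
  mapsto_b1 x hx := by rw [LinearMap.mem_ker] at *; rw [g.comm_b1, hx, map_zero]
  mapsto_b2 x hx := by rw [LinearMap.mem_ker] at *; rw [g.comm_b2, hx, map_zero]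
  mapsto_a3 x hx := by rw [LinearMap.mem_ker] at *; rw [g.comm_a3, hx, map_zero]
  mapsto_c1 x hx := by rw [LinearMap.mem_ker] at *; rw [g.comm_c1, hx, map_zero]
  mapsto_c2 x hx := by rw [LinearMap.mem_ker] at *; rw [g.comm_c2, hx, map_zero]

/-- The image of a subrepresentation under a morphism. -/
def map (g : Hom M N) (L : M.Sub) : N.Sub where
  SA := L.SA.map g.mapA
  SB := L.SB.map g.mapB
  SC := L.SC.map g.mapC
  SD := L.SD.map g.mapD
  mapsto_a1 := by rintro _ ⟨x, hx, rfl⟩; exact ⟨_, L.mapsto_a1 x hx, g.comm_a1 x⟩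
  mapsto_a2 := by rintro _ ⟨x, hx, rfl⟩; exact ⟨_, L.mapsto_a2 x hx, g.comm_a2 x⟩
  mapsto_b1 := by rintro _ ⟨x, hx, rfl⟩; exact ⟨_, L.mapsto_b1 x hx, g.comm_b1 x⟩
  mapsto_b2 := by rintro _ ⟨x, hx, rfl⟩; exact ⟨_, L.mapsto_b2 x hx, g.comm_b2 x⟩
  mapsto_a3 := by rintro _ ⟨x, hx, rfl⟩; exact ⟨_, L.mapsto_a3 x hx, g.comm_a3 x⟩
  mapsto_c1 := by rintro _ ⟨x, hx, rfl⟩; exact ⟨_, L.mapsto_c1 x hx, g.comm_c1 x⟩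
  mapsto_c2 := by rintro _ ⟨x, hx, rfl⟩; exact ⟨_, L.mapsto_c2 x hx, g.comm_c2 x⟩

theorem ker_proper_iff (g : Hom M N) : g.ker.Proper ↔ g.Nonzero := by
  simp only [Sub.Proper, ker, Nonzero, ne_eq, LinearMap.ker_eq_top]

theorem map_top_nonzero_iff (g : Hom M N) : (g.map ⊤).Nonzero ↔ g.Nonzero := by
  simp only [Nonzero, ne_eq, ← LinearMap.range_eq_bot, LinearMap.range_eq_map]
  rfl

theorem dimVec_ker_add_dimVec_map_top (g : Hom M N) :
    g.ker.dimVec + (g.map ⊤).dimVec = M.dimVec := by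
  have rank_nullity {V W : Type} [AddCommGroup V] [Module ℂ V] [FiniteDimensional ℂ V]
      [AddCommGroup W] [Module ℂ W] (f : V →ₗ[ℂ] W) :
      finrank ℂ (LinearMap.ker f) + finrank ℂ ((⊤ : Submodule ℂ V).map f) = finrank ℂ V := by
    rw [← LinearMap.range_eq_map, add_comm, LinearMap.finrank_range_add_finrank_ker]
  exact Prod.ext (rank_nullity g.mapA) (Prod.ext (rank_nullity g.mapB)
    (Prod.ext (rank_nullity g.mapC) (rank_nullity g.mapD)))

theorem repIso4_of_ker_of_map_top (g : Hom M N) (hinj : ¬g.ker.Nonzero)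
    (hsurj : ¬(g.map ⊤).Proper) : RepIso4 M N := by
  obtain ⟨hA, hB, hC, hD⟩ : Function.Injective g.mapA ∧ Function.Injective g.mapB ∧
      Function.Injective g.mapC ∧ Function.Injective g.mapD := by
    simpa only [Sub.Nonzero, ker, ne_eq, not_or, not_not, LinearMap.ker_eq_bot] using hinj
  obtain ⟨hA', hB', hC', hD'⟩ : Function.Surjective g.mapA ∧ Function.Surjective g.mapB ∧
      Function.Surjective g.mapC ∧ Function.Surjective g.mapD := by
    simp only [Sub.Proper, ne_eq, not_or, not_not] at hsurj
    simpa only [← LinearMap.range_eq_top, LinearMap.range_eq_map] using! hsurj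
  exact ⟨.ofBijective g.mapA ⟨hA, hA'⟩, .ofBijective g.mapB ⟨hB, hB'⟩,
    .ofBijective g.mapC ⟨hC, hC'⟩, .ofBijective g.mapD ⟨hD, hD'⟩,
    g.comm_a1, g.comm_a2, g.comm_b1, g.comm_b2, g.comm_a3, g.comm_c1, g.comm_c2⟩

end Hom

end Morphisms

end Rep4

namespace RepIso4

variable {M N : Rep4}

theorem symm (h : RepIso4 M N) : RepIso4 N M := by
  obtain ⟨eA, eB, eC, eD, ha1, ha2, hb1, hb2, ha3, hc1, hc2⟩ := h
  refine ⟨eA.symm, eB.symm, eC.symm, eD.symm, ?_, ?_, ?_, ?_, ?_, ?_, ?_⟩ <;> intro x <;>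
    simp only [LinearEquiv.symm_apply_eq, LinearEquiv.apply_symm_apply, ha1, ha2, hb1, hb2, ha3,
      hc1, hc2]

theorem dimVec_eq (h : RepIso4 M N) : M.dimVec = N.dimVec := by
  obtain ⟨eA, eB, eC, eD, -⟩ := h
  rw [Rep4.dimVec, Rep4.dimVec, eA.finrank_eq, eB.finrank_eq, eC.finrank_eq, eD.finrank_eq]

theorem exists_sub_dimVec_eq (h : RepIso4 M N) (L : M.Sub) :
    ∃ L' : N.Sub, L'.dimVec = L.dimVec := by
  obtain ⟨eA, eB, eC, eD, ha1, ha2, hb1, hb2, ha3, hc1, hc2⟩ := h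
  let g : Rep4.Hom M N := ⟨eA, eB, eC, eD, ha1, ha2, hb1, hb2, ha3, hc1, hc2⟩
  exact ⟨g.map L, Prod.ext (eA.finrank_map_eq L.SA) (Prod.ext (eB.finrank_map_eq L.SB)
    (Prod.ext (eC.finrank_map_eq L.SC) (eD.finrank_map_eq L.SD)))⟩

end RepIso4

namespace Rep4

variable {M N : Rep4} {θ : ℕ × ℕ × ℕ × ℕ →+ ℝ}

/-- King stability with respect to an additive weight `θ` on dimension vectors, with the sign
convention that proper nonzero subrepresentations have negative weight. -/
structure IsWeightStable (θ : ℕ × ℕ × ℕ × ℕ →+ ℝ) (M : Rep4) : Prop where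
  dimVec_ne_zero : M.dimVec ≠ 0
  weight_eq_zero : θ M.dimVec = 0
  weight_sub_neg : ∀ L : M.Sub, L.Nonzero → L.Proper → θ L.dimVec < 0

namespace IsWeightStable

theorem of_repIso4 (hN : N.IsWeightStable θ) (h : RepIso4 M N) : M.IsWeightStable θ where
  dimVec_ne_zero := h.dimVec_eq ▸ hN.dimVec_ne_zero
  weight_eq_zero := h.dimVec_eq ▸ hN.weight_eq_zero
  weight_sub_neg L hL hL' := by
    obtain ⟨L', hdim⟩ := h.exists_sub_dimVec_eq L
    rw [Sub.nonzero_iff, ← hdim] at hL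
    rw [Sub.proper_iff, ← hdim, h.dimVec_eq] at hL'
    exact hdim ▸ hN.weight_sub_neg L' (L'.nonzero_iff.mpr hL) (L'.proper_iff.mpr hL')

theorem weight_sub_nonpos (hM : M.IsWeightStable θ) (L : M.Sub) : θ L.dimVec ≤ 0 := by
  by_cases hL : L.Nonzero
  · by_cases hL' : L.Proper
    · exact (hM.weight_sub_neg L hL hL').le
    · rw [L.proper_iff, not_not] at hL'
      rw [hL', hM.weight_eq_zero]
  · rw [L.nonzero_iff, not_not] at hL
    rw [hL, map_zero]

theorem repIso4_of_hom (hM : M.IsWeightStable θ) (hN : N.IsWeightStable θ) (g : Hom M N)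
    (hg : g.Nonzero) : RepIso4 M N := by
  have hker := hM.weight_sub_nonpos g.ker
  have himage := hN.weight_sub_nonpos (g.map ⊤)
  have hsum : θ g.ker.dimVec + θ (g.map ⊤).dimVec = 0 := by
    rw [← map_add, g.dimVec_ker_add_dimVec_map_top, hM.weight_eq_zero]
  refine g.repIso4_of_ker_of_map_top (fun h => ?_) (fun h => ?_)
  · linarith [hM.weight_sub_neg _ h (g.ker_proper_iff.mpr hg)]
  · linarith [hN.weight_sub_neg _ (g.map_top_nonzero_iff.mpr hg) h]

end IsWeightStable

theorem dimVec_Mb1 : Mb1.dimVec = (1, 1, 0, 0) :=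
  Prod.ext (finrank_self ℂ) (Prod.ext (finrank_self ℂ)
    (Prod.ext (finrank_fin_fun ℂ) (finrank_fin_fun ℂ)))

theorem dimVec_Mc2 : Mc2.dimVec = (0, 0, 1, 1) :=
  Prod.ext (finrank_fin_fun ℂ) (Prod.ext (finrank_fin_fun ℂ)
    (Prod.ext (finrank_self ℂ) (finrank_self ℂ)))

theorem dimVec_Mb2a3c1 : Mb2a3c1.dimVec = (1, 1, 1, 1) :=
  Prod.ext (finrank_self ℂ) (Prod.ext (finrank_self ℂ)
    (Prod.ext (finrank_self ℂ) (finrank_self ℂ)))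

theorem Sub.dimVec_eq_of_Mb1 (L : Mb1.Sub) (hL : L.Nonzero) (hL' : L.Proper) :
    L.dimVec = (0, 1, 0, 0) := by
  have hAB : L.dimVec.1 ≤ L.dimVec.2.1 :=
      finrank_le_of_injective_of_mapsTo Mb1.fb1 Function.injective_id L.mapsto_b1
  have hle := L.dimVec_le
  rw [L.nonzero_iff] at hL
  rw [L.proper_iff] at hL'
  rw [dimVec_Mb1] at hle hL'
  generalize L.dimVec = d at *
  obtain ⟨a, b, c, e⟩ := d
  simp only [Prod.mk_le_mk, ne_eq, ← Prod.mk_zero_zero, Prod.mk.injEq] at *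
  omega

theorem Sub.dimVec_eq_of_Mc2 (L : Mc2.Sub) (hL : L.Nonzero) (hL' : L.Proper) :
    L.dimVec = (0, 0, 0, 1) := by
  have hCD : L.dimVec.2.2.1 ≤ L.dimVec.2.2.2 :=
      finrank_le_of_injective_of_mapsTo Mc2.fc2 Function.injective_id L.mapsto_c2
  have hle := L.dimVec_le
  rw [L.nonzero_iff] at hL
  rw [L.proper_iff] at hL'
  rw [dimVec_Mc2] at hle hL'
  generalize L.dimVec = d at *
  obtain ⟨a, b, c, e⟩ := d
  simp only [Prod.mk_le_mk, ne_eq, ← Prod.mk_zero_zero, Prod.mk.injEq] at *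
  omega

theorem Sub.dimVec_eq_of_Mb2a3c1 (L : Mb2a3c1.Sub) (hL : L.Nonzero) (hL' : L.Proper) :
    L.dimVec = (0, 0, 0, 1) ∨ L.dimVec = (0, 1, 0, 1) ∨ L.dimVec = (0, 1, 1, 1) := by
  have hAC : L.dimVec.1 ≤ L.dimVec.2.2.1 :=
      finrank_le_of_injective_of_mapsTo Mb2a3c1.fb2 Function.injective_id L.mapsto_b2
  have hCB : L.dimVec.2.2.1 ≤ L.dimVec.2.1 :=
      finrank_le_of_injective_of_mapsTo Mb2a3c1.fa3 Function.injective_id L.mapsto_a3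
  have hBD : L.dimVec.2.1 ≤ L.dimVec.2.2.2 :=
      finrank_le_of_injective_of_mapsTo Mb2a3c1.fc1 Function.injective_id L.mapsto_c1
  have hle := L.dimVec_le
  rw [L.nonzero_iff] at hL
  rw [L.proper_iff] at hL'
  rw [dimVec_Mb2a3c1] at hle hL'
  generalize L.dimVec = d at *
  obtain ⟨a, b, c, e⟩ := d
  simp only [Prod.mk_le_mk, ne_eq, ← Prod.mk_zero_zero, Prod.mk.injEq] at *
  omega

theorem isWeightStable_Mb1 (hAB : θ (1, 1, 0, 0) = 0) (hB : θ (0, 1, 0, 0) < 0) :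
    Mb1.IsWeightStable θ where
  dimVec_ne_zero := by simp [dimVec_Mb1]
  weight_eq_zero := by rw [dimVec_Mb1, hAB]
  weight_sub_neg L hL hL' := by rwa [L.dimVec_eq_of_Mb1 hL hL']

theorem isWeightStable_Mc2 (hCD : θ (0, 0, 1, 1) = 0) (hD : θ (0, 0, 0, 1) < 0) :
    Mc2.IsWeightStable θ where
  dimVec_ne_zero := by simp [dimVec_Mc2]
  weight_eq_zero := by rw [dimVec_Mc2, hCD]
  weight_sub_neg L hL hL' := by rwa [L.dimVec_eq_of_Mc2 hL hL']

theorem isWeightStable_Mb2a3c1 (hAB : θ (1, 1, 0, 0) = 0) (hCD : θ (0, 0, 1, 1) = 0)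
    (hB : θ (0, 1, 0, 0) < 0) (hD : θ (0, 0, 0, 1) < 0) : Mb2a3c1.IsWeightStable θ where
  dimVec_ne_zero := by simp [dimVec_Mb2a3c1]
  weight_eq_zero := by
    have hABCD := map_add θ (1, 1, 0, 0) (0, 0, 1, 1)
    rw [hAB, hCD, add_zero] at hABCD
    rwa [dimVec_Mb2a3c1]
  weight_sub_neg L hL hL' := by
    have hBD := map_add θ (0, 1, 0, 0) (0, 0, 0, 1)
    have hBCD := map_add θ (0, 1, 0, 0) (0, 0, 1, 1)
    simp only [Prod.mk_add_mk, add_zero, zero_add] at hBD hBCD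
    rcases L.dimVec_eq_of_Mb2a3c1 hL hL' with hdim | hdim | hdim <;> rw [hdim] <;> linarith

section StringModuleMorphisms

theorem fb1_fa1_apply (M : Rep4) (x : M.VD) : M.fb1 (M.fa1 x) = 0 :=
  LinearMap.congr_fun M.rel_ba1 x

theorem fc1_fb1_apply (M : Rep4) (x : M.VA) : M.fc1 (M.fb1 x) = 0 :=
  LinearMap.congr_fun M.rel_cb1 x

theorem fa1_fc1_apply (M : Rep4) (x : M.VB) : M.fa1 (M.fc1 x) = 0 :=
  LinearMap.congr_fun M.rel_ac1 x

theorem fc2_fb2_apply (M : Rep4) (x : M.VA) : M.fc2 (M.fb2 x) = 0 :=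
  LinearMap.congr_fun M.rel_cb2 x

theorem fa2_fc2_apply (M : Rep4) (x : M.VC) : M.fa2 (M.fc2 x) = 0 :=
  LinearMap.congr_fun M.rel_ac2 x

/-- The morphism `M(b₁) → M` taking the generator at `A` to `x`. -/
def homFromMb1 (M : Rep4) (x : M.VA) (hx : M.fb2 x = 0) : Hom Mb1 M where
  mapA := LinearMap.toSpanSingleton ℂ M.VA x
  mapB := LinearMap.toSpanSingleton ℂ M.VB (M.fb1 x)
  mapC := 0
  mapD := 0
  comm_a1 _ := (zero_smul ℂ x).trans (map_zero M.fa1).symm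
  comm_a2 _ := (zero_smul ℂ x).trans (map_zero M.fa2).symm
  comm_b1 (r : ℂ) := (map_smul M.fb1 r x).symm
  comm_b2 (r : ℂ) := show 0 = M.fb2 (r • x) by rw [map_smul, hx, smul_zero]
  comm_a3 _ := (zero_smul ℂ (M.fb1 x)).trans (map_zero M.fa3).symm
  comm_c1 (r : ℂ) := show 0 = M.fc1 (r • M.fb1 x) by rw [map_smul, fc1_fb1_apply, smul_zero]
  comm_c2 _ := (map_zero M.fc2).symm

/-- The morphism `M → M(b₁)` given at `B` by the linear form `f`. -/
def homToMb1 (M : Rep4) (f : M.VB →ₗ[ℂ] ℂ) (ha2 : M.fa2 = 0) (hf : f ∘ₗ M.fa3 = 0) :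
    Hom M Mb1 where
  mapA := f ∘ₗ M.fb1
  mapB := f
  mapC := 0
  mapD := 0
  comm_a1 x := show f (M.fb1 (M.fa1 x)) = 0 by rw [fb1_fa1_apply, map_zero]
  comm_a2 x := show f (M.fb1 (M.fa2 x)) = 0 by rw [ha2, LinearMap.zero_apply, map_zero, map_zero]
  comm_b1 _ := rfl
  comm_b2 _ := rfl
  comm_a3 x := LinearMap.congr_fun hf x
  comm_c1 _ := rfl
  comm_c2 _ := rfl

/-- The morphism `M(c₂) → M` taking the generator at `C` to `x`. -/
def homFromMc2 (M : Rep4) (x : M.VC) (ha1 : M.fa1 = 0) (hx : M.fa3 x = 0) : Hom Mc2 M where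
  mapA := 0
  mapB := 0
  mapC := LinearMap.toSpanSingleton ℂ M.VC x
  mapD := LinearMap.toSpanSingleton ℂ M.VD (M.fc2 x)
  comm_a1 _ := by rw [ha1]; rfl
  comm_a2 (r : ℂ) := show 0 = M.fa2 (r • M.fc2 x) by rw [map_smul, fa2_fc2_apply, smul_zero]
  comm_b1 _ := (map_zero M.fb1).symm
  comm_b2 _ := (zero_smul ℂ x).trans (map_zero M.fb2).symm
  comm_a3 (r : ℂ) := show 0 = M.fa3 (r • x) by rw [map_smul, hx, smul_zero]
  comm_c1 _ := (zero_smul ℂ (M.fc2 x)).trans (map_zero M.fc1).symm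
  comm_c2 (r : ℂ) := (map_smul M.fc2 r x).symm

/-- The morphism `M → M(c₂)` given at `D` by the linear form `f`. -/
def homToMc2 (M : Rep4) (f : M.VD →ₗ[ℂ] ℂ) (hf : f ∘ₗ M.fc1 = 0) : Hom M Mc2 where
  mapA := 0
  mapB := 0
  mapC := f ∘ₗ M.fc2
  mapD := f
  comm_a1 _ := rfl
  comm_a2 _ := rfl
  comm_b1 _ := rfl
  comm_b2 x := show f (M.fc2 (M.fb2 x)) = 0 by rw [fc2_fb2_apply, map_zero]
  comm_a3 _ := rfl
  comm_c1 x := LinearMap.congr_fun hf x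
  comm_c2 _ := rfl

/-- The morphism `M(b₂a₃c₁) → M` taking the generator at `A` to `x`. -/
def homFromMb2a3c1 (M : Rep4) (x : M.VA) (ha2 : M.fa2 = 0) (hx : M.fb1 x = 0) :
    Hom Mb2a3c1 M where
  mapA := LinearMap.toSpanSingleton ℂ M.VA x
  mapB := LinearMap.toSpanSingleton ℂ M.VB (M.fa3 (M.fb2 x))
  mapC := LinearMap.toSpanSingleton ℂ M.VC (M.fb2 x)
  mapD := LinearMap.toSpanSingleton ℂ M.VD (M.fc1 (M.fa3 (M.fb2 x)))
  comm_a1 (r : ℂ) := show (0 : ℂ) • x = M.fa1 (r • M.fc1 (M.fa3 (M.fb2 x))) by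
    rw [map_smul, fa1_fc1_apply, smul_zero, zero_smul]
  comm_a2 _ := by rw [ha2]; exact zero_smul ℂ x
  comm_b1 (r : ℂ) := show (0 : ℂ) • M.fa3 (M.fb2 x) = M.fb1 (r • x) by
    rw [map_smul, hx, smul_zero, zero_smul]
  comm_b2 (r : ℂ) := (map_smul M.fb2 r x).symm
  comm_a3 (r : ℂ) := (map_smul M.fa3 r (M.fb2 x)).symm
  comm_c1 (r : ℂ) := (map_smul M.fc1 r (M.fa3 (M.fb2 x))).symm
  comm_c2 (r : ℂ) := show (0 : ℂ) • M.fc1 (M.fa3 (M.fb2 x)) = M.fc2 (r • M.fb2 x) by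
    rw [map_smul, fc2_fb2_apply, smul_zero, zero_smul]

end StringModuleMorphisms

theorem fa2_eq_zero_of_fb2_injective (h : Function.Injective M.fb2) : M.fa2 = 0 :=
  (LinearMap.cancel_left h).mp (M.rel_ba2.trans (LinearMap.comp_zero _).symm)

theorem fb1_eq_zero_of_fc1_injective (h : Function.Injective M.fc1) : M.fb1 = 0 :=
  (LinearMap.cancel_left h).mp (M.rel_cb1.trans (LinearMap.comp_zero _).symm)

theorem fa1_eq_zero_of_fc1_surjective (h : Function.Surjective M.fc1) : M.fa1 = 0 :=
  (LinearMap.cancel_right h).mp (M.rel_ac1.trans (LinearMap.zero_comp _).symm)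

namespace IsWeightStable

theorem fb2_injective (hM : M.IsWeightStable θ) (hMb1 : Mb1.IsWeightStable θ)
    (hne : ¬RepIso4 M Mb1) : Function.Injective M.fb2 := by
  rw [injective_iff_map_eq_zero]
  intro x hx
  by_contra hx0
  exact hne (hMb1.repIso4_of_hom hM (M.homFromMb1 x hx)
    (.inl (mt (LinearMap.toSpanSingleton_eq_zero_iff ℂ M.VA).mp hx0))).symm

theorem fc1_surjective (hM : M.IsWeightStable θ) (hMc2 : Mc2.IsWeightStable θ)
    (hne : ¬RepIso4 M Mc2) : Function.Surjective M.fc1 := by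
  rw [← LinearMap.dualMap_injective_iff, injective_iff_map_eq_zero]
  intro f hf
  by_contra hf0
  exact hne (hM.repIso4_of_hom hMc2 (M.homToMc2 f hf) (.inr (.inr (.inr hf0))))

theorem fa3_injective (hM : M.IsWeightStable θ) (hMc2 : Mc2.IsWeightStable θ)
    (hne : ¬RepIso4 M Mc2) : Function.Injective M.fa3 := by
  have ha1 := fa1_eq_zero_of_fc1_surjective (hM.fc1_surjective hMc2 hne)
  rw [injective_iff_map_eq_zero]
  intro x hx
  by_contra hx0
  exact hne (hMc2.repIso4_of_hom hM (M.homFromMc2 x ha1 hx)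
    (.inr (.inr (.inl (mt (LinearMap.toSpanSingleton_eq_zero_iff ℂ M.VC).mp hx0))))).symm

theorem fa3_surjective (hM : M.IsWeightStable θ) (hMb1 : Mb1.IsWeightStable θ)
    (hne : ¬RepIso4 M Mb1) : Function.Surjective M.fa3 := by
  have ha2 := fa2_eq_zero_of_fb2_injective (hM.fb2_injective hMb1 hne)
  rw [← LinearMap.dualMap_injective_iff, injective_iff_map_eq_zero]
  intro f hf
  by_contra hf0
  exact hne (hM.repIso4_of_hom hMb1 (M.homToMb1 f ha2 hf) (.inr (.inl hf0)))

theorem repIso4_Mb2a3c1 (hM : M.IsWeightStable θ) (hMb1 : Mb1.IsWeightStable θ)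
    (hMc2 : Mc2.IsWeightStable θ) (hMb2a3c1 : Mb2a3c1.IsWeightStable θ)
    (hne1 : ¬RepIso4 M Mb1) (hne2 : ¬RepIso4 M Mc2)
    {m n : ℕ} (hdim : M.dimVec = (m, m, n, n)) : RepIso4 M Mb2a3c1 := by
  obtain ⟨hA, hB, hC, hD⟩ : finrank ℂ M.VA = m ∧ finrank ℂ M.VB = m ∧ finrank ℂ M.VC = n ∧
      finrank ℂ M.VD = n := by
    simpa only [dimVec, Prod.mk.injEq] using hdim
  have hmn : n = m := by
    rw [← hC, ← hB]
    exact (LinearEquiv.ofBijective M.fa3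
      ⟨hM.fa3_injective hMc2 hne2, hM.fa3_surjective hMb1 hne1⟩).finrank_eq
  have hc1 : Function.Injective M.fc1 :=
    (LinearMap.injective_iff_surjective_of_finrank_eq_finrank (by rw [hB, hD, hmn])).mpr
      (hM.fc1_surjective hMc2 hne2)
  have hm : 0 < m := by
    refine Nat.pos_of_ne_zero fun hm => hM.dimVec_ne_zero ?_
    rw [hdim, hmn, hm]
    rfl
  have : Nontrivial M.VA := nontrivial_of_finrank_pos (hA ▸ hm)
  obtain ⟨x, hx⟩ := exists_ne (0 : M.VA)
  have ha2 := fa2_eq_zero_of_fb2_injective (hM.fb2_injective hMb1 hne1)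
  have hb1 : M.fb1 x = 0 := by rw [fb1_eq_zero_of_fc1_injective hc1, LinearMap.zero_apply]
  exact (hMb2a3c1.repIso4_of_hom hM (M.homFromMb2a3c1 x ha2 hb1)
    (.inl (mt (LinearMap.toSpanSingleton_eq_zero_iff ℂ M.VA).mp hx))).symm

end IsWeightStable

theorem isWeightStable_iff (hAB : θ (1, 1, 0, 0) = 0) (hCD : θ (0, 0, 1, 1) = 0)
    (hB : θ (0, 1, 0, 0) < 0) (hD : θ (0, 0, 0, 1) < 0) {m n : ℕ}
    (hdim : M.dimVec = (m, m, n, n)) :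
    M.IsWeightStable θ ↔ RepIso4 M Mb1 ∨ RepIso4 M Mc2 ∨ RepIso4 M Mb2a3c1 := by
  have hMb1 := isWeightStable_Mb1 hAB hB
  have hMc2 := isWeightStable_Mc2 hCD hD
  have hMb2a3c1 := isWeightStable_Mb2a3c1 hAB hCD hB hD
  constructor
  · intro hM
    by_cases hne1 : RepIso4 M Mb1
    · exact .inl hne1
    by_cases hne2 : RepIso4 M Mc2
    · exact .inr (.inl hne2)
    exact .inr (.inr (hM.repIso4_Mb2a3c1 hMb1 hMc2 hMb2a3c1 hne1 hne2 hdim))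
  · rintro (h | h | h)
    exacts [hMb1.of_repIso4 h, hMc2.of_repIso4 h, hMb2a3c1.of_repIso4 h]

theorem isStable4_iff_isWeightStable {Z : ℤ × ℤ × ℤ × ℤ →+ ℂ}
    (hZ : ∀ d : ℕ × ℕ × ℕ × ℕ, d ≠ 0 → chargeOf4 Z d ∈ UpperH) {w : ℂ} (hw : w ∈ UpperH)
    (hphase : phase (chargeOf4 Z M.dimVec) = phase w) :
    IsStable4 Z M ↔ M.IsWeightStable (chargeWeight Z w) := by
  have hlt (L : M.Sub) (hL : L.Nonzero) : phase (chargeOf4 Z L.dimVec) <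
      phase (chargeOf4 Z M.dimVec) ↔ chargeWeight Z w L.dimVec < 0 := by
    rw [hphase]
    exact phase_lt_phase_iff (hZ _ (L.nonzero_iff.mp hL)) hw
  exact ⟨fun h => ⟨h.1, areaForm_eq_zero_of_phase_eq hphase,
      fun L hL hL' => (hlt L hL).mp (h.2 L hL hL')⟩,
    fun h => ⟨h.dimVec_ne_zero, fun L hL hL' => (hlt L hL).mpr (h.weight_sub_neg L hL hL')⟩⟩

end Rep4

/-- Let `Z : ℤ⁴ → ℂ` be a central charge whose values on the four
standard basis vectors lie in `ℍ`, set `θ := φ(1,1,0,0)`, and assume (a), (b), (c) as in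
the docstring.  Then a nonzero representation of `(Q, W)` whose phase equals `θ` is stable
if and only if it is isomorphic to `M(b₁)`, `M(c₂)` or `M(b₂a₃c₁)`; and these three are
pairwise non-isomorphic, so that up to isomorphism there are precisely three stable
representations of phase `θ`. -/
theorem three_stables_of_phase_theta
    (Z : ℤ × ℤ × ℤ × ℤ →+ ℂ)
    (hZA : Z (1, 0, 0, 0) ∈ UpperH) (hZB : Z (0, 1, 0, 0) ∈ UpperH)
    (hZC : Z (0, 0, 1, 0) ∈ UpperH) (hZD : Z (0, 0, 0, 1) ∈ UpperH)
    (ha : ∀ d : ℕ × ℕ × ℕ × ℕ, d ≠ (0, 0, 0, 0) →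
      (phase (chargeOf4 Z d) = phase (Z (1, 1, 0, 0)) ↔
        ((d.1 : ℤ), (d.2.1 : ℤ), (d.2.2.1 : ℤ), (d.2.2.2 : ℤ)) ∈
          AddSubgroup.closure
            ({((1 : ℤ), (1 : ℤ), (0 : ℤ), (0 : ℤ)), ((0 : ℤ), (0 : ℤ), (1 : ℤ), (1 : ℤ))} :
              Set (ℤ × ℤ × ℤ × ℤ))))
    (hb1 : phase (Z (0, 1, 0, 0)) < phase (Z (1, 1, 0, 0)))
    (hb2 : phase (Z (1, 1, 0, 0)) < phase (Z (0, 0, 1, 0)))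
    (hc1 : phase (Z (0, 0, 0, 1)) < phase (Z (1, 1, 0, 0)))
    (hc2 : phase (Z (1, 1, 0, 0)) < phase (Z (1, 0, 0, 0))) :
    (∀ M : Rep4, M.dimVec ≠ (0, 0, 0, 0) →
      phase (chargeOf4 Z M.dimVec) = phase (Z (1, 1, 0, 0)) →
      (IsStable4 Z M ↔ (RepIso4 M Mb1 ∨ RepIso4 M Mc2 ∨ RepIso4 M Mb2a3c1))) ∧
    ¬ RepIso4 Mb1 Mc2 ∧ ¬ RepIso4 Mb1 Mb2a3c1 ∧ ¬ RepIso4 Mc2 Mb2a3c1 := by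
  have hZ : ∀ d : ℕ × ℕ × ℕ × ℕ, d ≠ 0 → chargeOf4 Z d ∈ UpperH :=
    fun _ hd => chargeOf4_mem_upperH hZA hZB hZC hZD hd
  have hw : Z (1, 1, 0, 0) ∈ UpperH := hZ (1, 1, 0, 0) (by simp)
  have hAB : chargeWeight Z (Z (1, 1, 0, 0)) (1, 1, 0, 0) = 0 := areaForm_eq_zero_of_phase_eq rfl
  have hCD : chargeWeight Z (Z (1, 1, 0, 0)) (0, 0, 1, 1) = 0 :=
    areaForm_eq_zero_of_phase_eq
      ((ha (0, 0, 1, 1) (by simp)).mpr (mem_closure_iff_exists_eq.mpr ⟨0, 1, rfl⟩))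
  have hB : chargeWeight Z (Z (1, 1, 0, 0)) (0, 1, 0, 0) < 0 := (phase_lt_phase_iff hZB hw).mp hb1
  have hD : chargeWeight Z (Z (1, 1, 0, 0)) (0, 0, 0, 1) < 0 := (phase_lt_phase_iff hZD hw).mp hc1
  refine ⟨fun M hM hphase => ?_, fun h => ?_, fun h => ?_, fun h => ?_⟩
  · obtain ⟨m, n, hdim⟩ := mem_closure_iff_exists_eq.mp ((ha _ hM).mp hphase)
    exact (Rep4.isStable4_iff_isWeightStable hZ hw hphase).trans
      (Rep4.isWeightStable_iff hAB hCD hB hD hdim)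
  · simpa [Rep4.dimVec_Mb1, Rep4.dimVec_Mc2] using h.dimVec_eq
  · simpa [Rep4.dimVec_Mb1, Rep4.dimVec_Mb2a3c1] using h.dimVec_eq
  · simpa [Rep4.dimVec_Mc2, Rep4.dimVec_Mb2a3c1] using h.dimVec_eq
end
end

section
/- Let M₁ = M(c₂), M₂ = M(b₁) and M₃ = M(b₂a₃c₁) in the category of representations of the quiver with potential (Q, W). Then: (i) for each of the ordered pairs (X, Y) ∈ {(M₁, M₂), (M₁, M₃), (M₃, M₂)} there exists a non-split short exact sequence 0 → Y → E → X → 0, and the Yoneda extension group Ext¹(X, Y) (equivalence classes of short exact sequences 0 → Y → E → X → 0 with the Baer-sum ℂ-vector space structure) is one-dimensional over ℂ; (ii) for each of the remaining six ordered pairs (X, Y) with X, Y ∈ {M₁, M₂, M₃}, including all pairs (Mᵢ, Mᵢ), every short exact sequence 0 → Y → E → X → 0 splits. -/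
/-!
# Statement 3

Work over `ℂ`.  Let `Q` be the quiver with vertices `A, B, C, D` and arrows
`a₁, a₂ : D → A`, `b₁ : A → B`, `b₂ : A → C`, `a₃ : C → B`, `c₁ : B → D`, `c₂ : C → D`,
with potential `W = a₁b₁c₁ + a₂b₂c₂`.  Let `M₁ = M(c₂)`, `M₂ = M(b₁)` and
`M₃ = M(b₂a₃c₁)` in the category of representations of `(Q, W)`.  Then:
(i) for each of the ordered pairs `(X, Y) ∈ {(M₁,M₂), (M₁,M₃), (M₃,M₂)}` there exists a
non-split short exact sequence `0 → Y → E → X → 0`, and the Yoneda extension group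
`Ext¹(X, Y)` (equivalence classes of short exact sequences `0 → Y → E → X → 0` with the
Baer-sum `ℂ`-vector space structure) is one-dimensional over `ℂ`;
(ii) for each of the remaining six ordered pairs `(X, Y)` with `X, Y ∈ {M₁, M₂, M₃}`,
including all pairs `(Mᵢ, Mᵢ)`, every short exact sequence `0 → Y → E → X → 0` splits.

One-dimensionality of the Yoneda `Ext¹` is expressed without constructing the Baer-sum
structure: a class is nonzero iff its short exact sequences are non-split, and for `λ ≠ 0`
the class `λ·[ξ₁]` is represented by `(E₁, i₁ ∘ (λ⁻¹ • id), p₁)`; hence `[ξ₂] = λ·[ξ₁]` iff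
there is an isomorphism `e : E₁ ≅ E₂` of representations with `e ∘ i₁ = i₂ ∘ (λ • id)` and
`p₂ ∘ e = p₁`.  A vector space is one-dimensional iff it has a nonzero vector and any two
nonzero vectors are proportional by a nonzero scalar.
-/

noncomputable section
open Module

/-- A morphism of representations: a quadruple of linear maps commuting with the seven
structure maps. -/
structure Hom4 (M N : Rep4) where
  gA : M.VA →ₗ[ℂ] N.VA
  gB : M.VB →ₗ[ℂ] N.VB
  gC : M.VC →ₗ[ℂ] N.VC
  gD : M.VD →ₗ[ℂ] N.VD
  comm_a1 : ∀ x, gA (M.fa1 x) = N.fa1 (gD x)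
  comm_a2 : ∀ x, gA (M.fa2 x) = N.fa2 (gD x)
  comm_b1 : ∀ x, gB (M.fb1 x) = N.fb1 (gA x)
  comm_b2 : ∀ x, gC (M.fb2 x) = N.fb2 (gA x)
  comm_a3 : ∀ x, gB (M.fa3 x) = N.fa3 (gC x)
  comm_c1 : ∀ x, gD (M.fc1 x) = N.fc1 (gB x)
  comm_c2 : ∀ x, gD (M.fc2 x) = N.fc2 (gC x)

/-- A (componentwise) short exact sequence `0 → Y → E → X → 0` of representations. -/
structure SES4 (Y X : Rep4) where
  E : Rep4
  i : Hom4 Y E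
  p : Hom4 E X
  injA : Function.Injective i.gA
  injB : Function.Injective i.gB
  injC : Function.Injective i.gC
  injD : Function.Injective i.gD
  surjA : Function.Surjective p.gA
  surjB : Function.Surjective p.gB
  surjC : Function.Surjective p.gC
  surjD : Function.Surjective p.gD
  exactA : LinearMap.range i.gA = LinearMap.ker p.gA
  exactB : LinearMap.range i.gB = LinearMap.ker p.gB
  exactC : LinearMap.range i.gC = LinearMap.ker p.gC
  exactD : LinearMap.range i.gD = LinearMap.ker p.gD

/-- A short exact sequence `0 → Y → E → X → 0` splits if the projection admits a section
which is a morphism of representations. -/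
def SES4.IsSplit {Y X : Rep4} (ξ : SES4 Y X) : Prop :=
  ∃ s : Hom4 X ξ.E,
    (∀ x, ξ.p.gA (s.gA x) = x) ∧ (∀ x, ξ.p.gB (s.gB x) = x) ∧
    (∀ x, ξ.p.gC (s.gC x) = x) ∧ (∀ x, ξ.p.gD (s.gD x) = x)

/-- `ScaledEquiv4 lam ξ₁ ξ₂` says that the Yoneda class of `ξ₂` equals `lam` times the
Yoneda class of `ξ₁`: there is an isomorphism of representations `e : E₁ ≅ E₂` such that
`e(i₁ y) = i₂ (lam • y)` and `p₂ ∘ e = p₁`. -/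
def ScaledEquiv4 {Y X : Rep4} (lam : ℂ) (ξ₁ ξ₂ : SES4 Y X) : Prop :=
  ∃ (eA : ξ₁.E.VA ≃ₗ[ℂ] ξ₂.E.VA) (eB : ξ₁.E.VB ≃ₗ[ℂ] ξ₂.E.VB)
    (eC : ξ₁.E.VC ≃ₗ[ℂ] ξ₂.E.VC) (eD : ξ₁.E.VD ≃ₗ[ℂ] ξ₂.E.VD),
    (∀ x, eA (ξ₁.E.fa1 x) = ξ₂.E.fa1 (eD x)) ∧ (∀ x, eA (ξ₁.E.fa2 x) = ξ₂.E.fa2 (eD x)) ∧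
    (∀ x, eB (ξ₁.E.fb1 x) = ξ₂.E.fb1 (eA x)) ∧ (∀ x, eC (ξ₁.E.fb2 x) = ξ₂.E.fb2 (eA x)) ∧
    (∀ x, eB (ξ₁.E.fa3 x) = ξ₂.E.fa3 (eC x)) ∧ (∀ x, eD (ξ₁.E.fc1 x) = ξ₂.E.fc1 (eB x)) ∧
    (∀ x, eD (ξ₁.E.fc2 x) = ξ₂.E.fc2 (eC x)) ∧
    (∀ y, eA (ξ₁.i.gA y) = ξ₂.i.gA (lam • y)) ∧ (∀ y, eB (ξ₁.i.gB y) = ξ₂.i.gB (lam • y)) ∧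
    (∀ y, eC (ξ₁.i.gC y) = ξ₂.i.gC (lam • y)) ∧ (∀ y, eD (ξ₁.i.gD y) = ξ₂.i.gD (lam • y)) ∧
    (∀ v, ξ₂.p.gA (eA v) = ξ₁.p.gA v) ∧ (∀ v, ξ₂.p.gB (eB v) = ξ₁.p.gB v) ∧
    (∀ v, ξ₂.p.gC (eC v) = ξ₁.p.gC v) ∧ (∀ v, ξ₂.p.gD (eD v) = ξ₁.p.gD v)

/-- The Yoneda extension group `Ext¹(X, Y)` (equivalence classes of short exact sequences
`0 → Y → E → X → 0` with the Baer-sum `ℂ`-vector space structure) is one-dimensional over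
`ℂ`: there is a nonzero class (a non-split sequence), and any two nonzero classes are
proportional by a nonzero scalar. -/
def ExtOneDimensional4 (X Y : Rep4) : Prop :=
  (∃ ξ : SES4 Y X, ¬ ξ.IsSplit) ∧
    ∀ ξ₁ ξ₂ : SES4 Y X, ¬ ξ₁.IsSplit → ¬ ξ₂.IsSplit →
      ∃ lam : ℂ, lam ≠ 0 ∧ ScaledEquiv4 lam ξ₁ ξ₂

/-!
A short exact sequence `0 → Y → E → X → 0` splits vertexwise, so it is encoded by the off-diagonal
entries of its arrows, and `Ext¹(X, Y)` is the space of cocycles modulo coboundaries. Along an arrow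
acting as an isomorphism on `X` or `Y` the entry of a cocycle can be gauged to zero by a change of
complement, and the relation through such an arrow kills the entry of the neighbouring arrow. After
this only one entry can survive, and only for the three exceptional pairs: the arrow concerned acts
as zero on both modules, so its entry is invariant under changes of complement, and it spans `Ext¹`.
-/

/-- The vertices of `Q`. Together with `Arrow4` they index the components of representations and
morphisms, so that one statement covers all seven arrows. -/
inductive Vertex4
  | A | B | C | D

/-- The arrows of `Q`, typed by source and target. -/
inductive Arrow4 : Vertex4 → Vertex4 → Type
  | a₁ : Arrow4 .D .A
  | a₂ : Arrow4 .D .A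
  | b₁ : Arrow4 .A .B
  | b₂ : Arrow4 .A .C
  | a₃ : Arrow4 .C .B
  | c₁ : Arrow4 .B .D
  | c₂ : Arrow4 .C .D

/-- The paths of length two killed by the Jacobian relations: `ZeroPath4 a b` means that `a`
followed by `b` is zero. -/
inductive ZeroPath4 : ∀ {u v w : Vertex4}, Arrow4 u v → Arrow4 v w → Prop
  | a₁b₁ : ZeroPath4 .a₁ .b₁
  | b₁c₁ : ZeroPath4 .b₁ .c₁
  | c₁a₁ : ZeroPath4 .c₁ .a₁
  | a₂b₂ : ZeroPath4 .a₂ .b₂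
  | b₂c₂ : ZeroPath4 .b₂ .c₂
  | c₂a₂ : ZeroPath4 .c₂ .a₂

section Splitting

variable {R Y E E' X : Type*} [AddCommGroup Y] [AddCommGroup E] [AddCommGroup E'] [AddCommGroup X]

theorem exists_eq_add_section_of_exact [Ring R] [Module R Y] [Module R E] [Module R X]
    {i : Y →ₗ[R] E} {p : E →ₗ[R] X} (hex : Function.Exact i p) {s : X →ₗ[R] E}
    (hs : Function.LeftInverse p s) (z : E) : ∃ y x, z = i y + s x := by
  obtain ⟨y, hy⟩ := (hex (z - s (p z))).1 (by rw [map_sub, hs, sub_self])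
  exact ⟨y, p z, by rw [hy, sub_add_cancel]⟩

theorem exists_linearEquiv_prod_of_exact [Ring R] [Module R Y] [Module R E] [Module R X]
    {i : Y →ₗ[R] E} {p : E →ₗ[R] X} (hi : Function.Injective i) (hex : Function.Exact i p)
    {s : X →ₗ[R] E} (hs : Function.LeftInverse p s) :
    ∃ e : (Y × X) ≃ₗ[R] E, ∀ y x, e (y, x) = i y + s x := by
  let split := hex.splitSurjectiveEquiv hi
  let e := split ⟨s, LinearMap.ext hs⟩
  have h_inr : e.1.symm ∘ₗ LinearMap.inr R Y X = s :=
    congrArg Subtype.val (split.symm_apply_apply _)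
  refine ⟨e.1.symm, fun y x => ?_⟩
  rw [← Prod.fst_add_snd (y, x), map_add]
  exact congrArg₂ (· + ·) (LinearMap.congr_fun e.2.1 y).symm (LinearMap.congr_fun h_inr x)

theorem exists_linearEquiv_smul_of_exact [CommRing R] [Module R Y] [Module R E] [Module R E']
    [Module R X] {i : Y →ₗ[R] E} {p : E →ₗ[R] X} {i' : Y →ₗ[R] E'} {p' : E' →ₗ[R] X}
    (hi : Function.Injective i) (hi' : Function.Injective i') (hex : Function.Exact i p)
    (hex' : Function.Exact i' p') {s : X →ₗ[R] E} {s' : X →ₗ[R] E'}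
    (hs : Function.LeftInverse p s) (hs' : Function.LeftInverse p' s') (t : Rˣ) :
    ∃ e : E ≃ₗ[R] E', ∀ y x, e (i y + s x) = i' (t • y) + s' x := by
  obtain ⟨e, he⟩ := exists_linearEquiv_prod_of_exact hi hex hs
  obtain ⟨e', he'⟩ := exists_linearEquiv_prod_of_exact hi' hex' hs'
  refine ⟨e.symm ≪≫ₗ (LinearEquiv.smulOfUnit t).prodCongr (.refl R X) ≪≫ₗ e', fun y x => ?_⟩
  simp only [← he, ← he', LinearEquiv.trans_apply, LinearEquiv.symm_apply_apply]
  rfl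

end Splitting

namespace Rep4

/-- The vector space of `M` at a vertex. -/
def space (M : Rep4) : Vertex4 → Type
  | .A => M.VA
  | .B => M.VB
  | .C => M.VC
  | .D => M.VD

instance (M : Rep4) : ∀ v, AddCommGroup (M.space v)
  | .A => M.acgA
  | .B => M.acgB
  | .C => M.acgC
  | .D => M.acgD

instance (M : Rep4) : ∀ v, Module ℂ (M.space v)
  | .A => M.modA
  | .B => M.modB
  | .C => M.modC
  | .D => M.modD

/-- The structure map of `M` along an arrow. -/
def map (M : Rep4) : ∀ {u v : Vertex4}, Arrow4 u v → M.space u →ₗ[ℂ] M.space v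
  | _, _, .a₁ => M.fa1
  | _, _, .a₂ => M.fa2
  | _, _, .b₁ => M.fb1
  | _, _, .b₂ => M.fb2
  | _, _, .a₃ => M.fa3
  | _, _, .c₁ => M.fc1
  | _, _, .c₂ => M.fc2

theorem map_map_eq_zero (M : Rep4) {u v w : Vertex4} {a : Arrow4 u v} {b : Arrow4 v w}
    (hab : ZeroPath4 a b) (x : M.space u) : M.map b (M.map a x) = 0 := by
  cases hab
  exacts [LinearMap.congr_fun M.rel_ba1 x, LinearMap.congr_fun M.rel_cb1 x,
    LinearMap.congr_fun M.rel_ac1 x, LinearMap.congr_fun M.rel_ba2 x,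
    LinearMap.congr_fun M.rel_cb2 x, LinearMap.congr_fun M.rel_ac2 x]

end Rep4

variable {X Y : Rep4}

/-- The component of a morphism at a vertex. -/
def Hom4.app (g : Hom4 X Y) : ∀ v, X.space v →ₗ[ℂ] Y.space v
  | .A => g.gA
  | .B => g.gB
  | .C => g.gC
  | .D => g.gD

theorem Hom4.app_map (g : Hom4 X Y) {u v : Vertex4} (a : Arrow4 u v) (x : X.space u) :
    g.app v (X.map a x) = Y.map a (g.app u x) := by
  cases a
  exacts [g.comm_a1 x, g.comm_a2 x, g.comm_b1 x, g.comm_b2 x, g.comm_a3 x, g.comm_c1 x,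
    g.comm_c2 x]

/-- Off-diagonal entries `X u → Y v`, one for each arrow, of a block-triangular action of the arrows
on `Y ⊕ X`. -/
abbrev Cochain4 (X Y : Rep4) : Type :=
  ∀ ⦃u v : Vertex4⦄, Arrow4 u v → X.space u →ₗ[ℂ] Y.space v

/-- The effect on off-diagonal entries of a change of complement `x ↦ (g x, x)`. -/
def coboundary4 (X Y : Rep4) :
    (∀ v, X.space v →ₗ[ℂ] Y.space v) →ₗ[ℂ] Cochain4 X Y where
  toFun g u v a := Y.map a ∘ₗ g u - g v ∘ₗ X.map a
  map_add' g g' := by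
    ext u v a x
    simp [add_sub_add_comm]
  map_smul' t g := by
    ext u v a x
    simp [smul_sub]

theorem coboundary4_apply (g : ∀ v, X.space v →ₗ[ℂ] Y.space v) {u v : Vertex4} (a : Arrow4 u v)
    (x : X.space u) : coboundary4 X Y g a x = Y.map a (g u x) - g v (X.map a x) :=
  rfl

/-- The off-diagonal entries for which the block-triangular action satisfies the Jacobian
relations. -/
def cocycles4 (X Y : Rep4) : Submodule ℂ (Cochain4 X Y) where
  carrier := {c | ∀ ⦃u v w : Vertex4⦄ ⦃a : Arrow4 u v⦄ ⦃b : Arrow4 v w⦄, ZeroPath4 a b →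
    ∀ x, Y.map b (c a x) + c b (X.map a x) = 0}
  zero_mem' := by simp
  add_mem' {c c'} hc hc' u v w a b hab x := by
    simpa [add_add_add_comm] using congrArg₂ (· + ·) (hc hab x) (hc' hab x)
  smul_mem' t c hc u v w a b hab x := by
    simpa using congrArg (t • ·) (hc hab x)

/-- The off-diagonal entries that a change of complement reduces to zero, so that
`Ext¹(X, Y)` is `cocycles4 X Y` modulo `coboundaries4 X Y`. -/
def coboundaries4 (X Y : Rep4) : Submodule ℂ (Cochain4 X Y) :=
  (coboundary4 X Y).range

theorem coboundaries4_le_cocycles4 (X Y : Rep4) : coboundaries4 X Y ≤ cocycles4 X Y := by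
  rintro _ ⟨g, rfl⟩ u v w a b hab x
  simp [coboundary4_apply, X.map_map_eq_zero hab, Y.map_map_eq_zero hab]

namespace SES4

variable (ξ : SES4 Y X)

theorem app_injective : ∀ v, Function.Injective (ξ.i.app v)
  | .A => ξ.injA
  | .B => ξ.injB
  | .C => ξ.injC
  | .D => ξ.injD

theorem app_surjective : ∀ v, Function.Surjective (ξ.p.app v)
  | .A => ξ.surjA
  | .B => ξ.surjB
  | .C => ξ.surjC
  | .D => ξ.surjD

theorem app_exact : ∀ v, Function.Exact (ξ.i.app v) (ξ.p.app v)
  | .A => LinearMap.exact_iff.2 ξ.exactA.symm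
  | .B => LinearMap.exact_iff.2 ξ.exactB.symm
  | .C => LinearMap.exact_iff.2 ξ.exactC.symm
  | .D => LinearMap.exact_iff.2 ξ.exactD.symm

/-- `c` measures the failure of the vertexwise linear section `s` of `ξ` to be a morphism of
representations. -/
structure IsCocycleOf (s : ∀ v, X.space v →ₗ[ℂ] ξ.E.space v) (c : Cochain4 X Y) : Prop where
  leftInverse : ∀ v, Function.LeftInverse (ξ.p.app v) (s v)
  map_section : ∀ {u v : Vertex4} (a : Arrow4 u v) (x : X.space u),
    ξ.E.map a (s u x) = s v (X.map a x) + ξ.i.app v (c a x)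

/-- `c` is a cocycle of `ξ` with respect to some vertexwise linear section. -/
def HasCocycle (c : Cochain4 X Y) : Prop :=
  ∃ s, ξ.IsCocycleOf s c

variable {ξ}

theorem IsCocycleOf.mem_cocycles4 {s : ∀ v, X.space v →ₗ[ℂ] ξ.E.space v} {c : Cochain4 X Y}
    (hs : ξ.IsCocycleOf s c) : c ∈ cocycles4 X Y := by
  intro u v w a b hab x
  apply ξ.app_injective w
  have key : ξ.E.map b (ξ.E.map a (s u x)) = 0 := ξ.E.map_map_eq_zero hab _
  rw [hs.map_section, map_add, hs.map_section, X.map_map_eq_zero hab, map_zero, zero_add,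
    ← ξ.i.app_map, add_comm] at key
  rw [map_add, key, map_zero]

variable (ξ) in
theorem exists_mem_cocycles4_hasCocycle : ∃ c ∈ cocycles4 X Y, ξ.HasCocycle c := by
  have exists_section (v : Vertex4) : ∃ s : X.space v →ₗ[ℂ] ξ.E.space v,
      Function.LeftInverse (ξ.p.app v) s := by
    obtain ⟨s, hs⟩ := (ξ.p.app v).exists_rightInverse_of_surjective
      (LinearMap.range_eq_top.2 (ξ.app_surjective v))
    exact ⟨s, LinearMap.congr_fun hs⟩
  choose s hs using exists_section
  have mem_range {u v : Vertex4} (a : Arrow4 u v) (x : X.space u) :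
      (ξ.E.map a ∘ₗ s u - s v ∘ₗ X.map a) x ∈ (ξ.i.app v).range :=
    (ξ.app_exact v _).1 (by simp [ξ.p.app_map, hs u x, hs v (X.map a x)])
  let c : Cochain4 X Y := fun u v a =>
    LinearMap.codRestrictOfInjective _ (ξ.i.app v) (ξ.app_injective v) (mem_range a)
  have hc : ξ.IsCocycleOf s c := ⟨hs, fun a x => by simp [c]⟩
  exact ⟨c, hc.mem_cocycles4, s, hc⟩

theorem HasCocycle.add_coboundary4 {c : Cochain4 X Y} (hc : ξ.HasCocycle c)
    (g : ∀ v, X.space v →ₗ[ℂ] Y.space v) : ξ.HasCocycle (c + coboundary4 X Y g) := by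
  obtain ⟨s, hs⟩ := hc
  refine ⟨fun v => s v + ξ.i.app v ∘ₗ g v, fun v x => ?_, fun {u v} a x => ?_⟩
  · simp [hs.leftInverse v x, (ξ.app_exact v).apply_apply_eq_zero]
  · simp only [Pi.add_apply, LinearMap.add_apply, LinearMap.comp_apply, coboundary4_apply, map_add,
      map_sub, hs.map_section, ← ξ.i.app_map]
    abel

theorem HasCocycle.sub_mem_coboundaries4 {c c' : Cochain4 X Y} (hc : ξ.HasCocycle c)
    (hc' : ξ.HasCocycle c') : c - c' ∈ coboundaries4 X Y := by
  obtain ⟨s, hs⟩ := hc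
  obtain ⟨s', hs'⟩ := hc'
  have mem_range (v : Vertex4) (x : X.space v) : (s v - s' v) x ∈ (ξ.i.app v).range :=
    (ξ.app_exact v _).1 (by simp [hs.leftInverse v x, hs'.leftInverse v x])
  refine ⟨fun v => LinearMap.codRestrictOfInjective _ (ξ.i.app v) (ξ.app_injective v)
    (mem_range v), ?_⟩
  ext u v a x
  apply ξ.app_injective v
  simp only [Pi.sub_apply, LinearMap.sub_apply, coboundary4_apply, map_sub, ξ.i.app_map,
    LinearMap.codRestrictOfInjective_comp_apply, hs.map_section, hs'.map_section]
  abel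

theorem isSplit_iff_hasCocycle_zero : ξ.IsSplit ↔ ξ.HasCocycle 0 := by
  constructor
  · rintro ⟨s, hA, hB, hC, hD⟩
    refine ⟨s.app, ?_, fun a x => by simp [s.app_map]⟩
    rintro (_ | _ | _ | _)
    exacts [hA, hB, hC, hD]
  · rintro ⟨s, hs⟩
    have comm {u v : Vertex4} (a : Arrow4 u v) (x : X.space u) :
        s v (X.map a x) = ξ.E.map a (s u x) := by simp [hs.map_section]
    exact ⟨⟨s .A, s .B, s .C, s .D, comm .a₁, comm .a₂, comm .b₁, comm .b₂, comm .a₃, comm .c₁,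
      comm .c₂⟩, hs.leftInverse .A, hs.leftInverse .B, hs.leftInverse .C, hs.leftInverse .D⟩

theorem HasCocycle.isSplit_iff {c : Cochain4 X Y} (hc : ξ.HasCocycle c) :
    ξ.IsSplit ↔ c ∈ coboundaries4 X Y := by
  rw [isSplit_iff_hasCocycle_zero]
  constructor
  · intro h
    simpa using hc.sub_mem_coboundaries4 h
  · rintro ⟨g, rfl⟩
    simpa using hc.add_coboundary4 (-g)

theorem HasCocycle.scaledEquiv4 {ξ' : SES4 Y X} {c c' : Cochain4 X Y} {t : ℂ} (ht : t ≠ 0)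
    (hc : ξ.HasCocycle c) (hc' : ξ'.HasCocycle c') (h : c' - t • c ∈ coboundaries4 X Y) :
    ScaledEquiv4 t ξ ξ' := by
  obtain ⟨g, hg⟩ := h
  obtain ⟨s, hs⟩ := hc
  obtain ⟨s', hs'⟩ : ξ'.HasCocycle (t • c) := by
    simpa [hg] using hc'.add_coboundary4 (-g)
  choose e he using fun v => exists_linearEquiv_smul_of_exact (ξ.app_injective v)
    (ξ'.app_injective v) (ξ.app_exact v) (ξ'.app_exact v) (hs.leftInverse v) (hs'.leftInverse v)
    (Units.mk0 t ht)
  have comm {u v : Vertex4} (a : Arrow4 u v) (z : ξ.E.space u) :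
      e v (ξ.E.map a z) = ξ'.E.map a (e u z) := by
    obtain ⟨y, x, rfl⟩ := exists_eq_add_section_of_exact (ξ.app_exact u) (hs.leftInverse u) z
    have : ξ.E.map a (ξ.i.app u y + s u x) =
        ξ.i.app v (Y.map a y + c a x) + s v (X.map a x) := by
      rw [map_add, ← ξ.i.app_map, hs.map_section, map_add]
      abel
    rw [this, he, he, map_add, ← ξ'.i.app_map, hs'.map_section]
    simp only [Units.smul_def, Units.val_mk0, smul_add, map_add, map_smul, Pi.smul_apply,
      LinearMap.smul_apply]
    abel
  have comp_i (v : Vertex4) (y : Y.space v) : e v (ξ.i.app v y) = ξ'.i.app v (t • y) := by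
    simpa using he v y 0
  have p_comp (v : Vertex4) (z : ξ.E.space v) : ξ'.p.app v (e v z) = ξ.p.app v z := by
    obtain ⟨y, x, rfl⟩ := exists_eq_add_section_of_exact (ξ.app_exact v) (hs.leftInverse v) z
    simp [he, (ξ.app_exact v).apply_apply_eq_zero, (ξ'.app_exact v).apply_apply_eq_zero,
      hs.leftInverse v x, hs'.leftInverse v x]
  exact ⟨e .A, e .B, e .C, e .D, comm .a₁, comm .a₂, comm .b₁, comm .b₂, comm .a₃, comm .c₁,
    comm .c₂, comp_i .A, comp_i .B, comp_i .C, comp_i .D, p_comp .A, p_comp .B, p_comp .C,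
    p_comp .D⟩

end SES4

section BlockTriangular

variable {R Y Y' X X' : Type*} [Semiring R] [AddCommMonoid Y] [AddCommMonoid Y']
  [AddCommMonoid X] [AddCommMonoid X'] [Module R Y] [Module R Y'] [Module R X] [Module R X']

/-- The map `Y × X → Y' × X'` with matrix `[[f, φ], [0, g]]`. -/
def blockTriangular (f : Y →ₗ[R] Y') (φ : X →ₗ[R] Y') (g : X →ₗ[R] X') : (Y × X) →ₗ[R] Y' × X' :=
  (f.coprod φ).prod (g ∘ₗ LinearMap.snd R Y X)

variable (f : Y →ₗ[R] Y') (φ : X →ₗ[R] Y') (g : X →ₗ[R] X')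

theorem blockTriangular_inl (y : Y) :
    blockTriangular f φ g (LinearMap.inl R Y X y) = LinearMap.inl R Y' X' (f y) := by
  simp [blockTriangular]

theorem blockTriangular_inr (x : X) :
    blockTriangular f φ g (LinearMap.inr R Y X x) =
      LinearMap.inr R Y' X' (g x) + LinearMap.inl R Y' X' (φ x) := by
  simp [blockTriangular]

end BlockTriangular

section Extension

variable {c : Cochain4 X Y}

theorem blockTriangular_comp_eq_zero (hc : c ∈ cocycles4 X Y) {u v w : Vertex4}
    {a : Arrow4 u v} {b : Arrow4 v w} (hab : ZeroPath4 a b) :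
    blockTriangular (Y.map b) (c b) (X.map b) ∘ₗ blockTriangular (Y.map a) (c a) (X.map a) = 0 := by
  refine LinearMap.prod_ext (LinearMap.ext fun y => ?_) (LinearMap.ext fun x => ?_)
  · simp only [LinearMap.comp_apply, LinearMap.zero_apply, blockTriangular_inl,
      Y.map_map_eq_zero hab, map_zero]
  · simp only [LinearMap.comp_apply, LinearMap.zero_apply, blockTriangular_inr,
      blockTriangular_inl, map_add, X.map_map_eq_zero hab, map_zero, zero_add]
    rw [← map_add, add_comm, hc hab, map_zero]

/-- The representation on `Y ⊕ X` with off-diagonal entries `c`. -/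
def Rep4.ofCocycle (hc : c ∈ cocycles4 X Y) : Rep4 where
  VA := Y.VA × X.VA
  VB := Y.VB × X.VB
  VC := Y.VC × X.VC
  VD := Y.VD × X.VD
  fa1 := blockTriangular Y.fa1 (c .a₁) X.fa1
  fa2 := blockTriangular Y.fa2 (c .a₂) X.fa2
  fb1 := blockTriangular Y.fb1 (c .b₁) X.fb1
  fb2 := blockTriangular Y.fb2 (c .b₂) X.fb2
  fa3 := blockTriangular Y.fa3 (c .a₃) X.fa3
  fc1 := blockTriangular Y.fc1 (c .c₁) X.fc1
  fc2 := blockTriangular Y.fc2 (c .c₂) X.fc2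
  rel_ba1 := blockTriangular_comp_eq_zero hc .a₁b₁
  rel_cb1 := blockTriangular_comp_eq_zero hc .b₁c₁
  rel_ac1 := blockTriangular_comp_eq_zero hc .c₁a₁
  rel_ba2 := blockTriangular_comp_eq_zero hc .a₂b₂
  rel_cb2 := blockTriangular_comp_eq_zero hc .b₂c₂
  rel_ac2 := blockTriangular_comp_eq_zero hc .c₂a₂

/-- The extension `0 → Y → Y ⊕ X → X → 0` with off-diagonal entries `c`, which realises every
cocycle class by a short exact sequence. -/
def SES4.ofCocycle (hc : c ∈ cocycles4 X Y) : SES4 Y X where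
  E := .ofCocycle hc
  i := ⟨.inl _ _ _, .inl _ _ _, .inl _ _ _, .inl _ _ _, fun x => (blockTriangular_inl _ _ _ x).symm,
    fun x => (blockTriangular_inl _ _ _ x).symm, fun x => (blockTriangular_inl _ _ _ x).symm,
    fun x => (blockTriangular_inl _ _ _ x).symm, fun x => (blockTriangular_inl _ _ _ x).symm,
    fun x => (blockTriangular_inl _ _ _ x).symm, fun x => (blockTriangular_inl _ _ _ x).symm⟩
  p := ⟨.snd _ _ _, .snd _ _ _, .snd _ _ _, .snd _ _ _, fun _ => rfl, fun _ => rfl, fun _ => rfl,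
    fun _ => rfl, fun _ => rfl, fun _ => rfl, fun _ => rfl⟩
  injA := LinearMap.inl_injective
  injB := LinearMap.inl_injective
  injC := LinearMap.inl_injective
  injD := LinearMap.inl_injective
  surjA := LinearMap.snd_surjective
  surjB := LinearMap.snd_surjective
  surjC := LinearMap.snd_surjective
  surjD := LinearMap.snd_surjective
  exactA := LinearMap.range_inl ..
  exactB := LinearMap.range_inl ..
  exactC := LinearMap.range_inl ..
  exactD := LinearMap.range_inl ..

theorem SES4.hasCocycle_ofCocycle (hc : c ∈ cocycles4 X Y) : (ofCocycle hc).HasCocycle c := by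
  refine ⟨fun | .A => .inr _ _ _ | .B => .inr _ _ _ | .C => .inr _ _ _ | .D => .inr _ _ _, ?_, ?_⟩
  · rintro (_ | _ | _ | _) <;> exact fun _ => rfl
  · rintro _ _ (_ | _ | _ | _ | _ | _ | _)
    exacts [blockTriangular_inr Y.fa1 (c .a₁) X.fa1, blockTriangular_inr Y.fa2 (c .a₂) X.fa2,
      blockTriangular_inr Y.fb1 (c .b₁) X.fb1, blockTriangular_inr Y.fb2 (c .b₂) X.fb2,
      blockTriangular_inr Y.fa3 (c .a₃) X.fa3, blockTriangular_inr Y.fc1 (c .c₁) X.fc1,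
      blockTriangular_inr Y.fc2 (c .c₂) X.fc2]

end Extension

theorem SES4.isSplit_of_cocycles4_le_coboundaries4 (h : cocycles4 X Y ≤ coboundaries4 X Y)
    (ξ : SES4 Y X) : ξ.IsSplit := by
  obtain ⟨c, hc, hξ⟩ := ξ.exists_mem_cocycles4_hasCocycle
  exact hξ.isSplit_iff.2 (h hc)

theorem coboundary4_apply_eq_zero {u v : Vertex4} {a : Arrow4 u v} (hX : X.map a = 0)
    (hY : Y.map a = 0) (g : ∀ v, X.space v →ₗ[ℂ] Y.space v) : coboundary4 X Y g a = 0 := by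
  ext x
  simp [coboundary4_apply, hX, hY]

theorem extOneDimensional4_of_arrow {u v : Vertex4} (a : Arrow4 u v) (hX : X.map a = 0)
    (hY : Y.map a = 0) (hdim : finrank ℂ (X.space u →ₗ[ℂ] Y.space v) = 1)
    (hne : ∃ c ∈ cocycles4 X Y, c a ≠ 0)
    (hker : ∀ c ∈ cocycles4 X Y, c a = 0 → c ∈ coboundaries4 X Y) :
    ExtOneDimensional4 X Y := by
  have exists_apply_ne_zero {ξ : SES4 Y X} (hξ : ¬ ξ.IsSplit) :
      ∃ c ∈ cocycles4 X Y, ξ.HasCocycle c ∧ c a ≠ 0 := by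
    obtain ⟨c, hc, hξc⟩ := ξ.exists_mem_cocycles4_hasCocycle
    exact ⟨c, hc, hξc, fun h0 => hξ (hξc.isSplit_iff.2 (hker c hc h0))⟩
  constructor
  · obtain ⟨c, hc, hca⟩ := hne
    refine ⟨.ofCocycle hc, fun hsplit => hca ?_⟩
    obtain ⟨g, rfl⟩ := (SES4.hasCocycle_ofCocycle hc).isSplit_iff.1 hsplit
    exact coboundary4_apply_eq_zero hX hY g
  · intro ξ₁ ξ₂ h₁ h₂
    obtain ⟨c₁, hc₁, hξ₁, hne₁⟩ := exists_apply_ne_zero h₁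
    obtain ⟨c₂, hc₂, hξ₂, hne₂⟩ := exists_apply_ne_zero h₂
    obtain ⟨t, ht⟩ := exists_smul_eq_of_finrank_eq_one hdim hne₁ (c₂ a)
    have ht0 : t ≠ 0 := by
      rintro rfl
      exact hne₂ (by rw [← ht, zero_smul])
    have hsub : c₂ - t • c₁ ∈ cocycles4 X Y := sub_mem hc₂ (Submodule.smul_mem _ t hc₁)
    exact ⟨t, ht0, hξ₁.scaledEquiv4 ht0 hξ₂ (hker _ hsub (by simp [ht]))⟩

section Coboundary

variable {K V V' W W' : Type*} [DivisionRing K] [AddCommGroup V] [AddCommGroup V'] [AddCommGroup W]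
  [AddCommGroup W'] [Module K V] [Module K V'] [Module K W] [Module K W']

theorem exists_sub_comp_eq_of_injective {f : V →ₗ[K] V'} (hf : Function.Injective f)
    (ψ φ : V →ₗ[K] W) : ∃ g : V' →ₗ[K] W, ψ - g ∘ₗ f = φ := by
  obtain ⟨r, hr⟩ := f.exists_leftInverse_of_injective (LinearMap.ker_eq_bot.2 hf)
  exact ⟨(ψ - φ) ∘ₗ r, by rw [LinearMap.comp_assoc, hr, LinearMap.comp_id, sub_sub_cancel]⟩

theorem exists_comp_sub_eq_of_surjective {f : W →ₗ[K] W'} (hf : Function.Surjective f)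
    (ψ φ : V →ₗ[K] W') : ∃ g : V →ₗ[K] W, f ∘ₗ g - ψ = φ := by
  obtain ⟨s, hs⟩ := f.exists_rightInverse_of_surjective (LinearMap.range_eq_top.2 hf)
  exact ⟨s ∘ₗ (φ + ψ), by rw [← LinearMap.comp_assoc, hs, LinearMap.id_comp, add_sub_cancel_right]⟩

end Coboundary

section GaugeFixing

variable {c : Cochain4 X Y} {u v w : Vertex4} {a : Arrow4 u v} {b : Arrow4 v w}

theorem cocycle4_apply_eq_zero_of_injective (hc : c ∈ cocycles4 X Y) (hab : ZeroPath4 a b)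
    (hY : Function.Injective (Y.map b)) (h : c b ∘ₗ X.map a = 0) : c a = 0 := by
  ext x
  apply hY
  have hx : c b (X.map a x) = 0 := LinearMap.congr_fun h x
  simpa [hx] using hc hab x

theorem cocycle4_apply_eq_zero_of_surjective (hc : c ∈ cocycles4 X Y) (hab : ZeroPath4 a b)
    (hX : Function.Surjective (X.map a)) (h : Y.map b ∘ₗ c a = 0) : c b = 0 := by
  ext x
  obtain ⟨x, rfl⟩ := hX x
  have hx : Y.map b (c a x) = 0 := LinearMap.congr_fun h x
  simpa [hx] using hc hab x

theorem mem_coboundaries4_of_sub_eq_zero (hc : c ∈ cocycles4 X Y)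
    (g : ∀ v, X.space v →ₗ[ℂ] Y.space v)
    (h : c - coboundary4 X Y g ∈ cocycles4 X Y → c - coboundary4 X Y g = 0) :
    c ∈ coboundaries4 X Y :=
  ⟨g, (sub_eq_zero.1 (h (sub_mem hc (coboundaries4_le_cocycles4 X Y ⟨g, rfl⟩)))).symm⟩

end GaugeFixing

instance : Subsingleton (Mb1.space .C) := inferInstanceAs (Subsingleton (Fin 0 → ℂ))
instance : Subsingleton (Mb1.space .D) := inferInstanceAs (Subsingleton (Fin 0 → ℂ))
instance : Subsingleton (Mc2.space .A) := inferInstanceAs (Subsingleton (Fin 0 → ℂ))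
instance : Subsingleton (Mc2.space .B) := inferInstanceAs (Subsingleton (Fin 0 → ℂ))

theorem Mb1.bijective_map_b₁ : Function.Bijective (Mb1.map .b₁) := Function.bijective_id
theorem Mc2.bijective_map_c₂ : Function.Bijective (Mc2.map .c₂) := Function.bijective_id
theorem Mb2a3c1.bijective_map_b₂ : Function.Bijective (Mb2a3c1.map .b₂) := Function.bijective_id
theorem Mb2a3c1.bijective_map_a₃ : Function.Bijective (Mb2a3c1.map .a₃) := Function.bijective_id
theorem Mb2a3c1.bijective_map_c₁ : Function.Bijective (Mb2a3c1.map .c₁) := Function.bijective_id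

theorem cocycles4_Mc2_self_le_coboundaries4 : cocycles4 Mc2 Mc2 ≤ coboundaries4 Mc2 Mc2 := by
  intro c hc
  obtain ⟨gD, hc₂⟩ := exists_sub_comp_eq_of_injective Mc2.bijective_map_c₂.1 0 (c .c₂)
  refine mem_coboundaries4_of_sub_eq_zero hc
    (fun | .A => 0 | .B => 0 | .C => 0 | .D => gD) fun _ => ?_
  funext u v a
  cases a
  case c₂ => exact sub_eq_zero.2 hc₂.symm
  all_goals exact Subsingleton.elim _ _

theorem cocycles4_Mb1_self_le_coboundaries4 : cocycles4 Mb1 Mb1 ≤ coboundaries4 Mb1 Mb1 := by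
  intro c hc
  obtain ⟨gB, hb₁⟩ := exists_sub_comp_eq_of_injective Mb1.bijective_map_b₁.1 0 (c .b₁)
  refine mem_coboundaries4_of_sub_eq_zero hc
    (fun | .A => 0 | .B => gB | .C => 0 | .D => 0) fun _ => ?_
  funext u v a
  cases a
  case b₁ => exact sub_eq_zero.2 hb₁.symm
  all_goals exact Subsingleton.elim _ _

theorem cocycles4_Mb2a3c1_self_le_coboundaries4 :
    cocycles4 Mb2a3c1 Mb2a3c1 ≤ coboundaries4 Mb2a3c1 Mb2a3c1 := by
  intro c hc
  obtain ⟨gC, hb₂⟩ := exists_sub_comp_eq_of_injective Mb2a3c1.bijective_map_b₂.1 0 (c .b₂)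
  obtain ⟨gB, ha₃⟩ := exists_sub_comp_eq_of_injective Mb2a3c1.bijective_map_a₃.1
    (Mb2a3c1.map .a₃ ∘ₗ gC) (c .a₃)
  obtain ⟨gD, hc₁⟩ := exists_sub_comp_eq_of_injective Mb2a3c1.bijective_map_c₁.1
    (Mb2a3c1.map .c₁ ∘ₗ gB) (c .c₁)
  refine mem_coboundaries4_of_sub_eq_zero hc
    (fun | .A => 0 | .B => gB | .C => gC | .D => gD) fun hc' => ?_
  funext u v a
  cases a
  case a₁ =>
    exact cocycle4_apply_eq_zero_of_surjective hc' .c₁a₁ Mb2a3c1.bijective_map_c₁.2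
      (LinearMap.zero_comp _)
  case a₂ =>
    exact cocycle4_apply_eq_zero_of_injective hc' .a₂b₂ Mb2a3c1.bijective_map_b₂.1
      (LinearMap.comp_zero _)
  case b₁ =>
    exact cocycle4_apply_eq_zero_of_injective hc' .b₁c₁ Mb2a3c1.bijective_map_c₁.1
      (LinearMap.comp_zero _)
  case c₂ =>
    exact cocycle4_apply_eq_zero_of_surjective hc' .b₂c₂ Mb2a3c1.bijective_map_b₂.2
      (LinearMap.zero_comp _)
  case b₂ => exact sub_eq_zero.2 hb₂.symm
  case a₃ => exact sub_eq_zero.2 ha₃.symm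
  case c₁ => exact sub_eq_zero.2 hc₁.symm

theorem cocycles4_Mb1_Mc2_le_coboundaries4 : cocycles4 Mb1 Mc2 ≤ coboundaries4 Mb1 Mc2 := by
  intro c hc
  suffices h : c = 0 from h ▸ zero_mem _
  funext u v a
  cases a
  case b₂ =>
    exact cocycle4_apply_eq_zero_of_injective hc .b₂c₂ Mc2.bijective_map_c₂.1
      (LinearMap.comp_zero _)
  case c₁ =>
    exact cocycle4_apply_eq_zero_of_surjective hc .b₁c₁ Mb1.bijective_map_b₁.2
      (LinearMap.zero_comp _)
  all_goals exact Subsingleton.elim _ _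

theorem cocycles4_Mb2a3c1_Mc2_le_coboundaries4 :
    cocycles4 Mb2a3c1 Mc2 ≤ coboundaries4 Mb2a3c1 Mc2 := by
  intro c hc
  obtain ⟨gC, hb₂⟩ := exists_sub_comp_eq_of_injective Mb2a3c1.bijective_map_b₂.1 0 (c .b₂)
  obtain ⟨gD, hc₁⟩ := exists_sub_comp_eq_of_injective Mb2a3c1.bijective_map_c₁.1 0 (c .c₁)
  let g : ∀ v, Mb2a3c1.space v →ₗ[ℂ] Mc2.space v
    | .A => 0 | .B => 0 | .C => gC | .D => gD
  refine mem_coboundaries4_of_sub_eq_zero hc g fun hc' => ?_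
  have gauge_b₂ : (c - coboundary4 _ _ g) .b₂ = 0 := sub_eq_zero.2 hb₂.symm
  funext u v a
  cases a
  case b₂ => exact gauge_b₂
  case c₁ => exact sub_eq_zero.2 hc₁.symm
  case c₂ =>
    exact cocycle4_apply_eq_zero_of_surjective hc' .b₂c₂ Mb2a3c1.bijective_map_b₂.2
      (by rw [gauge_b₂, LinearMap.comp_zero])
  all_goals exact Subsingleton.elim _ _

theorem cocycles4_Mb1_Mb2a3c1_le_coboundaries4 :
    cocycles4 Mb1 Mb2a3c1 ≤ coboundaries4 Mb1 Mb2a3c1 := by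
  intro c hc
  obtain ⟨gA, hb₂⟩ := exists_comp_sub_eq_of_surjective Mb2a3c1.bijective_map_b₂.2 0 (c .b₂)
  obtain ⟨gB, hb₁⟩ := exists_sub_comp_eq_of_injective Mb1.bijective_map_b₁.1
    (Mb2a3c1.map .b₁ ∘ₗ gA) (c .b₁)
  let g : ∀ v, Mb1.space v →ₗ[ℂ] Mb2a3c1.space v
    | .A => gA | .B => gB | .C => 0 | .D => 0
  refine mem_coboundaries4_of_sub_eq_zero hc g fun hc' => ?_
  have gauge_b₁ : (c - coboundary4 _ _ g) .b₁ = 0 := sub_eq_zero.2 hb₁.symm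
  funext u v a
  cases a
  case b₁ => exact gauge_b₁
  case b₂ => exact sub_eq_zero.2 hb₂.symm
  case c₁ =>
    exact cocycle4_apply_eq_zero_of_surjective hc' .b₁c₁ Mb1.bijective_map_b₁.2
      (by rw [gauge_b₁, LinearMap.comp_zero])
  all_goals exact Subsingleton.elim _ _

theorem mem_coboundaries4_Mc2_Mb1_of_apply_a₃_eq_zero {c : Cochain4 Mc2 Mb1}
    (hc : c ∈ cocycles4 Mc2 Mb1) (ha₃ : c .a₃ = 0) : c ∈ coboundaries4 Mc2 Mb1 := by
  suffices h : c = 0 from h ▸ zero_mem _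
  funext u v a
  cases a
  case a₃ => exact ha₃
  case a₁ =>
    exact cocycle4_apply_eq_zero_of_injective hc .a₁b₁ Mb1.bijective_map_b₁.1
      (LinearMap.comp_zero _)
  case a₂ =>
    exact cocycle4_apply_eq_zero_of_surjective hc .c₂a₂ Mc2.bijective_map_c₂.2
      (LinearMap.zero_comp _)
  all_goals exact Subsingleton.elim _ _

theorem mem_coboundaries4_Mc2_Mb2a3c1_of_apply_a₁_eq_zero {c : Cochain4 Mc2 Mb2a3c1}
    (hc : c ∈ cocycles4 Mc2 Mb2a3c1) (ha₁ : c .a₁ = 0) : c ∈ coboundaries4 Mc2 Mb2a3c1 := by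
  obtain ⟨gC, ha₃⟩ := exists_comp_sub_eq_of_surjective Mb2a3c1.bijective_map_a₃.2 0 (c .a₃)
  obtain ⟨gD, hc₂⟩ := exists_sub_comp_eq_of_injective Mc2.bijective_map_c₂.1
    (Mb2a3c1.map .c₂ ∘ₗ gC) (c .c₂)
  refine mem_coboundaries4_of_sub_eq_zero hc
    (fun | .A => 0 | .B => 0 | .C => gC | .D => gD) fun hc' => ?_
  funext u v a
  cases a
  case a₁ => exact sub_eq_zero.2 (ha₁.trans (coboundary4_apply_eq_zero rfl rfl _).symm)
  case a₃ => exact sub_eq_zero.2 ha₃.symm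
  case c₂ => exact sub_eq_zero.2 hc₂.symm
  case a₂ =>
    exact cocycle4_apply_eq_zero_of_surjective hc' .c₂a₂ Mc2.bijective_map_c₂.2
      (LinearMap.zero_comp _)
  all_goals exact Subsingleton.elim _ _

theorem mem_coboundaries4_Mb2a3c1_Mb1_of_apply_a₂_eq_zero {c : Cochain4 Mb2a3c1 Mb1}
    (hc : c ∈ cocycles4 Mb2a3c1 Mb1) (ha₂ : c .a₂ = 0) : c ∈ coboundaries4 Mb2a3c1 Mb1 := by
  obtain ⟨gB, ha₃⟩ := exists_sub_comp_eq_of_injective Mb2a3c1.bijective_map_a₃.1 0 (c .a₃)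
  obtain ⟨gA, hb₁⟩ := exists_comp_sub_eq_of_surjective Mb1.bijective_map_b₁.2
    (gB ∘ₗ Mb2a3c1.map .b₁) (c .b₁)
  refine mem_coboundaries4_of_sub_eq_zero hc
    (fun | .A => gA | .B => gB | .C => 0 | .D => 0) fun hc' => ?_
  funext u v a
  cases a
  case a₂ => exact sub_eq_zero.2 (ha₂.trans (coboundary4_apply_eq_zero rfl rfl _).symm)
  case a₃ => exact sub_eq_zero.2 ha₃.symm
  case b₁ => exact sub_eq_zero.2 hb₁.symm
  case a₁ =>
    exact cocycle4_apply_eq_zero_of_injective hc' .a₁b₁ Mb1.bijective_map_b₁.1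
      (LinearMap.comp_zero _)
  all_goals exact Subsingleton.elim _ _

theorem exists_mem_cocycles4_Mc2_Mb1_apply_a₃_ne_zero :
    ∃ c ∈ cocycles4 Mc2 Mb1, c .a₃ ≠ 0 := by
  let c : Cochain4 Mc2 Mb1
    | _, _, .a₃ => (LinearMap.id : ℂ →ₗ[ℂ] ℂ)
    | _, _, _ => 0
  refine ⟨c, ?_, fun h => one_ne_zero (α := ℂ) (LinearMap.congr_fun h (1 : ℂ))⟩
  rintro _ _ _ _ _ (_ | _) x <;> exact add_zero _

theorem exists_mem_cocycles4_Mc2_Mb2a3c1_apply_a₁_ne_zero :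
    ∃ c ∈ cocycles4 Mc2 Mb2a3c1, c .a₁ ≠ 0 := by
  let c : Cochain4 Mc2 Mb2a3c1
    | _, _, .a₁ => (LinearMap.id : ℂ →ₗ[ℂ] ℂ)
    | _, _, _ => 0
  refine ⟨c, ?_, fun h => one_ne_zero (α := ℂ) (LinearMap.congr_fun h (1 : ℂ))⟩
  rintro _ _ _ _ _ (_ | _) x <;> exact add_zero _

theorem exists_mem_cocycles4_Mb2a3c1_Mb1_apply_a₂_ne_zero :
    ∃ c ∈ cocycles4 Mb2a3c1 Mb1, c .a₂ ≠ 0 := by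
  let c : Cochain4 Mb2a3c1 Mb1
    | _, _, .a₂ => (LinearMap.id : ℂ →ₗ[ℂ] ℂ)
    | _, _, _ => 0
  refine ⟨c, ?_, fun h => one_ne_zero (α := ℂ) (LinearMap.congr_fun h (1 : ℂ))⟩
  rintro _ _ _ _ _ (_ | _) x <;> exact add_zero _

theorem extOneDimensional4_Mc2_Mb1 : ExtOneDimensional4 Mc2 Mb1 :=
  extOneDimensional4_of_arrow .a₃ rfl rfl ((finrank_linearMap_self ℂ ℂ ℂ).trans (finrank_self ℂ))
    exists_mem_cocycles4_Mc2_Mb1_apply_a₃_ne_zero fun _ =>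
      mem_coboundaries4_Mc2_Mb1_of_apply_a₃_eq_zero

theorem extOneDimensional4_Mc2_Mb2a3c1 : ExtOneDimensional4 Mc2 Mb2a3c1 :=
  extOneDimensional4_of_arrow .a₁ rfl rfl ((finrank_linearMap_self ℂ ℂ ℂ).trans (finrank_self ℂ))
    exists_mem_cocycles4_Mc2_Mb2a3c1_apply_a₁_ne_zero fun _ =>
      mem_coboundaries4_Mc2_Mb2a3c1_of_apply_a₁_eq_zero

theorem extOneDimensional4_Mb2a3c1_Mb1 : ExtOneDimensional4 Mb2a3c1 Mb1 :=
  extOneDimensional4_of_arrow .a₂ rfl rfl ((finrank_linearMap_self ℂ ℂ ℂ).trans (finrank_self ℂ))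
    exists_mem_cocycles4_Mb2a3c1_Mb1_apply_a₂_ne_zero fun _ =>
      mem_coboundaries4_Mb2a3c1_Mb1_of_apply_a₂_eq_zero

/-- Let `M₁ = M(c₂)`, `M₂ = M(b₁)` and `M₃ = M(b₂a₃c₁)`.
(i) For `(X, Y) ∈ {(M₁,M₂), (M₁,M₃), (M₃,M₂)}` there is a non-split short exact sequence
`0 → Y → E → X → 0` and `Ext¹(X, Y)` is one-dimensional over `ℂ` (both contained in
`ExtOneDimensional4 X Y`).
(ii) For the remaining six ordered pairs `(X, Y)`, including all pairs `(Mᵢ, Mᵢ)`, every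
short exact sequence `0 → Y → E → X → 0` splits. -/
theorem ext_groups_of_three_stables :
    (ExtOneDimensional4 Mc2 Mb1 ∧ ExtOneDimensional4 Mc2 Mb2a3c1 ∧
      ExtOneDimensional4 Mb2a3c1 Mb1) ∧
    ((∀ ξ : SES4 Mc2 Mb1, ξ.IsSplit) ∧
     (∀ ξ : SES4 Mc2 Mb2a3c1, ξ.IsSplit) ∧
     (∀ ξ : SES4 Mb2a3c1 Mb1, ξ.IsSplit) ∧
     (∀ ξ : SES4 Mc2 Mc2, ξ.IsSplit) ∧
     (∀ ξ : SES4 Mb1 Mb1, ξ.IsSplit) ∧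
     (∀ ξ : SES4 Mb2a3c1 Mb2a3c1, ξ.IsSplit)) := by
  refine ⟨⟨extOneDimensional4_Mc2_Mb1, extOneDimensional4_Mc2_Mb2a3c1,
    extOneDimensional4_Mb2a3c1_Mb1⟩, ?_, ?_, ?_, ?_, ?_, ?_⟩ <;>
    refine SES4.isSplit_of_cocycles4_le_coboundaries4 ?_
  exacts [cocycles4_Mb1_Mc2_le_coboundaries4, cocycles4_Mb2a3c1_Mc2_le_coboundaries4,
    cocycles4_Mb1_Mb2a3c1_le_coboundaries4, cocycles4_Mc2_self_le_coboundaries4,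
    cocycles4_Mb1_self_le_coboundaries4, cocycles4_Mb2a3c1_self_le_coboundaries4]
end
end

section
/- Fix a central charge Z : ℤ² → ℂ with φ(0,1) < φ(1,0). A representation M of the barbell quiver with potential with dimension vector (d, d), d ≥ 1, is semistable if and only if M is isomorphic to a direct sum M' ⊕ M'' in which the map f_c of M' is an isomorphism and M'' is a finite (possibly empty) direct sum of string modules M(acb(c⁻¹acb)ⁿ) with n ≥ 0. In particular every representation whose map f_c is an isomorphism is semistable, and each string module M(acb(c⁻¹acb)ⁿ) is semistable. -/
/-!
# Statement 5

Work over `ℂ`.  The barbell quiver has vertices `1` and `2`, a loop `a` at vertex `1`, a loop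
`b` at vertex `2`, and an arrow `c : 1 → 2`; its potential is `W = a³ + b³`, whose Jacobian
relations are `a² = 0` and `b² = 0`.  Fix a central charge `Z : ℤ² → ℂ` with
`φ(0,1) < φ(1,0)`.  A representation `M` of the barbell quiver with potential with dimension
vector `(d, d)`, `d ≥ 1`, is semistable if and only if `M` is isomorphic to a direct sum
`M' ⊕ M''` in which the map `f_c` of `M'` is an isomorphism and `M''` is a finite (possibly
empty) direct sum of string modules `M(acb(c⁻¹acb)ⁿ)` with `n ≥ 0`.  In particular every
representation whose map `f_c` is an isomorphism is semistable, and each string module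
`M(acb(c⁻¹acb)ⁿ)` is semistable.
-/

noncomputable section
open Module

/-- A representation of the barbell quiver with potential `W = a³ + b³`: finite-dimensional
`ℂ`-vector spaces `V1, V2` and linear maps `fa : V1 → V1`, `fb : V2 → V2`, `fc : V1 → V2`
satisfying the Jacobian relations `fa ∘ fa = 0` and `fb ∘ fb = 0`. -/
structure BarbellRep where
  V1 : Type
  V2 : Type
  [acg1 : AddCommGroup V1]
  [acg2 : AddCommGroup V2]
  [mod1 : Module ℂ V1]
  [mod2 : Module ℂ V2]
  [fd1 : FiniteDimensional ℂ V1]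
  [fd2 : FiniteDimensional ℂ V2]
  fa : V1 →ₗ[ℂ] V1
  fb : V2 →ₗ[ℂ] V2
  fc : V1 →ₗ[ℂ] V2
  rel_a : fa ∘ₗ fa = 0
  rel_b : fb ∘ₗ fb = 0

attribute [instance] BarbellRep.acg1 BarbellRep.acg2 BarbellRep.mod1 BarbellRep.mod2
  BarbellRep.fd1 BarbellRep.fd2

namespace BarbellRep

/-- The dimension vector `(dim V1, dim V2)`. -/
def dimVec (M : BarbellRep) : ℕ × ℕ := (finrank ℂ M.V1, finrank ℂ M.V2)

/-- A subrepresentation: a pair of submodules closed under the structure maps. -/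
structure Sub (M : BarbellRep) where
  S1 : Submodule ℂ M.V1
  S2 : Submodule ℂ M.V2
  mapsto_a : ∀ x ∈ S1, M.fa x ∈ S1
  mapsto_b : ∀ y ∈ S2, M.fb y ∈ S2
  mapsto_c : ∀ x ∈ S1, M.fc x ∈ S2

/-- The dimension vector of a subrepresentation. -/
def Sub.dimVec {M : BarbellRep} (L : M.Sub) : ℕ × ℕ := (finrank ℂ L.S1, finrank ℂ L.S2)

/-- The subrepresentation is nonzero. -/
def Sub.Nonzero {M : BarbellRep} (L : M.Sub) : Prop := L.S1 ≠ ⊥ ∨ L.S2 ≠ ⊥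

/-- The subrepresentation is proper. -/
def Sub.Proper {M : BarbellRep} (L : M.Sub) : Prop := L.S1 ≠ ⊤ ∨ L.S2 ≠ ⊤

end BarbellRep

/-- The value of the central charge on a dimension vector in `ℕ²`. -/
def chargeOf (Z : ℤ × ℤ →+ ℂ) (d : ℕ × ℕ) : ℂ := Z ((d.1 : ℤ), (d.2 : ℤ))

/-- A nonzero representation `M` is semistable if `φ(dim L) ≤ φ(dim M)` for every nonzero
proper subrepresentation `L` of `M`. -/
def IsSemistable (Z : ℤ × ℤ →+ ℂ) (M : BarbellRep) : Prop :=
  M.dimVec ≠ (0, 0) ∧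
    ∀ L : M.Sub, L.Nonzero → L.Proper →
      phase (chargeOf Z L.dimVec) ≤ phase (chargeOf Z M.dimVec)

/-- Isomorphism of barbell representations. -/
def RepIso (M N : BarbellRep) : Prop :=
  ∃ (e1 : M.V1 ≃ₗ[ℂ] N.V1) (e2 : M.V2 ≃ₗ[ℂ] N.V2),
    (∀ x, e1 (M.fa x) = N.fa (e1 x)) ∧ (∀ y, e2 (M.fb y) = N.fb (e2 y)) ∧
      (∀ x, e2 (M.fc x) = N.fc (e1 x))

/-- Componentwise direct sum of barbell representations. -/
def dsum (M N : BarbellRep) : BarbellRep where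
  V1 := M.V1 × N.V1
  V2 := M.V2 × N.V2
  fa := M.fa.prodMap N.fa
  fb := M.fb.prodMap N.fb
  fc := M.fc.prodMap N.fc
  rel_a := by
    apply LinearMap.ext
    rintro ⟨x, y⟩
    have h1 := LinearMap.congr_fun M.rel_a x
    have h2 := LinearMap.congr_fun N.rel_a y
    simp only [LinearMap.comp_apply, LinearMap.prodMap_apply, LinearMap.zero_apply] at h1 h2 ⊢
    simp [h1, h2]
  rel_b := by
    apply LinearMap.ext
    rintro ⟨x, y⟩
    have h1 := LinearMap.congr_fun M.rel_b x
    have h2 := LinearMap.congr_fun N.rel_b y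
    simp only [LinearMap.comp_apply, LinearMap.prodMap_apply, LinearMap.zero_apply] at h1 h2 ⊢
    simp [h1, h2]

/-- The zero representation. -/
def zeroRep : BarbellRep where
  V1 := Fin 0 → ℂ
  V2 := Fin 0 → ℂ
  fa := 0
  fb := 0
  fc := 0
  rel_a := by simp
  rel_b := by simp

/-- Direct sum of a finite list of barbell representations. -/
def dsumList (l : List BarbellRep) : BarbellRep := l.foldr dsum zeroRep

/-! ## The string modules `M(acb(c⁻¹acb)ⁿ)`

The walk `acb(c⁻¹acb)ⁿ` has length `4n + 3` and `4n + 4` vertex-instances `z₀, …, z_{4n+3}`,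
where `z_{4k}, z_{4k+1}` lie at vertex `1` and `z_{4k+2}, z_{4k+3}` lie at vertex `2`
(`0 ≤ k ≤ n`).  We realise the string module with
`V1 = V2 = (Fin (n+1) × Bool) → ℂ`, where `(k, false)` indexes `z_{4k}` in `V1` (resp.
`z_{4k+2}` in `V2`) and `(k, true)` indexes `z_{4k+1}` in `V1` (resp. `z_{4k+3}` in `V2`).
The structure maps of the string module are:
`f_a(z_{4k}) = z_{4k+1}`, `f_b(z_{4k+2}) = z_{4k+3}`, `f_c(z_{4k+1}) = z_{4k+2}` (letter `c`)
and `f_c(z_{4k+4}) = z_{4k+3}` (letter `c⁻¹`), all other basis vectors mapping to `0`. -/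

/-- The map sending the basis vector indexed `(k, false)` to the one indexed `(k, true)`
and killing the others; this is `f_a` (and also `f_b`) of the string module. -/
def strFa (n : ℕ) : ((Fin (n + 1) × Bool) → ℂ) →ₗ[ℂ] ((Fin (n + 1) × Bool) → ℂ) where
  toFun v p := if p.2 then v (p.1, false) else 0
  map_add' u v := by
    funext p
    by_cases h : p.2 <;> simp [h]
  map_smul' c v := by
    funext p
    by_cases h : p.2 <;> simp [h]

/-- The map `f_c` of the string module `M(acb(c⁻¹acb)ⁿ)`:
`f_c(z_{4k+1}) = z_{4k+2}` and `f_c(z_{4k+4}) = z_{4k+3}`, i.e. the coefficient of the output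
at `z_{4k+2}` is the input coefficient at `z_{4k+1}`, and the coefficient of the output at
`z_{4k+3}` is the input coefficient at `z_{4k+4}` (when `k + 1 ≤ n`). -/
def strFc (n : ℕ) : ((Fin (n + 1) × Bool) → ℂ) →ₗ[ℂ] ((Fin (n + 1) × Bool) → ℂ) where
  toFun v p :=
    if p.2 then
      (if h : (p.1 : ℕ) + 1 < n + 1 then v (⟨(p.1 : ℕ) + 1, h⟩, false) else 0)
    else v (p.1, true)
  map_add' u v := by
    funext p
    by_cases h : p.2
    · simp only [h, if_true, Pi.add_apply]
      split <;> simp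
    · simp [h]
  map_smul' c v := by
    funext p
    by_cases h : p.2
    · simp only [h, if_true, Pi.smul_apply, RingHom.id_apply]
      split <;> simp
    · simp [h]

/-- The string module `M(acb(c⁻¹acb)ⁿ)`. -/
def Mstring (n : ℕ) : BarbellRep where
  V1 := (Fin (n + 1) × Bool) → ℂ
  V2 := (Fin (n + 1) × Bool) → ℂ
  fa := strFa n
  fb := strFa n
  fc := strFc n
  rel_a := by
    apply LinearMap.ext
    intro v
    funext p
    by_cases h : p.2 <;> simp [strFa, h]
  rel_b := by
    apply LinearMap.ext
    intro v
    funext p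
    by_cases h : p.2 <;> simp [strFa, h]

/-!
For `φ(0,1) < φ(1,0)` and `dim V₁ = dim V₂`, semistability says that `dim L₁ ≤ dim L₂` for every
subrepresentation `L`. Every `L` is preserved by the pencil `f_c + t f_b f_c f_a`, so this holds as
soon as one member of the pencil is injective. Conversely, put `h = f_b f_c f_a` and suppose that
the members with `t ≠ 0` all have a kernel. These kernels span a subspace `X` with
`f_c X ⊆ h X`; counting dimensions in the subrepresentation `(X + f_a X, f_c f_a X + h X)` shows
that `h` is injective on `X`, and then `f_c` has infinitely many eigenvalues relative to `h` on `X`.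

If a member of the pencil is invertible, it identifies `V₁` with `V₂`, and `f_c` becomes
`1 - t b a` with `a² = b² = 0`. Here `s = a b + b a` commutes with `a` and `b`, so the Fitting
decomposition of `1 - t s` splits the representation. Where `1 - t s` is injective, so is `f_c`.
Where it is nilpotent, `s` is invertible, `V = ker b ⊕ a (ker b)`, and what is left is the nilpotent
endomorphism `s⁻¹ - t` of `ker b`, whose Jordan blocks give the string modules.
-/

/-! ### Phases -/

theorem arg_pos_of_mem_UpperH {z : ℂ} (hz : z ∈ UpperH) : 0 < z.arg := by
  obtain ⟨r, φ, hr, hφ, hφ_le, rfl⟩ := hz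
  have hθ : 0 < Real.pi * φ := mul_pos Real.pi_pos hφ
  rw [Complex.exp_mul_I, Complex.arg_mul_cos_add_sin_mul_I hr
    ⟨by linarith [Real.pi_pos], mul_le_of_le_one_right Real.pi_pos.le hφ_le⟩]
  exact hθ

theorem arg_pos_iff {z : ℂ} : 0 < z.arg ↔ 0 < z.im ∨ z.im = 0 ∧ z.re < 0 := by
  rw [lt_iff_le_and_ne, ne_comm, Complex.arg_nonneg_iff, Ne, Complex.arg_eq_zero_iff]
  grind

theorem arg_add_pos {z w : ℂ} (hz : 0 < z.arg) (hw : 0 < w.arg) : 0 < (z + w).arg := by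
  rw [arg_pos_iff] at *
  simp only [Complex.add_im, Complex.add_re]
  grind

theorem re_mul_im_sub_im_mul_re (z w : ℂ) :
    z.re * w.im - z.im * w.re = ‖z‖ * ‖w‖ * Real.sin (w.arg - z.arg) := by
  rw [Real.sin_sub, ← Complex.norm_mul_cos_arg z, ← Complex.norm_mul_sin_arg z,
    ← Complex.norm_mul_cos_arg w, ← Complex.norm_mul_sin_arg w]
  ring

theorem phase_le_phase_iff {z w : ℂ} (hz : 0 < z.arg) (hw : 0 < w.arg) :
    phase z ≤ phase w ↔ 0 ≤ z.re * w.im - z.im * w.re := by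
  have norm_pos_of_arg_pos {u : ℂ} (hu : 0 < u.arg) : 0 < ‖u‖ :=
    norm_pos_iff.2 fun h => by simp [h] at hu
  rw [phase, phase, div_le_div_iff_of_pos_right Real.pi_pos, re_mul_im_sub_im_mul_re,
    mul_nonneg_iff_of_pos_left (mul_pos (norm_pos_of_arg_pos hz) (norm_pos_of_arg_pos hw))]
  have hz_le := z.arg_le_pi
  have hw_le := w.arg_le_pi
  refine ⟨fun h => Real.sin_nonneg_of_nonneg_of_le_pi (by linarith) (by linarith), fun h => ?_⟩
  contrapose! h
  exact Real.sin_neg_of_neg_of_neg_pi_lt (by linarith) (by linarith)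

theorem chargeOf_eq (Z : ℤ × ℤ →+ ℂ) (x y : ℕ) :
    chargeOf Z (x, y) = (x : ℝ) * Z (1, 0) + (y : ℝ) * Z (0, 1) := by
  have h : ((x : ℤ), (y : ℤ)) = x • ((1, 0) : ℤ × ℤ) + y • ((0, 1) : ℤ × ℤ) := by ext <;> simp
  rw [chargeOf, h, map_add, map_nsmul, map_nsmul]
  simp

theorem arg_chargeOf_pos {Z : ℤ × ℤ →+ ℂ} (hZ10 : 0 < (Z (1, 0)).arg) (hZ01 : 0 < (Z (0, 1)).arg)
    {v : ℕ × ℕ} (hv : v ≠ (0, 0)) : 0 < (chargeOf Z v).arg := by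
  obtain ⟨x, y⟩ := v
  have arg_mul_pos {n : ℕ} (hn : n ≠ 0) {z : ℂ} (hz : 0 < z.arg) : 0 < ((n : ℝ) * z).arg := by
    rwa [Complex.arg_real_mul z (by positivity)]
  rw [chargeOf_eq]
  rcases eq_or_ne x 0 with rfl | hx
  · simpa using arg_mul_pos (n := y) (by simpa using hv) hZ01
  rcases eq_or_ne y 0 with rfl | hy
  · simpa using arg_mul_pos hx hZ10
  exact arg_add_pos (arg_mul_pos hx hZ10) (arg_mul_pos hy hZ01)

theorem phase_chargeOf_le_iff {Z : ℤ × ℤ →+ ℂ}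
    (hZ10 : Z (1, 0) ∈ UpperH) (hZ01 : Z (0, 1) ∈ UpperH)
    (hph : phase (Z (0, 1)) < phase (Z (1, 0))) {x y d : ℕ} (hxy : (x, y) ≠ (0, 0)) (hd : d ≠ 0) :
    phase (chargeOf Z (x, y)) ≤ phase (chargeOf Z (d, d)) ↔ x ≤ y := by
  have h10 := arg_pos_of_mem_UpperH hZ10
  have h01 := arg_pos_of_mem_UpperH hZ01
  set α := Z (1, 0)
  set β := Z (0, 1)
  have hαβ : 0 < α.im * β.re - α.re * β.im := by
    have := mt (phase_le_phase_iff h10 h01).2 hph.not_ge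
    linarith
  have hcross : (chargeOf Z (x, y)).re * (chargeOf Z (d, d)).im
      - (chargeOf Z (x, y)).im * (chargeOf Z (d, d)).re
      = d * (α.im * β.re - α.re * β.im) * ((y : ℝ) - x) := by
    simp only [chargeOf_eq, Complex.add_re, Complex.add_im, Complex.re_ofReal_mul,
      Complex.im_ofReal_mul]
    ring
  rw [phase_le_phase_iff (arg_chargeOf_pos h10 h01 hxy) (arg_chargeOf_pos h10 h01 (by simpa)),
    hcross, mul_nonneg_iff_of_pos_left (by positivity), sub_nonneg, Nat.cast_le]

/-! ### Linear algebra -/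

section LinearAlgebra

variable {K V W : Type*} [Field K] [AddCommGroup V] [Module K V] [AddCommGroup W] [Module K W]

theorem commute_mul_add_mul_of_mul_self_eq_zero {R : Type*} [NonUnitalSemiring R] {x : R}
    (hx : x * x = 0) (y : R) : Commute (x * y + y * x) x := by
  simp only [commute_iff_eq, add_mul, mul_add, mul_assoc, hx, mul_zero, add_zero]
  simp only [← mul_assoc, hx, zero_mul, zero_add]

theorem ker_mem_invtSubmodule_of_commute {f g : End K V} (h : Commute f g) :
    LinearMap.ker f ∈ End.invtSubmodule g := fun x hx => by
  rw [LinearMap.mem_ker] at hx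
  rw [Submodule.mem_comap, LinearMap.mem_ker, ← End.mul_apply, h.eq, End.mul_apply, hx, map_zero]

theorem range_mem_invtSubmodule_of_commute {f g : End K V} (h : Commute f g) :
    LinearMap.range f ∈ End.invtSubmodule g := by
  rintro _ ⟨x, rfl⟩
  exact ⟨g x, LinearMap.congr_fun h.eq x⟩

theorem restrict_mul_self_eq_zero {f : End K V} (hf : f * f = 0) {p : Submodule K V}
    (hp : p ∈ End.invtSubmodule f) : f.restrict hp * f.restrict hp = 0 :=
  LinearMap.ext fun x => Subtype.ext (LinearMap.congr_fun hf x)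

theorem isNilpotent_restrict_ker_pow (f : End K V) (k : ℕ) :
    IsNilpotent (f.restrict (ker_mem_invtSubmodule_of_commute ((Commute.refl f).pow_left k)) :
      End K (LinearMap.ker (f ^ k))) :=
  ⟨k, (End.pow_restrict k _).trans (LinearMap.ext fun x => Subtype.ext x.2)⟩

theorem eq_bot_of_isNilpotent_of_disjoint_ker {f : End K V} (hf : IsNilpotent f)
    {p : Submodule K V} (hp : p ∈ End.invtSubmodule f) (h : Disjoint p (LinearMap.ker f)) :
    p = ⊥ := by
  obtain ⟨n, hn⟩ := hf
  have eq_zero (k : ℕ) : ∀ x ∈ p, (f ^ k) x = 0 → x = 0 := by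
    induction k with
    | zero => exact fun x _ hx => hx
    | succ k ih =>
      intro x hxp hx
      rw [pow_succ, End.mul_apply] at hx
      exact Submodule.disjoint_def.1 h x hxp (ih _ (hp hxp) hx)
  exact p.eq_bot_iff.2 fun x hx => eq_zero n x hx (by rw [hn, LinearMap.zero_apply])

theorem isUnit_of_isNilpotent_one_sub_smul {A : Type*} [Ring A] [Algebra K A] {t : K} {s : A}
    (h : IsNilpotent (1 - t • s)) : IsUnit s := by
  have hts : IsUnit (algebraMap K A t * s) := by
    simpa [← Algebra.smul_def] using h.isUnit_one_sub
  exact (Commute.isUnit_mul_iff (Algebra.commutes t s)).1 hts |>.2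

theorem bijective_coprod_subtype_ker_of_isUnit {a b : End K V} (hb : b * b = 0)
    (h : IsUnit (a * b + b * a)) :
    Function.Bijective
      ((LinearMap.ker b).subtype.coprod (a ∘ₗ (LinearMap.ker b).subtype)) := by
  have hbij := (End.isUnit_iff _).1 h
  constructor
  · rw [injective_iff_map_eq_zero]
    rintro ⟨⟨p, hp⟩, ⟨q, hq⟩⟩ (hpq : p + a q = 0)
    rw [LinearMap.mem_ker] at hp hq
    have hbaq : b (a q) = 0 := by simpa [hp] using congrArg b hpq
    obtain rfl : q = 0 := (map_eq_zero_iff _ hbij.1).1 (by simp [hq, hbaq])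
    simpa using hpq
  · intro x
    obtain ⟨y, rfl⟩ := hbij.2 x
    have hb_mem (z : V) : b z ∈ LinearMap.ker b := LinearMap.congr_fun hb z
    exact ⟨(⟨b (a y), hb_mem _⟩, ⟨b y, hb_mem _⟩), by simp [add_comm]⟩

theorem exists_isCompl_range_pow_ker_pow [FiniteDimensional K V] (f : End K V) :
    ∃ k, IsCompl (LinearMap.range (f ^ k)) (LinearMap.ker (f ^ k)) ∧
      Disjoint (LinearMap.range (f ^ k)) (LinearMap.ker f) := by
  obtain ⟨k, hk, hk_ge⟩ := ((LinearMap.eventually_isCompl_ker_pow_range_pow f).and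
    (Filter.eventually_ge_atTop 1)).exists
  refine ⟨k, hk.symm, hk.symm.disjoint.mono_right ?_⟩
  obtain ⟨j, rfl⟩ := Nat.exists_eq_add_of_le' hk_ge
  exact pow_succ f j ▸ LinearMap.ker_le_ker_comp f (f ^ j)

theorem bijective_coprod_subtype_ker {f : V →ₗ[K] W} {g : W →ₗ[K] V}
    (h : Function.Bijective (f ∘ₗ g)) :
    Function.Bijective (g.coprod (LinearMap.ker f).subtype) := by
  constructor
  · rw [injective_iff_map_eq_zero]
    rintro ⟨w, k⟩ hwk
    rw [LinearMap.coprod_apply, Submodule.subtype_apply] at hwk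
    have hfg : (f ∘ₗ g) w = 0 := by simpa using congrArg f hwk
    obtain rfl : w = 0 := (map_eq_zero_iff _ h.1).1 hfg
    simpa using hwk
  · intro v
    obtain ⟨w, hw⟩ := h.2 (f v)
    exact ⟨(w, ⟨v - g w, by simp [← hw]⟩), by simp⟩

theorem finrank_map_add_finrank_inf_ker [FiniteDimensional K V] (p : Submodule K V)
    (f : V →ₗ[K] W) :
    finrank K (p.map f) + finrank K (p ⊓ LinearMap.ker f : Submodule K V) = finrank K p := by
  have h := (f.domRestrict p).finrank_range_add_finrank_ker
  rw [LinearMap.range_domRestrict, LinearMap.ker_domRestrict] at h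
  rw [← h, ← Submodule.map_comap_subtype p]
  congr 1
  exact (Submodule.equivMapOfInjective _ p.injective_subtype _).finrank_eq.symm

theorem eventually_injective_add_smul [FiniteDimensional K V] {f : V →ₗ[K] W}
    (hf : Function.Injective f) (g : V →ₗ[K] W) :
    ∀ᶠ t : K in Filter.cofinite, Function.Injective (f + t • g) := by
  obtain ⟨r, hr⟩ := f.exists_leftInverse_of_injective (LinearMap.ker_eq_bot.2 hf)
  refine ((End.finite_hasEigenvalue (r ∘ₗ g)).image fun μ => -μ⁻¹).subset fun t ht => ?_
  obtain ⟨x, hx, hx_ne⟩ : ∃ x, (f + t • g) x = 0 ∧ x ≠ 0 := by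
    simpa [injective_iff_map_eq_zero] using ht
  have hrx : x + t • r (g x) = 0 := by
    simpa [show r (f x) = x from LinearMap.congr_fun hr x] using congrArg r hx
  have ht_ne : t ≠ 0 := by
    rintro rfl
    exact hx_ne (by simpa using hrx)
  refine ⟨-t⁻¹, End.hasEigenvalue_of_hasEigenvector (x := x) ?_, by simp⟩
  rw [End.hasEigenvector_iff, End.mem_eigenspace_iff]
  refine ⟨smul_right_injective V ht_ne ?_, hx_ne⟩
  simpa [ht_ne] using eq_neg_of_add_eq_zero_right hrx

end LinearAlgebra

/-! ### Nilpotent Jordan blocks -/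

section JordanBlock

variable (K : Type*) [Field K]

/-- The nilpotent Jordan block of size `n + 1`: the left shift `e₀ ↦ 0`, `e_{k+1} ↦ e_k` on
`K^{n+1}`, written on coordinates in the form used by `strFc`. -/
def jordanBlock (n : ℕ) : End K (Fin (n + 1) → K) where
  toFun v k := if h : (k : ℕ) + 1 < n + 1 then v ⟨(k : ℕ) + 1, h⟩ else 0
  map_add' u v := by
    funext k
    simp only [Pi.add_apply]
    split <;> simp
  map_smul' c v := by
    funext k
    simp only [Pi.smul_apply, RingHom.id_apply]
    split <;> simp

variable {K}

@[simp]
theorem jordanBlock_apply_castSucc {n : ℕ} (v : Fin (n + 1) → K) (i : Fin n) :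
    jordanBlock K n v i.castSucc = v i.succ :=
  dif_pos (Nat.succ_lt_succ i.isLt)

@[simp]
theorem jordanBlock_apply_last {n : ℕ} (v : Fin (n + 1) → K) :
    jordanBlock K n v (Fin.last n) = 0 :=
  dif_neg (lt_irrefl _)

theorem isNilpotent_jordanBlock (n : ℕ) : IsNilpotent (jordanBlock K n) := by
  have pow_apply_eq_zero (k : ℕ) (v : Fin (n + 1) → K) (i : Fin (n + 1)) (hi : n < i + k) :
      (jordanBlock K n ^ k) v i = 0 := by
    induction k generalizing i with
    | zero => omega
    | succ k ih =>
      rw [pow_succ', End.mul_apply]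
      cases i using Fin.lastCases with
      | last => exact jordanBlock_apply_last _
      | cast i =>
        rw [jordanBlock_apply_castSucc]
        exact ih _ (by rw [Fin.val_castSucc] at hi; rw [Fin.val_succ]; omega)
  exact ⟨n + 1, LinearMap.ext fun v => funext fun i => pow_apply_eq_zero _ v i (by omega)⟩

theorem eq_smul_single_of_jordanBlock_eq_zero {n : ℕ} {v : Fin (n + 1) → K}
    (hv : jordanBlock K n v = 0) : v = v 0 • Pi.single 0 1 := by
  funext i
  cases i using Fin.cases with
  | zero => simp
  | succ i => simpa using congrFun hv i.castSucc

variable {V : Type*} [AddCommGroup V] [Module K V] {Q : End K V} {n : ℕ}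

/-- The map `V → K^{n+1}` with coordinates `v ↦ f (Qⁱ v)`. -/
def jordanCoords (Q : End K V) (n : ℕ) (f : Dual K V) : V →ₗ[K] (Fin (n + 1) → K) :=
  LinearMap.pi fun i => f ∘ₗ (Q ^ (i : ℕ))

/-- The map `K^{n+1} → V` sending `e_i` to `Qⁿ⁻ⁱ x`. -/
def jordanChain (Q : End K V) (n : ℕ) (x : V) : (Fin (n + 1) → K) →ₗ[K] V :=
  Fintype.linearCombination K fun i => (Q ^ (n - (i : ℕ))) x

theorem jordanCoords_apply_map (hQ : Q ^ (n + 1) = 0) (f : Dual K V) (v : V) :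
    jordanCoords Q n f (Q v) = jordanBlock K n (jordanCoords Q n f v) := by
  have hpow (i : ℕ) : (Q ^ i) (Q v) = (Q ^ (i + 1)) v := by rw [pow_succ, End.mul_apply]
  funext i
  cases i using Fin.lastCases with
  | last => simp [jordanCoords, hpow, hQ]
  | cast i => simp [jordanCoords, hpow]

theorem jordanChain_jordanBlock (hQ : Q ^ (n + 1) = 0) (x : V) (v : Fin (n + 1) → K) :
    jordanChain Q n x (jordanBlock K n v) = Q (jordanChain Q n x v) := by
  have hpow (i : ℕ) : Q ((Q ^ i) x) = (Q ^ (i + 1)) x := by rw [pow_succ', End.mul_apply]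
  have hpow_sub (i : Fin n) : n - (i + 1 : ℕ) + 1 = n - i := by omega
  simp only [jordanChain, Fintype.linearCombination_apply, map_sum, map_smul, hpow]
  rw [Fin.sum_univ_castSucc, Fin.sum_univ_succ]
  simp [hQ, hpow_sub]

theorem bijective_jordanCoords_comp_jordanChain (hQ : Q ^ (n + 1) = 0) {x : V} {f : Dual K V}
    (hfx : f ((Q ^ n) x) ≠ 0) :
    Function.Bijective (jordanCoords Q n f ∘ₗ jordanChain Q n x) := by
  set T := jordanCoords Q n f ∘ₗ jordanChain Q n x with hT
  have hcomm : Commute T (jordanBlock K n) := LinearMap.ext fun v => by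
    simp [hT, jordanChain_jordanBlock hQ, jordanCoords_apply_map hQ]
  have hdisj : Disjoint (LinearMap.ker T) (LinearMap.ker (jordanBlock K n)) := by
    rw [Submodule.disjoint_def]
    intro v hTv hv
    have hv_eq := eq_smul_single_of_jordanBlock_eq_zero hv
    have hTv0 : v 0 * f ((Q ^ n) x) = 0 := by
      rw [hv_eq] at hTv
      simpa [hT, jordanCoords, jordanChain] using congrFun (LinearMap.mem_ker.1 hTv) 0
    rw [hv_eq, (mul_eq_zero.1 hTv0).resolve_right hfx, zero_smul]
  have hinj : Function.Injective T := LinearMap.ker_eq_bot.1 <|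
    eq_bot_of_isNilpotent_of_disjoint_ker (isNilpotent_jordanBlock n)
      (ker_mem_invtSubmodule_of_commute hcomm) hdisj
  exact ⟨hinj, LinearMap.injective_iff_surjective.1 hinj⟩

theorem exists_equiv_jordanBlock_prodMap_restrict (hQ : Q ^ (n + 1) = 0) (hQn : Q ^ n ≠ 0) :
    ∃ (p : Submodule K V) (hp : p ∈ End.invtSubmodule Q) (e : ((Fin (n + 1) → K) × p) ≃ₗ[K] V),
      ∀ v, e ((jordanBlock K n).prodMap (Q.restrict hp) v) = Q (e v) := by
  obtain ⟨x, hx⟩ : ∃ x, (Q ^ n) x ≠ 0 := by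
    contrapose! hQn
    exact LinearMap.ext hQn
  obtain ⟨f, hf⟩ : ∃ f : Dual K V, f ((Q ^ n) x) ≠ 0 := by
    contrapose! hx
    exact (forall_dual_apply_eq_zero_iff K _).1 hx
  have hker : LinearMap.ker (jordanCoords Q n f) ∈ End.invtSubmodule Q := fun v hv => by
    rw [LinearMap.mem_ker] at hv
    rw [Submodule.mem_comap, LinearMap.mem_ker, jordanCoords_apply_map hQ, hv, map_zero]
  refine ⟨_, hker, LinearEquiv.ofBijective _
    (bijective_coprod_subtype_ker (bijective_jordanCoords_comp_jordanChain hQ hf)), ?_⟩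
  rintro ⟨v, k⟩
  change jordanChain Q n x (jordanBlock K n v) + Q k = Q (jordanChain Q n x v + k)
  rw [jordanChain_jordanBlock hQ, map_add]

end JordanBlock

/-! ### Isomorphisms of representations -/

namespace RepIso

theorem refl (M : BarbellRep) : RepIso M M :=
  ⟨.refl ℂ _, .refl ℂ _, fun _ => rfl, fun _ => rfl, fun _ => rfl⟩

theorem symm {M N : BarbellRep} : RepIso M N → RepIso N M := by
  rintro ⟨e₁, e₂, ha, hb, hc⟩
  refine ⟨e₁.symm, e₂.symm, fun x => ?_, fun y => ?_, fun x => ?_⟩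
  · rw [LinearEquiv.symm_apply_eq, ha, LinearEquiv.apply_symm_apply]
  · rw [LinearEquiv.symm_apply_eq, hb, LinearEquiv.apply_symm_apply]
  · rw [LinearEquiv.symm_apply_eq, hc, LinearEquiv.apply_symm_apply]

theorem trans {M N P : BarbellRep} : RepIso M N → RepIso N P → RepIso M P := by
  rintro ⟨e₁, e₂, ha, hb, hc⟩ ⟨e₁', e₂', ha', hb', hc'⟩
  refine ⟨e₁.trans e₁', e₂.trans e₂', fun x => ?_, fun y => ?_, fun x => ?_⟩
  · simp only [LinearEquiv.trans_apply, ha, ha']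
  · simp only [LinearEquiv.trans_apply, hb, hb']
  · simp only [LinearEquiv.trans_apply, hc, hc']

theorem dsum_congr {M N M' N' : BarbellRep} :
    RepIso M N → RepIso M' N' → RepIso (dsum M M') (dsum N N') := by
  rintro ⟨e₁, e₂, ha, hb, hc⟩ ⟨e₁', e₂', ha', hb', hc'⟩
  exact ⟨e₁.prodCongr e₁', e₂.prodCongr e₂', fun x => Prod.ext (ha x.1) (ha' x.2),
    fun y => Prod.ext (hb y.1) (hb' y.2), fun x => Prod.ext (hc x.1) (hc' x.2)⟩

end RepIso

/-! ### Semistability and the pencil -/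

namespace BarbellRep

variable {M N : BarbellRep}

@[simp]
theorem fa_fa (x : M.V1) : M.fa (M.fa x) = 0 :=
  LinearMap.congr_fun M.rel_a x

@[simp]
theorem fb_fb (y : M.V2) : M.fb (M.fb y) = 0 :=
  LinearMap.congr_fun M.rel_b y

/-- King's form of semistability for a representation whose two spaces have the same dimension:
`dim L₁ ≤ dim L₂` for every subrepresentation `L`. It no longer mentions the central charge. -/
def KingSemistable (M : BarbellRep) : Prop :=
  ∀ L : M.Sub, finrank ℂ L.S1 ≤ finrank ℂ L.S2

theorem isSemistable_iff_kingSemistable {Z : ℤ × ℤ →+ ℂ}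
    (hZ10 : Z (1, 0) ∈ UpperH) (hZ01 : Z (0, 1) ∈ UpperH)
    (hph : phase (Z (0, 1)) < phase (Z (1, 0)))
    (hM : M.dimVec ≠ (0, 0)) (hdim : finrank ℂ M.V1 = finrank ℂ M.V2) :
    IsSemistable Z M ↔ M.KingSemistable := by
  have hM_eq : M.dimVec = (finrank ℂ M.V1, finrank ℂ M.V1) := by rw [dimVec, ← hdim]
  have phase_le_iff (L : M.Sub) (hL : L.Nonzero) :
      phase (chargeOf Z L.dimVec) ≤ phase (chargeOf Z M.dimVec) ↔
        finrank ℂ L.S1 ≤ finrank ℂ L.S2 := by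
    rw [hM_eq]
    refine phase_chargeOf_le_iff hZ10 hZ01 hph ?_ (by simpa [hM_eq] using hM)
    rwa [Ne, Prod.mk.injEq, Submodule.finrank_eq_zero, Submodule.finrank_eq_zero, not_and_or]
  refine ⟨fun h L => ?_, fun h => ⟨hM, fun L hL _ => (phase_le_iff L hL).2 (h L)⟩⟩
  by_cases hL : L.Nonzero
  · by_cases hL' : L.Proper
    · exact (phase_le_iff L hL).1 (h.2 L hL hL')
    · obtain ⟨h₁, h₂⟩ : L.S1 = ⊤ ∧ L.S2 = ⊤ := by
        rwa [Sub.Proper, not_or, not_not, not_not] at hL'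
      rw [h₁, h₂, finrank_top, finrank_top, hdim]
  · obtain ⟨h₁, -⟩ : L.S1 = ⊥ ∧ L.S2 = ⊥ := by
      rwa [Sub.Nonzero, not_or, not_not, not_not] at hL
    rw [h₁, finrank_bot]
    exact Nat.zero_le _

/-- The pencil of maps `f_c + t f_b f_c f_a : V₁ → V₂`. Each member maps `L₁` into `L₂` for every
subrepresentation `L`. -/
def pencil (M : BarbellRep) (t : ℂ) : M.V1 →ₗ[ℂ] M.V2 :=
  M.fc + t • (M.fb ∘ₗ M.fc ∘ₗ M.fa)

theorem pencil_apply (t : ℂ) (x : M.V1) :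
    M.pencil t x = M.fc x + t • M.fb (M.fc (M.fa x)) :=
  rfl

theorem kingSemistable_of_injective_pencil {t : ℂ} (h : Function.Injective (M.pencil t)) :
    M.KingSemistable := fun L => by
  rw [← (Submodule.equivMapOfInjective _ h L.S1).symm.finrank_eq]
  refine Submodule.finrank_mono (Submodule.map_le_iff_le_comap.2 fun x hx => ?_)
  exact L.S2.add_mem (L.mapsto_c x hx)
    (L.S2.smul_mem t (L.mapsto_b _ (L.mapsto_c _ (L.mapsto_a x hx))))

/-- For a subspace `X` of `V₁` with `f_c X ⊆ h X`, where `h = f_b f_c f_a`, the subrepresentation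
`(X + f_a X, f_c f_a X + h X)` generated by `X`. -/
def subOfMapLe (X : Submodule ℂ M.V1) (hX : X.map M.fc ≤ X.map (M.fb ∘ₗ M.fc ∘ₗ M.fa)) :
    M.Sub where
  S1 := X ⊔ X.map M.fa
  S2 := (X.map M.fa).map M.fc ⊔ X.map (M.fb ∘ₗ M.fc ∘ₗ M.fa)
  mapsto_a x hx := by
    obtain ⟨y, hy, _, ⟨z, -, rfl⟩, rfl⟩ := Submodule.mem_sup.1 hx
    rw [map_add, fa_fa, add_zero]
    exact Submodule.mem_sup_right ⟨y, hy, rfl⟩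
  mapsto_b y hy := by
    obtain ⟨_, ⟨_, ⟨x, hx, rfl⟩, rfl⟩, _, ⟨z, -, rfl⟩, rfl⟩ := Submodule.mem_sup.1 hy
    rw [map_add, LinearMap.comp_apply, fb_fb, add_zero]
    exact Submodule.mem_sup_right ⟨x, hx, rfl⟩
  mapsto_c x hx := by
    obtain ⟨y, hy, z, hz, rfl⟩ := Submodule.mem_sup.1 hx
    rw [map_add]
    exact add_mem (Submodule.mem_sup_right (hX ⟨y, hy, rfl⟩))
      (Submodule.mem_sup_left ⟨z, hz, rfl⟩)

theorem KingSemistable.disjoint_ker (hM : M.KingSemistable) {X : Submodule ℂ M.V1}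
    (hX : X.map M.fc ≤ X.map (M.fb ∘ₗ M.fc ∘ₗ M.fa)) :
    Disjoint X (LinearMap.ker (M.fb ∘ₗ M.fc ∘ₗ M.fa)) := by
  set h := M.fb ∘ₗ M.fc ∘ₗ M.fa with h_def
  set A := X.map M.fa
  have hle : X ⊓ A ≤ X ⊓ LinearMap.ker h := inf_le_inf_left X <| by
    rintro _ ⟨x, -, rfl⟩
    simp [h_def]
  have hL : finrank ℂ (X ⊔ A : Submodule ℂ M.V1) ≤
      finrank ℂ (A.map M.fc ⊔ X.map h : Submodule ℂ M.V2) := hM (subOfMapLe X hX)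
  have hdim₁ := Submodule.finrank_sup_add_finrank_inf_eq X A
  have hdim₂ := Submodule.finrank_sup_add_finrank_inf_eq (A.map M.fc) (X.map h)
  have hdim_h := finrank_map_add_finrank_inf_ker X h
  have hdim_c := finrank_map_add_finrank_inf_ker A M.fc
  have hdim_le := Submodule.finrank_mono hle
  have hX_inf : X ⊓ A = X ⊓ LinearMap.ker h := Submodule.eq_of_le_of_finrank_le hle (by omega)
  have hA_inf : A ⊓ LinearMap.ker M.fc = ⊥ := Submodule.finrank_eq_zero.1 (by omega)
  have hmap_inf : A.map M.fc ⊓ X.map h = ⊥ := Submodule.finrank_eq_zero.1 (by omega)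
  rw [Submodule.disjoint_def]
  intro x hxX hxh
  have hxA : x ∈ A := (hX_inf.ge ⟨hxX, hxh⟩).2
  have hcx : M.fc x = 0 := (Submodule.mem_bot ℂ).1 (hmap_inf.le ⟨⟨x, hxA, rfl⟩, hX ⟨x, hxX, rfl⟩⟩)
  exact (Submodule.mem_bot ℂ).1 (hA_inf.le ⟨hxA, hcx⟩)

theorem KingSemistable.exists_injective_pencil (hM : M.KingSemistable) :
    ∃ t, Function.Injective (M.pencil t) := by
  set h := M.fb ∘ₗ M.fc ∘ₗ M.fa
  set X : Submodule ℂ M.V1 := ⨆ t ∈ ({0}ᶜ : Set ℂ), LinearMap.ker (M.pencil t)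
  have hker_le {t : ℂ} (ht : t ≠ 0) : LinearMap.ker (M.pencil t) ≤ X :=
    le_biSup (fun t => LinearMap.ker (M.pencil t)) ht
  have hX : X.map M.fc ≤ X.map h := by
    refine Submodule.map_le_iff_le_comap.2 (iSup₂_le fun t ht x hx => ?_)
    refine ⟨-t • x, X.smul_mem _ (hker_le ht hx), ?_⟩
    rw [map_smul, neg_smul]
    exact (eq_neg_of_add_eq_zero_left hx).symm
  have hinj : Function.Injective (h.domRestrict X) :=
    LinearMap.injective_domRestrict_iff.2 (hM.disjoint_ker hX)
  obtain ⟨s, hs, hs_ne⟩ := ((eventually_injective_add_smul hinj (M.fc.domRestrict X)).and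
    (Set.finite_singleton 0).eventually_cofinite_notMem).exists
  refine ⟨s⁻¹, (injective_iff_map_eq_zero _).2 fun x hx => ?_⟩
  have hxX : x ∈ X := hker_le (inv_ne_zero hs_ne) hx
  have hx' : s • M.pencil s⁻¹ x = 0 := by rw [hx, smul_zero]
  rw [pencil_apply, smul_add, smul_inv_smul₀ hs_ne, add_comm] at hx'
  exact congrArg Subtype.val ((injective_iff_map_eq_zero _).1 hs ⟨x, hxX⟩ hx')

theorem isSemistable_iff_exists_injective_pencil {Z : ℤ × ℤ →+ ℂ}
    (hZ10 : Z (1, 0) ∈ UpperH) (hZ01 : Z (0, 1) ∈ UpperH)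
    (hph : phase (Z (0, 1)) < phase (Z (1, 0)))
    (hM : M.dimVec ≠ (0, 0)) (hdim : finrank ℂ M.V1 = finrank ℂ M.V2) :
    IsSemistable Z M ↔ ∃ t, Function.Injective (M.pencil t) :=
  (isSemistable_iff_kingSemistable hZ10 hZ01 hph hM hdim).trans
    ⟨fun h => h.exists_injective_pencil, fun ⟨_, ht⟩ => kingSemistable_of_injective_pencil ht⟩

theorem injective_pencil_zero (h : Function.Injective M.fc) :
    Function.Injective (M.pencil 0) := by
  simpa [pencil] using h

theorem injective_pencil_of_repIso (h : RepIso M N) {t : ℂ}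
    (hN : Function.Injective (N.pencil t)) : Function.Injective (M.pencil t) := by
  obtain ⟨e₁, e₂, ha, hb, hc⟩ := h
  have hpencil : e₂ ∘ M.pencil t = N.pencil t ∘ e₁ := by
    funext x
    simp [pencil_apply, ha, hb, hc]
  exact .of_comp (hpencil ▸ hN.comp e₁.injective)

theorem injective_pencil_dsum {t : ℂ} (hM : Function.Injective (M.pencil t))
    (hN : Function.Injective (N.pencil t)) : Function.Injective ((dsum M N).pencil t) :=
  hM.prodMap hN

/-! ### String modules -/

section EndRep

variable {U U' : Type} [AddCommGroup U] [Module ℂ U] [FiniteDimensional ℂ U]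
  [AddCommGroup U'] [Module ℂ U'] [FiniteDimensional ℂ U']

/-- The representation on `V₁ = V₂ = U ⊕ U` with `f_a (p, q) = f_b (p, q) = (0, p)` and
`f_c (p, q) = (q, Q p)` attached to an endomorphism `Q` of `U`. For a nilpotent Jordan block `Q`
of size `n + 1` it is the string module `M(acb(c⁻¹acb)ⁿ)`. -/
def endRep (Q : End ℂ U) : BarbellRep where
  V1 := U × U
  V2 := U × U
  fa := LinearMap.inr ℂ U U ∘ₗ LinearMap.fst ℂ U U
  fb := LinearMap.inr ℂ U U ∘ₗ LinearMap.fst ℂ U U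
  fc := (LinearMap.snd ℂ U U).prod (Q ∘ₗ LinearMap.fst ℂ U U)
  rel_a := by ext <;> simp
  rel_b := by ext <;> simp

theorem repIso_endRep_of_conj {Q : End ℂ U} {Q' : End ℂ U'} (e : U ≃ₗ[ℂ] U')
    (he : ∀ u, e (Q u) = Q' (e u)) : RepIso (endRep Q) (endRep Q') :=
  ⟨e.prodCongr e, e.prodCongr e, fun _ => Prod.ext (map_zero e) rfl,
    fun _ => Prod.ext (map_zero e) rfl, fun x => Prod.ext rfl (he x.1)⟩

theorem repIso_endRep_prodMap (Q : End ℂ U) (Q' : End ℂ U') :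
    RepIso (endRep (Q.prodMap Q')) (dsum (endRep Q) (endRep Q')) :=
  ⟨LinearEquiv.prodProdProdComm ℂ U U' U U', LinearEquiv.prodProdProdComm ℂ U U' U U',
    fun _ => rfl, fun _ => rfl, fun _ => rfl⟩

theorem repIso_Mstring_endRep (n : ℕ) : RepIso (Mstring n) (endRep (jordanBlock ℂ n)) := by
  let e : (Fin (n + 1) × Bool → ℂ) ≃ₗ[ℂ] (Fin (n + 1) → ℂ) × (Fin (n + 1) → ℂ) :=
    { toFun := fun v => (fun k => v (k, false), fun k => v (k, true))
      invFun := fun w p => if p.2 then w.2 p.1 else w.1 p.1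
      map_add' := fun _ _ => rfl
      map_smul' := fun _ _ => rfl
      left_inv := fun v => by
        funext ⟨k, b⟩
        cases b <;> rfl
      right_inv := fun _ => rfl }
  exact ⟨e, e, fun _ => rfl, fun _ => rfl, fun _ => rfl⟩

theorem injective_pencil_endRep {Q : End ℂ U} (hQ : IsNilpotent Q) {t : ℂ} (ht : t ≠ 0) :
    Function.Injective ((endRep Q).pencil t) := by
  have hunit : IsUnit (Q + algebraMap ℂ (End ℂ U) t) :=
    hQ.isUnit_add_right_of_commute (ht.isUnit.map _) (Algebra.commutes t Q).symm
  have hinj := ((End.isUnit_iff _).1 hunit).1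
  have hpencil (x : U × U) :
      (endRep Q).pencil t x = (x.2, (Q + algebraMap ℂ (End ℂ U) t) x.1) := by
    change (x.2, Q x.1) + t • ((0 : U), x.1) = _
    simp
  rintro (x : U × U) (y : U × U) hxy
  have hxy' := ((hpencil x).symm.trans hxy).trans (hpencil y)
  exact Prod.ext (hinj (congrArg Prod.snd hxy')) (congrArg Prod.fst hxy')

theorem injective_pencil_Mstring (n : ℕ) {t : ℂ} (ht : t ≠ 0) :
    Function.Injective ((Mstring n).pencil t) :=
  injective_pencil_of_repIso (repIso_Mstring_endRep n)
    (injective_pencil_endRep (isNilpotent_jordanBlock n) ht)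

theorem injective_pencil_dsumList_Mstring (l : List ℕ) {t : ℂ} (ht : t ≠ 0) :
    Function.Injective ((dsumList (l.map Mstring)).pencil t) := by
  induction l with
  | nil => exact fun x y _ => Subsingleton.elim (α := Fin 0 → ℂ) x y
  | cons n l ih => exact injective_pencil_dsum (injective_pencil_Mstring n ht) ih

theorem repIso_endRep_zeroRep [Subsingleton U] (Q : End ℂ U) : RepIso (endRep Q) zeroRep := by
  let e : (U × U) ≃ₗ[ℂ] (Fin 0 → ℂ) := LinearEquiv.ofFinrankEq _ _ <| by
    rw [finrank_zero_of_subsingleton, finrank_zero_of_subsingleton]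
  exact ⟨e, e, fun _ => Subsingleton.elim (α := Fin 0 → ℂ) _ _,
    fun _ => Subsingleton.elim (α := Fin 0 → ℂ) _ _,
    fun _ => Subsingleton.elim (α := Fin 0 → ℂ) _ _⟩

theorem exists_repIso_endRep_dsumList_Mstring {Q : End ℂ U} (hQ : IsNilpotent Q) :
    ∃ l : List ℕ, RepIso (endRep Q) (dsumList (l.map Mstring)) := by
  induction hm : finrank ℂ U using Nat.strong_induction_on generalizing U with
  | _ m ih =>
    rcases subsingleton_or_nontrivial U with hU | hU
    · exact ⟨[], repIso_endRep_zeroRep Q⟩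
    obtain ⟨n, hn⟩ := Nat.exists_eq_succ_of_ne_zero (pos_nilpotencyClass_iff.2 hQ).ne'
    have hQ_pow : Q ^ (n + 1) = 0 := by simpa [hn] using pow_nilpotencyClass hQ
    have hQ_pow_ne : Q ^ n ≠ 0 := by simpa [hn] using pow_pred_nilpotencyClass hQ
    obtain ⟨p, hp, e, he⟩ := exists_equiv_jordanBlock_prodMap_restrict hQ_pow hQ_pow_ne
    have hdim : n + 1 + finrank ℂ p = finrank ℂ U := by
      rw [← e.finrank_eq, finrank_prod, finrank_fin_fun]
    obtain ⟨l, hl⟩ := ih _ (by omega) (End.isNilpotent.restrict hp hQ) rfl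
    exact ⟨n :: l, ((repIso_endRep_of_conj e he).symm.trans (repIso_endRep_prodMap _ _)).trans
      ((repIso_Mstring_endRep n).symm.dsum_congr hl)⟩

end EndRep

/-! ### Pairs of square-zero endomorphisms -/

section OfPair

variable {V : Type} [AddCommGroup V] [Module ℂ V] [FiniteDimensional ℂ V] {t : ℂ} {a b : End ℂ V}

/-- The representation on `V₁ = V₂ = V` with `f_a = a`, `f_b = b` and `f_c = 1 - t b a`. This value
of `f_c` is the one for which `f_c + t f_b f_c f_a` is the identity. -/
def ofPair (t : ℂ) (a b : End ℂ V) (ha : a * a = 0) (hb : b * b = 0) : BarbellRep where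
  V1 := V
  V2 := V
  fa := a
  fb := b
  fc := 1 - t • (b * a)
  rel_a := ha
  rel_b := hb

theorem repIso_ofPair_dsum {A B : Submodule ℂ V} (hAB : IsCompl A B)
    (ha : a * a = 0) (hb : b * b = 0)
    (hAa : A ∈ End.invtSubmodule a) (hAb : A ∈ End.invtSubmodule b)
    (hBa : B ∈ End.invtSubmodule a) (hBb : B ∈ End.invtSubmodule b) :
    RepIso (ofPair t a b ha hb)
      (dsum
        (ofPair t (a.restrict hAa) (b.restrict hAb)
          (restrict_mul_self_eq_zero ha hAa) (restrict_mul_self_eq_zero hb hAb))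
        (ofPair t (a.restrict hBa) (b.restrict hBb)
          (restrict_mul_self_eq_zero ha hBa) (restrict_mul_self_eq_zero hb hBb))) := by
  let e := Submodule.prodEquivOfIsCompl A B hAB
  exact RepIso.symm ⟨e, e, fun _ => (map_add a _ _).symm, fun _ => (map_add b _ _).symm,
    fun _ => (map_add (1 - t • (b * a)) _ _).symm⟩

theorem bijective_fc_ofPair (ha : a * a = 0) (hb : b * b = 0)
    (h : Function.Injective (1 - t • (a * b + b * a) : End ℂ V)) :
    Function.Bijective (ofPair t a b ha hb).fc := by
  have hinj : Function.Injective (1 - t • (b * a) : End ℂ V) := by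
    rw [injective_iff_map_eq_zero]
    intro x hx
    have hx_eq : x = t • b (a x) := sub_eq_zero.1 hx
    have hbx : b x = 0 := by
      rw [hx_eq, map_smul, ← End.mul_apply, hb, LinearMap.zero_apply, smul_zero]
    refine (map_eq_zero_iff _ h).1 ?_
    simpa [hbx] using hx
  exact ⟨hinj, LinearMap.injective_iff_surjective.1 hinj⟩

theorem repIso_endRep_ofPair (ha : a * a = 0) (hb : b * b = 0) (h : IsUnit (a * b + b * a))
    (S : LinearMap.ker b ≃ₗ[ℂ] LinearMap.ker b) (hS : ∀ q, (S q : V) = b (a q)) :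
    RepIso (endRep (S.symm.toLinearMap - t • LinearMap.id)) (ofPair t a b ha hb) := by
  let φ := LinearEquiv.ofBijective _ (bijective_coprod_subtype_ker_of_isUnit hb h)
  have ha_apply (x : V) : a (a x) = 0 := LinearMap.congr_fun ha x
  have hb_apply (x : V) : b (b x) = 0 := LinearMap.congr_fun hb x
  refine ⟨φ, (LinearEquiv.prodComm ℂ _ _).trans ((S.prodCongr (.refl ℂ _)).trans φ), ?_, ?_, ?_⟩
  · rintro ⟨p, q⟩
    change (0 : V) + a p = a (p + a q)
    simp [ha_apply]
  · rintro ⟨p, q⟩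
    change (S p : V) + a 0 = b (S q + a p)
    simp [hS, hb_apply]
  · rintro ⟨p, q⟩
    change (S (S.symm p - t • p) : V) + a q = p + a q - t • b (a (p + a q))
    simp [hS, ha_apply, sub_add_eq_add_sub]

theorem exists_isNilpotent_repIso_endRep_ofPair (ha : a * a = 0) (hb : b * b = 0)
    (h : IsNilpotent (1 - t • (a * b + b * a))) :
    ∃ Q : End ℂ (LinearMap.ker b), IsNilpotent Q ∧ RepIso (endRep Q) (ofPair t a b ha hb) := by
  have hcomm : Commute b (a * b + b * a) :=
    (add_comm (b * a) _ ▸ commute_mul_add_mul_of_mul_self_eq_zero hb a).symm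
  let S : End ℂ (LinearMap.ker b) :=
    LinearMap.restrict (a * b + b * a) (ker_mem_invtSubmodule_of_commute hcomm)
  have hS (q : LinearMap.ker b) : (S q : V) = b (a q) := by
    change a (b q) + b (a q) = _
    rw [q.2, map_zero, zero_add]
  have hS_nil : IsNilpotent (1 - t • S) := End.isNilpotent.restrict
    (ker_mem_invtSubmodule_of_commute ((Commute.one_right b).sub_right (hcomm.smul_right t))) h
  let σ := LinearEquiv.ofBijective S
    ((End.isUnit_iff _).1 (isUnit_of_isNilpotent_one_sub_smul hS_nil))
  let σinv : End ℂ (LinearMap.ker b) := σ.symm.toLinearMap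
  have hσ_mul : σinv * S = 1 := LinearMap.ext σ.symm_apply_apply
  have hσ_mul' : S * σinv = 1 := LinearMap.ext σ.apply_symm_apply
  have hQ : σinv - t • 1 = σinv * (1 - t • S) := by
    rw [mul_sub, mul_one, mul_smul_comm, hσ_mul]
  have hσ_comm : Commute σinv (1 - t • S) :=
    (Commute.one_right _).sub_right (Commute.smul_right (hσ_mul.trans hσ_mul'.symm) t)
  exact ⟨σinv - t • 1, hQ ▸ hσ_comm.isNilpotent_mul_left hS_nil,
    repIso_endRep_ofPair ha hb (isUnit_of_isNilpotent_one_sub_smul h) σ hS⟩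

theorem exists_repIso_ofPair_dsum_dsumList_Mstring (ha : a * a = 0) (hb : b * b = 0) :
    ∃ (M' : BarbellRep) (l : List ℕ), Function.Bijective M'.fc ∧
      RepIso (ofPair t a b ha hb) (dsum M' (dsumList (l.map Mstring))) := by
  set P : End ℂ V := 1 - t • (a * b + b * a)
  have hPa : Commute P a := (Commute.one_left a).sub_left
    ((commute_mul_add_mul_of_mul_self_eq_zero ha b).smul_left t)
  have hb_comm : Commute (a * b + b * a) b :=
    add_comm (b * a) _ ▸ commute_mul_add_mul_of_mul_self_eq_zero hb a
  have hPb : Commute P b := (Commute.one_left b).sub_left (hb_comm.smul_left t)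
  obtain ⟨k, hcompl, hdisj⟩ := exists_isCompl_range_pow_ker_pow P
  have hRa := range_mem_invtSubmodule_of_commute (hPa.pow_left k)
  have hRb := range_mem_invtSubmodule_of_commute (hPb.pow_left k)
  have hKa := ker_mem_invtSubmodule_of_commute (hPa.pow_left k)
  have hKb := ker_mem_invtSubmodule_of_commute (hPb.pow_left k)
  let aR : End ℂ (LinearMap.range (P ^ k)) := a.restrict hRa
  let bR : End ℂ (LinearMap.range (P ^ k)) := b.restrict hRb
  let aK : End ℂ (LinearMap.ker (P ^ k)) := a.restrict hKa
  let bK : End ℂ (LinearMap.ker (P ^ k)) := b.restrict hKb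
  have hinj : Function.Injective (1 - t • (aR * bR + bR * aR) : End ℂ _) :=
    (injective_iff_map_eq_zero _).2 fun x hx =>
      Subtype.ext (Submodule.disjoint_def.1 hdisj x x.2 (congrArg Subtype.val hx))
  have hnil : IsNilpotent (1 - t • (aK * bK + bK * aK)) :=
    isNilpotent_restrict_ker_pow P k
  obtain ⟨Q, hQ, hQ_iso⟩ := exists_isNilpotent_repIso_endRep_ofPair
    (restrict_mul_self_eq_zero ha hKa) (restrict_mul_self_eq_zero hb hKb) hnil
  obtain ⟨l, hl⟩ := exists_repIso_endRep_dsumList_Mstring hQ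
  exact ⟨_, l, bijective_fc_ofPair _ _ hinj,
    (repIso_ofPair_dsum hcompl ha hb hRa hRb hKa hKb).trans
      (RepIso.dsum_congr (RepIso.refl _) (hQ_iso.symm.trans hl))⟩

end OfPair

theorem exists_repIso_ofPair {t : ℂ} (h : Function.Injective (M.pencil t))
    (hdim : finrank ℂ M.V1 = finrank ℂ M.V2) :
    ∃ (b : End ℂ M.V1) (hb : b * b = 0), RepIso M (ofPair t M.fa b M.rel_a hb) := by
  let g := LinearEquiv.ofInjectiveOfFinrankEq (M.pencil t) h hdim
  have hg (x : M.V1) : g x = M.fc x + t • M.fb (M.fc (M.fa x)) := rfl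
  have hg_fa (x : M.V1) : g (M.fa x) = M.fc (M.fa x) := by simp [hg]
  refine ⟨g.symm.conj M.fb, ?_, .refl ℂ _, g.symm, fun _ => rfl, fun y => ?_, fun x => ?_⟩
  · exact LinearMap.ext fun x => by simp [LinearEquiv.conj_apply]
  · change g.symm (M.fb y) = g.symm (M.fb (g (g.symm y)))
    rw [g.apply_symm_apply]
  · change g.symm (M.fc x) = x - t • g.symm (M.fb (g (M.fa x)))
    rw [hg_fa, g.symm_apply_eq, map_sub, map_smul, g.apply_symm_apply, hg, add_sub_cancel_right]

theorem exists_injective_pencil_iff (hdim : finrank ℂ M.V1 = finrank ℂ M.V2) :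
    (∃ t, Function.Injective (M.pencil t)) ↔
      ∃ (M' M'' : BarbellRep) (l : List ℕ), Function.Bijective M'.fc ∧
        RepIso M'' (dsumList (l.map Mstring)) ∧ RepIso M (dsum M' M'') := by
  constructor
  · rintro ⟨t, ht⟩
    obtain ⟨b, hb, hM⟩ := exists_repIso_ofPair ht hdim
    obtain ⟨M', l, hM', hsplit⟩ := exists_repIso_ofPair_dsum_dsumList_Mstring M.rel_a hb
    exact ⟨M', _, l, hM', .refl _, hM.trans hsplit⟩
  · rintro ⟨M', M'', l, hM', hM'', hM⟩
    obtain ⟨t, ht, ht_ne⟩ := ((eventually_injective_add_smul hM'.1 _).and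
      (Set.finite_singleton 0).eventually_cofinite_notMem).exists
    exact ⟨t, injective_pencil_of_repIso hM (injective_pencil_dsum ht
      (injective_pencil_of_repIso hM'' (injective_pencil_dsumList_Mstring l ht_ne)))⟩

end BarbellRep
/-- Fix a central charge `Z : ℤ² → ℂ` (values on the standard basis vectors
in `ℍ`) with `φ(0,1) < φ(1,0)`.  A representation `M` of the barbell quiver with potential
with dimension vector `(d, d)`, `d ≥ 1`, is semistable if and only if `M ≅ M' ⊕ M''` where
`f_c` of `M'` is an isomorphism and `M''` is a finite (possibly empty) direct sum of string
modules `M(acb(c⁻¹acb)ⁿ)`, `n ≥ 0`.  In particular every nonzero representation with `f_c` an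
isomorphism is semistable, and each `M(acb(c⁻¹acb)ⁿ)` is semistable. -/
theorem barbell_semistable_iff_direct_sum
    (Z : ℤ × ℤ →+ ℂ)
    (hZ10 : Z (1, 0) ∈ UpperH) (hZ01 : Z (0, 1) ∈ UpperH)
    (hph : phase (Z (0, 1)) < phase (Z (1, 0))) :
    (∀ d : ℕ, 1 ≤ d → ∀ M : BarbellRep, M.dimVec = (d, d) →
      (IsSemistable Z M ↔
        ∃ (M' M'' : BarbellRep) (l : List ℕ),
          Function.Bijective M'.fc ∧
          RepIso M'' (dsumList (l.map Mstring)) ∧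
          RepIso M (dsum M' M''))) ∧
    (∀ M : BarbellRep, M.dimVec ≠ (0, 0) → Function.Bijective M.fc → IsSemistable Z M) ∧
    (∀ n : ℕ, IsSemistable Z (Mstring n)) := by
  refine ⟨fun d hd M hM => ?_, fun M hM hfc => ?_, fun n => ?_⟩
  · have hdim : finrank ℂ M.V1 = finrank ℂ M.V2 :=
      (congrArg Prod.fst hM).trans (congrArg Prod.snd hM).symm
    have hM_ne : M.dimVec ≠ (0, 0) := by
      rw [hM]
      simpa using Nat.one_le_iff_ne_zero.1 hd
    rw [BarbellRep.isSemistable_iff_exists_injective_pencil hZ10 hZ01 hph hM_ne hdim]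
    exact BarbellRep.exists_injective_pencil_iff hdim
  · have hdim : finrank ℂ M.V1 = finrank ℂ M.V2 := (LinearEquiv.ofBijective M.fc hfc).finrank_eq
    rw [BarbellRep.isSemistable_iff_exists_injective_pencil hZ10 hZ01 hph hM hdim]
    exact ⟨0, BarbellRep.injective_pencil_zero hfc.1⟩
  · have hM_ne : (Mstring n).dimVec ≠ (0, 0) := fun h => by
      have : finrank ℂ (Fin (n + 1) × Bool → ℂ) = 0 := congrArg Prod.fst h
      simp at this
    rw [BarbellRep.isSemistable_iff_exists_injective_pencil hZ10 hZ01 hph hM_ne rfl]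
    exact ⟨1, BarbellRep.injective_pencil_Mstring n one_ne_zero⟩
end
end

section
/- Let M be a representation of the barbell quiver with potential whose map f_c is an isomorphism, and let N be a finite direct sum of string modules M(acb(c⁻¹acb)ⁿ) with n ≥ 0. Then every short exact sequence of representations 0 → M → E → N → 0 splits, and every short exact sequence 0 → N → E → M → 0 splits; equivalently, Ext¹(N, M) = 0 and Ext¹(M, N) = 0. -/
/-!
# Statement 7

Work over `ℂ`.  The barbell quiver has vertices `1` and `2`, a loop `a` at vertex `1`, a
loop `b` at vertex `2`, and an arrow `c : 1 → 2`; its potential is `W = a³ + b³`, whose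
Jacobian relations are `a² = 0` and `b² = 0`.  Let `M` be a representation of the barbell
quiver with potential whose map `f_c` is an isomorphism, and let `N` be a finite direct sum
of string modules `M(acb(c⁻¹acb)ⁿ)` with `n ≥ 0`.  Then every short exact sequence of
representations `0 → M → E → N → 0` splits, and every short exact sequence
`0 → N → E → M → 0` splits; equivalently `Ext¹(N, M) = 0` and `Ext¹(M, N) = 0`.
-/

noncomputable section
open Module

/-- A morphism of barbell representations: a pair of linear maps commuting with the
structure maps. -/
structure BHom (M N : BarbellRep) where
  g1 : M.V1 →ₗ[ℂ] N.V1
  g2 : M.V2 →ₗ[ℂ] N.V2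
  comm_a : ∀ x, g1 (M.fa x) = N.fa (g1 x)
  comm_b : ∀ y, g2 (M.fb y) = N.fb (g2 y)
  comm_c : ∀ x, g2 (M.fc x) = N.fc (g1 x)

/-- A (componentwise) short exact sequence `0 → Y → E → X → 0` of barbell
representations. -/
structure BSES (Y X : BarbellRep) where
  E : BarbellRep
  i : BHom Y E
  p : BHom E X
  inj1 : Function.Injective i.g1
  inj2 : Function.Injective i.g2
  surj1 : Function.Surjective p.g1
  surj2 : Function.Surjective p.g2
  exact1 : LinearMap.range i.g1 = LinearMap.ker p.g1
  exact2 : LinearMap.range i.g2 = LinearMap.ker p.g2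

/-- A short exact sequence `0 → Y → E → X → 0` splits if the projection `p` admits a
section which is a morphism of representations. -/
def BSES.IsSplit {Y X : BarbellRep} (ξ : BSES Y X) : Prop :=
  ∃ s : BHom X ξ.E, (∀ x, ξ.p.g1 (s.g1 x) = x) ∧ (∀ y, ξ.p.g2 (s.g2 y) = y)

/-!
A choice of linear sections of the projection turns a short exact sequence `0 → Y → E → X → 0`
into a cocycle, one component per arrow, and the sequence splits when this cocycle is a
coboundary. The loops of a string module act as contractible differentials `z_{4k} ↦ z_{4k+1}` and
`z_{4k+2} ↦ z_{4k+3}`, and a contraction on either side, `X` or `Y`, makes the components at the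
loops coboundaries. What remains is to write every linear map `h : X.V1 → Y.V2` as
`s2 ∘ c - c ∘ s1` with `s1`, `s2` commuting with the loops.

If `X` is the string module, `s1` and `s2` are given by the images `u k` of `z_{4k}` and `v k` of
`z_{4k+2}`, and the equation becomes a recursion: `v k` is determined by `u k`, and `u (k + 1)` is
a preimage under `c` of a vector determined by `v k`. If `Y` is the string module, the dual
recursion on coordinates runs from `k = n` down to `k = 0`.
-/

section LinearAlgebra

variable {R V W Y E X Y' E' X' : Type*} [Ring R]
  [AddCommGroup V] [Module R V] [AddCommGroup W] [Module R W]
  [AddCommGroup Y] [Module R Y] [AddCommGroup E] [Module R E] [AddCommGroup X] [Module R X]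
  [AddCommGroup Y'] [Module R Y'] [AddCommGroup E'] [Module R E']
  [AddCommGroup X'] [Module R X']

/-- A contracting homotopy of an endomorphism `f`, regarded as an ungraded differential, exists.
It replaces the freeness of `V` over the dual numbers `R[f]/(f²)`. -/
def HasContraction (f : V →ₗ[R] V) : Prop :=
  ∃ σ : V →ₗ[R] V, f ∘ₗ σ + σ ∘ₗ f = LinearMap.id

theorem HasContraction.exists_comp_sub_comp_eq_of_source {f : V →ₗ[R] V} (hf : HasContraction f)
    {g : W →ₗ[R] W} {h : V →ₗ[R] W} (hfg : h ∘ₗ f + g ∘ₗ h = 0) :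
    ∃ s : V →ₗ[R] W, s ∘ₗ f - g ∘ₗ s = h := by
  obtain ⟨σ, hσ⟩ := hf
  refine ⟨h ∘ₗ σ, ?_⟩
  calc (h ∘ₗ σ) ∘ₗ f - g ∘ₗ h ∘ₗ σ
      = h ∘ₗ (f ∘ₗ σ + σ ∘ₗ f) - (h ∘ₗ f + g ∘ₗ h) ∘ₗ σ := by
        simp only [LinearMap.comp_add, LinearMap.add_comp, LinearMap.comp_assoc]
        abel
    _ = h := by rw [hσ, hfg, LinearMap.comp_id, LinearMap.zero_comp, sub_zero]

theorem HasContraction.exists_comp_sub_comp_eq_of_target {g : W →ₗ[R] W} (hg : HasContraction g)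
    {f : V →ₗ[R] V} {h : V →ₗ[R] W} (hfg : h ∘ₗ f + g ∘ₗ h = 0) :
    ∃ s : V →ₗ[R] W, s ∘ₗ f - g ∘ₗ s = h := by
  obtain ⟨σ, hσ⟩ := hg
  refine ⟨-(σ ∘ₗ h), ?_⟩
  calc (-(σ ∘ₗ h)) ∘ₗ f - g ∘ₗ (-(σ ∘ₗ h))
      = (g ∘ₗ σ + σ ∘ₗ g) ∘ₗ h - σ ∘ₗ (h ∘ₗ f + g ∘ₗ h) := by
        simp only [LinearMap.comp_add, LinearMap.add_comp, LinearMap.comp_assoc,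
          LinearMap.neg_comp, LinearMap.comp_neg]
        abel
    _ = h := by rw [hσ, hfg, LinearMap.id_comp, LinearMap.comp_zero, sub_zero]

theorem exists_comp_eq_of_range_eq_ker {i : Y →ₗ[R] E} {p : E →ₗ[R] X}
    (hi : Function.Injective i) (hip : LinearMap.range i = LinearMap.ker p) {f : V →ₗ[R] E}
    (hf : p ∘ₗ f = 0) : ∃ θ : V →ₗ[R] Y, i ∘ₗ θ = f :=
  have hf' (x : V) : f x ∈ LinearMap.range i := hip ▸ LinearMap.congr_fun hf x
  ⟨(LinearEquiv.ofInjective i hi).symm ∘ₗ f.codRestrict _ hf', LinearMap.ext fun x => by simp⟩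

theorem exists_comp_eq_section_defect {i : Y →ₗ[R] E} {p : E →ₗ[R] X} {p' : E' →ₗ[R] X'}
    (hi : Function.Injective i) (hip : LinearMap.range i = LinearMap.ker p)
    {t : X →ₗ[R] E} (ht : p ∘ₗ t = LinearMap.id) {t' : X' →ₗ[R] E'} (ht' : p' ∘ₗ t' = LinearMap.id)
    {fE : E' →ₗ[R] E} {fX : X' →ₗ[R] X} (hp : p ∘ₗ fE = fX ∘ₗ p') :
    ∃ θ : X' →ₗ[R] Y, i ∘ₗ θ = fE ∘ₗ t' - t ∘ₗ fX := by
  refine exists_comp_eq_of_range_eq_ker hi hip ?_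
  rw [LinearMap.comp_sub, ← LinearMap.comp_assoc, ← LinearMap.comp_assoc, hp, ht,
    LinearMap.comp_assoc, ht', LinearMap.comp_id, LinearMap.id_comp, sub_self]

theorem section_defect_anticommutes {i : Y →ₗ[R] E} (hi : Function.Injective i) {t : X →ₗ[R] E}
    {fY : Y →ₗ[R] Y} {fE : E →ₗ[R] E} {fX : X →ₗ[R] X} (hiY : i ∘ₗ fY = fE ∘ₗ i)
    (hE : fE ∘ₗ fE = 0) (hX : fX ∘ₗ fX = 0) {θ : X →ₗ[R] Y} (hθ : i ∘ₗ θ = fE ∘ₗ t - t ∘ₗ fX) :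
    θ ∘ₗ fX + fY ∘ₗ θ = 0 := by
  rw [← LinearMap.cancel_left hi]
  calc i ∘ₗ (θ ∘ₗ fX + fY ∘ₗ θ)
      = (i ∘ₗ θ) ∘ₗ fX + fE ∘ₗ (i ∘ₗ θ) := by
        rw [LinearMap.comp_add, ← LinearMap.comp_assoc, ← LinearMap.comp_assoc, hiY,
          LinearMap.comp_assoc θ i fE]
    _ = (fE ∘ₗ fE) ∘ₗ t - t ∘ₗ (fX ∘ₗ fX) := by
        simp only [hθ, LinearMap.sub_comp, LinearMap.comp_sub, LinearMap.comp_assoc]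
        abel
    _ = i ∘ₗ 0 := by simp only [hE, hX, LinearMap.zero_comp, LinearMap.comp_zero, sub_zero]

theorem add_comp_intertwines {i : Y →ₗ[R] E} {i' : Y' →ₗ[R] E'} {t : X →ₗ[R] E}
    {t' : X' →ₗ[R] E'} {s : X →ₗ[R] Y} {s' : X' →ₗ[R] Y'} {fY : Y' →ₗ[R] Y} {fE : E' →ₗ[R] E}
    {fX : X' →ₗ[R] X} (hi : i ∘ₗ fY = fE ∘ₗ i')
    (hs : i ∘ₗ (s ∘ₗ fX - fY ∘ₗ s') = fE ∘ₗ t' - t ∘ₗ fX) :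
    (t + i ∘ₗ s) ∘ₗ fX = fE ∘ₗ (t' + i' ∘ₗ s') := by
  have hs' : i ∘ₗ s ∘ₗ fX - fE ∘ₗ i' ∘ₗ s' = fE ∘ₗ t' - t ∘ₗ fX := by
    rw [← hs, LinearMap.comp_sub, ← LinearMap.comp_assoc s' fY i, hi, LinearMap.comp_assoc]
  rw [LinearMap.add_comp, LinearMap.comp_add, LinearMap.comp_assoc, ← sub_eq_zero]
  rw [← sub_eq_zero] at hs'
  rw [← hs']
  abel

theorem coprod_comp_prodMap_sub_eq {s : X →ₗ[R] V} {r : Y →ₗ[R] V} {s' : X' →ₗ[R] W}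
    {r' : Y' →ₗ[R] W} {fX : X' →ₗ[R] X} {fY : Y' →ₗ[R] Y} {g : W →ₗ[R] V} {θ : X' × Y' →ₗ[R] V}
    (hs : s ∘ₗ fX - g ∘ₗ s' = θ ∘ₗ LinearMap.inl R X' Y')
    (hr : r ∘ₗ fY - g ∘ₗ r' = θ ∘ₗ LinearMap.inr R X' Y') :
    s.coprod r ∘ₗ fX.prodMap fY - g ∘ₗ s'.coprod r' = θ := by
  refine LinearMap.prod_ext (Eq.trans ?_ hs) (Eq.trans ?_ hr) <;> ext <;> simp

end LinearAlgebra

theorem exists_fin_forward_seq {α β : Type*} {c : α → β} (hc : Function.Surjective c) {n : ℕ}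
    (x : β) (F : Fin n → α → β) :
    ∃ u : Fin (n + 1) → α, c (u 0) = x ∧ ∀ k : Fin n, c (u k.succ) = F k (u k.castSucc) :=
  ⟨Fin.induction (motive := fun _ => α) (Function.surjInv hc x)
      fun k y => Function.surjInv hc (F k y),
    Function.surjInv_eq hc x, fun _ => Function.surjInv_eq hc _⟩

theorem exists_fin_backward_seq {α β : Type*} {c : α → β} (hc : Function.Surjective c) {n : ℕ}
    (x : β) (F : Fin n → α → β) :
    ∃ u : Fin (n + 1) → α,
      c (u (Fin.last n)) = x ∧ ∀ k : Fin n, c (u k.castSucc) = F k (u k.succ) := by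
  refine ⟨Fin.reverseInduction (motive := fun _ => α) (Function.surjInv hc x)
    fun k y => Function.surjInv hc (F k y), ?_, fun k => ?_⟩
  · rw [Fin.reverseInduction_last, Function.surjInv_eq hc]
  · rw [Fin.reverseInduction_castSucc, Function.surjInv_eq hc]

namespace BarbellRep

variable {X Y : BarbellRep}

/-- A `1`-cocycle of `X` with values in `Y`: the components, one for each arrow of the quiver, by
which the structure maps of an extension `0 → Y → E → X → 0` differ from those of the direct sum.
The relations linearise `a² = 0` and `b² = 0`. -/
structure Cocycle (X Y : BarbellRep) where
  a : X.V1 →ₗ[ℂ] Y.V1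
  b : X.V2 →ₗ[ℂ] Y.V2
  c : X.V1 →ₗ[ℂ] Y.V2
  rel_a : a ∘ₗ X.fa + Y.fa ∘ₗ a = 0
  rel_b : b ∘ₗ X.fb + Y.fb ∘ₗ b = 0

/-- A cocycle is a coboundary if it measures the failure of some pair of linear maps to be a
morphism of representations. -/
def Cocycle.IsCoboundary (θ : Cocycle X Y) : Prop :=
  ∃ (s1 : X.V1 →ₗ[ℂ] Y.V1) (s2 : X.V2 →ₗ[ℂ] Y.V2),
    s1 ∘ₗ X.fa - Y.fa ∘ₗ s1 = θ.a ∧ s2 ∘ₗ X.fb - Y.fb ∘ₗ s2 = θ.b ∧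
      s2 ∘ₗ X.fc - Y.fc ∘ₗ s1 = θ.c

/-- The vanishing of `Ext¹(X, Y)`, computed as cocycles modulo coboundaries. -/
def ExtVanishes (X Y : BarbellRep) : Prop := ∀ θ : Cocycle X Y, θ.IsCoboundary

end BarbellRep

open BarbellRep

namespace BSES

variable {X Y : BarbellRep}

/-- The cocycle `θ` is the obstruction to the linear sections `t1`, `t2` of `ξ` forming a morphism
of representations. -/
structure IsSectionCocycle (ξ : BSES Y X) (t1 : X.V1 →ₗ[ℂ] ξ.E.V1) (t2 : X.V2 →ₗ[ℂ] ξ.E.V2)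
    (θ : Cocycle X Y) : Prop where
  section1 : ξ.p.g1 ∘ₗ t1 = LinearMap.id
  section2 : ξ.p.g2 ∘ₗ t2 = LinearMap.id
  defect_a : ξ.i.g1 ∘ₗ θ.a = ξ.E.fa ∘ₗ t1 - t1 ∘ₗ X.fa
  defect_b : ξ.i.g2 ∘ₗ θ.b = ξ.E.fb ∘ₗ t2 - t2 ∘ₗ X.fb
  defect_c : ξ.i.g2 ∘ₗ θ.c = ξ.E.fc ∘ₗ t1 - t2 ∘ₗ X.fc

theorem exists_isSectionCocycle (ξ : BSES Y X) :
    ∃ t1 t2 θ, ξ.IsSectionCocycle t1 t2 θ := by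
  obtain ⟨t1, ht1⟩ := ξ.p.g1.exists_rightInverse_of_surjective (LinearMap.range_eq_top.2 ξ.surj1)
  obtain ⟨t2, ht2⟩ := ξ.p.g2.exists_rightInverse_of_surjective (LinearMap.range_eq_top.2 ξ.surj2)
  obtain ⟨θa, ha⟩ := exists_comp_eq_section_defect ξ.inj1 ξ.exact1 ht1 ht1
    (LinearMap.ext ξ.p.comm_a)
  obtain ⟨θb, hb⟩ := exists_comp_eq_section_defect ξ.inj2 ξ.exact2 ht2 ht2
    (LinearMap.ext ξ.p.comm_b)
  obtain ⟨θc, hc⟩ := exists_comp_eq_section_defect ξ.inj2 ξ.exact2 ht2 ht1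
    (LinearMap.ext ξ.p.comm_c)
  have rel_a : θa ∘ₗ X.fa + Y.fa ∘ₗ θa = 0 :=
    section_defect_anticommutes ξ.inj1 (LinearMap.ext ξ.i.comm_a) ξ.E.rel_a X.rel_a ha
  have rel_b : θb ∘ₗ X.fb + Y.fb ∘ₗ θb = 0 :=
    section_defect_anticommutes ξ.inj2 (LinearMap.ext ξ.i.comm_b) ξ.E.rel_b X.rel_b hb
  exact ⟨t1, t2, ⟨θa, θb, θc, rel_a, rel_b⟩, ht1, ht2, ha, hb, hc⟩

theorem IsSectionCocycle.isSplit {ξ : BSES Y X} {t1 : X.V1 →ₗ[ℂ] ξ.E.V1}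
    {t2 : X.V2 →ₗ[ℂ] ξ.E.V2} {θ : Cocycle X Y} (h : ξ.IsSectionCocycle t1 t2 θ)
    (hθ : θ.IsCoboundary) : ξ.IsSplit := by
  obtain ⟨s1, s2, ha, hb, hc⟩ := hθ
  have pi1 (y : Y.V1) : ξ.p.g1 (ξ.i.g1 y) = 0 :=
    LinearMap.mem_ker.1 (ξ.exact1 ▸ LinearMap.mem_range_self _ y)
  have pi2 (y : Y.V2) : ξ.p.g2 (ξ.i.g2 y) = 0 :=
    LinearMap.mem_ker.1 (ξ.exact2 ▸ LinearMap.mem_range_self _ y)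
  let s : BHom X ξ.E :=
    { g1 := t1 + ξ.i.g1 ∘ₗ s1
      g2 := t2 + ξ.i.g2 ∘ₗ s2
      comm_a := LinearMap.congr_fun
        (add_comp_intertwines (LinearMap.ext ξ.i.comm_a) (ha ▸ h.defect_a))
      comm_b := LinearMap.congr_fun
        (add_comp_intertwines (LinearMap.ext ξ.i.comm_b) (hb ▸ h.defect_b))
      comm_c := LinearMap.congr_fun
        (add_comp_intertwines (LinearMap.ext ξ.i.comm_c) (hc ▸ h.defect_c)) }
  refine ⟨s, fun x => ?_, fun y => ?_⟩
  · simpa [s, pi1] using LinearMap.congr_fun h.section1 x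
  · simpa [s, pi2] using LinearMap.congr_fun h.section2 y

theorem isSplit_of_extVanishes (ξ : BSES Y X) (h : ExtVanishes X Y) : ξ.IsSplit := by
  obtain ⟨_, _, θ, hθ⟩ := ξ.exists_isSectionCocycle
  exact hθ.isSplit (h θ)

end BSES

namespace BarbellRep

variable {X Y A B : BarbellRep}

instance : Subsingleton zeroRep.V1 := inferInstanceAs (Subsingleton (Fin 0 → ℂ))

instance : Subsingleton zeroRep.V2 := inferInstanceAs (Subsingleton (Fin 0 → ℂ))

theorem ExtVanishes.zeroRep_left (Y : BarbellRep) : ExtVanishes zeroRep Y := fun _ =>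
  ⟨0, 0, Subsingleton.elim _ _, Subsingleton.elim _ _, Subsingleton.elim _ _⟩

theorem ExtVanishes.zeroRep_right (X : BarbellRep) : ExtVanishes X zeroRep := fun _ =>
  ⟨0, 0, Subsingleton.elim _ _, Subsingleton.elim _ _, Subsingleton.elim _ _⟩

/-- The inclusion of the first summand, along which cocycles on a direct sum are restricted. -/
def inl (A B : BarbellRep) : BHom A (dsum A B) where
  g1 := LinearMap.inl ℂ A.V1 B.V1
  g2 := LinearMap.inl ℂ A.V2 B.V2
  comm_a _ := Prod.ext rfl (map_zero B.fa).symm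
  comm_b _ := Prod.ext rfl (map_zero B.fb).symm
  comm_c _ := Prod.ext rfl (map_zero B.fc).symm

/-- The inclusion of the second summand, along which cocycles on a direct sum are restricted. -/
def inr (A B : BarbellRep) : BHom B (dsum A B) where
  g1 := LinearMap.inr ℂ A.V1 B.V1
  g2 := LinearMap.inr ℂ A.V2 B.V2
  comm_a _ := Prod.ext (map_zero A.fa).symm rfl
  comm_b _ := Prod.ext (map_zero A.fb).symm rfl
  comm_c _ := Prod.ext (map_zero A.fc).symm rfl

/-- The projection to the first summand, along which cocycles into a direct sum are pushed. -/
def fst (A B : BarbellRep) : BHom (dsum A B) A where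
  g1 := LinearMap.fst ℂ A.V1 B.V1
  g2 := LinearMap.fst ℂ A.V2 B.V2
  comm_a _ := rfl
  comm_b _ := rfl
  comm_c _ := rfl

/-- The projection to the second summand, along which cocycles into a direct sum are pushed. -/
def snd (A B : BarbellRep) : BHom (dsum A B) B where
  g1 := LinearMap.snd ℂ A.V1 B.V1
  g2 := LinearMap.snd ℂ A.V2 B.V2
  comm_a _ := rfl
  comm_b _ := rfl
  comm_c _ := rfl

/-- The restriction of a cocycle along a morphism into its source: contravariant functoriality of
`Ext¹`. -/
def Cocycle.pullback (θ : Cocycle X Y) (g : BHom A X) : Cocycle A Y where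
  a := θ.a ∘ₗ g.g1
  b := θ.b ∘ₗ g.g2
  c := θ.c ∘ₗ g.g1
  rel_a := LinearMap.ext fun x => by
    simpa [g.comm_a] using LinearMap.congr_fun θ.rel_a (g.g1 x)
  rel_b := LinearMap.ext fun x => by
    simpa [g.comm_b] using LinearMap.congr_fun θ.rel_b (g.g2 x)

/-- The image of a cocycle under a morphism out of its target: covariant functoriality of
`Ext¹`. -/
def Cocycle.pushforward (θ : Cocycle X Y) (g : BHom Y A) : Cocycle X A where
  a := g.g1 ∘ₗ θ.a
  b := g.g2 ∘ₗ θ.b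
  c := g.g2 ∘ₗ θ.c
  rel_a := LinearMap.ext fun x => by
    simpa [g.comm_a] using congrArg g.g1 (LinearMap.congr_fun θ.rel_a x)
  rel_b := LinearMap.ext fun x => by
    simpa [g.comm_b] using congrArg g.g2 (LinearMap.congr_fun θ.rel_b x)

theorem ExtVanishes.dsum_left (hA : ExtVanishes A Y) (hB : ExtVanishes B Y) :
    ExtVanishes (dsum A B) Y := by
  intro θ
  obtain ⟨s1, s2, sa, sb, sc⟩ := hA (θ.pullback (inl A B))
  obtain ⟨r1, r2, ra, rb, rc⟩ := hB (θ.pullback (inr A B))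
  exact ⟨s1.coprod r1, s2.coprod r2, coprod_comp_prodMap_sub_eq sa ra,
    coprod_comp_prodMap_sub_eq sb rb, coprod_comp_prodMap_sub_eq sc rc⟩

theorem ExtVanishes.dsum_right (hA : ExtVanishes X A) (hB : ExtVanishes X B) :
    ExtVanishes X (dsum A B) := by
  intro θ
  obtain ⟨s1, s2, sa, sb, sc⟩ := hA (θ.pushforward (fst A B))
  obtain ⟨r1, r2, ra, rb, rc⟩ := hB (θ.pushforward (snd A B))
  exact ⟨s1.prod r1, s2.prod r2,
    LinearMap.ext fun x => Prod.ext (LinearMap.congr_fun sa x) (LinearMap.congr_fun ra x),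
    LinearMap.ext fun x => Prod.ext (LinearMap.congr_fun sb x) (LinearMap.congr_fun rb x),
    LinearMap.ext fun x => Prod.ext (LinearMap.congr_fun sc x) (LinearMap.congr_fun rc x)⟩

theorem ExtVanishes.dsumList_left {l : List BarbellRep} (h : ∀ X ∈ l, ExtVanishes X Y) :
    ExtVanishes (dsumList l) Y := by
  induction l with
  | nil => exact zeroRep_left Y
  | cons X l ih =>
    rw [List.forall_mem_cons] at h
    exact h.1.dsum_left (ih h.2)

theorem ExtVanishes.dsumList_right {l : List BarbellRep} (h : ∀ Y ∈ l, ExtVanishes X Y) :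
    ExtVanishes X (dsumList l) := by
  induction l with
  | nil => exact zeroRep_right X
  | cons Y l ih =>
    rw [List.forall_mem_cons] at h
    exact h.1.dsum_right (ih h.2)

/-- Every cocycle concentrated on the arrow `c` is the coboundary of a pair of maps that commute
with the loops. -/
def ArrowExtVanishes (X Y : BarbellRep) : Prop :=
  ∀ h : X.V1 →ₗ[ℂ] Y.V2, ∃ (s1 : X.V1 →ₗ[ℂ] Y.V1) (s2 : X.V2 →ₗ[ℂ] Y.V2),
    s1 ∘ₗ X.fa = Y.fa ∘ₗ s1 ∧ s2 ∘ₗ X.fb = Y.fb ∘ₗ s2 ∧ s2 ∘ₗ X.fc - Y.fc ∘ₗ s1 = h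

theorem ArrowExtVanishes.isCoboundary (h : ArrowExtVanishes X Y) (θ : Cocycle X Y)
    (ha : ∃ s1, s1 ∘ₗ X.fa - Y.fa ∘ₗ s1 = θ.a) (hb : ∃ s2, s2 ∘ₗ X.fb - Y.fb ∘ₗ s2 = θ.b) :
    θ.IsCoboundary := by
  obtain ⟨s1, hs1⟩ := ha
  obtain ⟨s2, hs2⟩ := hb
  obtain ⟨r1, r2, hr1, hr2, hr⟩ := h (θ.c - (s2 ∘ₗ X.fc - Y.fc ∘ₗ s1))
  refine ⟨s1 + r1, s2 + r2, ?_, ?_, ?_⟩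
  · rw [LinearMap.add_comp, LinearMap.comp_add, hr1, add_sub_add_right_eq_sub, hs1]
  · rw [LinearMap.add_comp, LinearMap.comp_add, hr2, add_sub_add_right_eq_sub, hs2]
  · rw [LinearMap.add_comp, LinearMap.comp_add, add_sub_add_comm, hr, add_sub_cancel]

theorem ArrowExtVanishes.extVanishes_of_source (h : ArrowExtVanishes X Y)
    (ha : HasContraction X.fa) (hb : HasContraction X.fb) : ExtVanishes X Y := fun θ =>
  h.isCoboundary θ (ha.exists_comp_sub_comp_eq_of_source θ.rel_a)
    (hb.exists_comp_sub_comp_eq_of_source θ.rel_b)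

theorem ArrowExtVanishes.extVanishes_of_target (h : ArrowExtVanishes X Y)
    (ha : HasContraction Y.fa) (hb : HasContraction Y.fb) : ExtVanishes X Y := fun θ =>
  h.isCoboundary θ (ha.exists_comp_sub_comp_eq_of_target θ.rel_a)
    (hb.exists_comp_sub_comp_eq_of_target θ.rel_b)

end BarbellRep

section StringModules

variable {n : ℕ}

theorem strFa_single_false (k : Fin (n + 1)) :
    strFa n (Pi.single (k, false) 1) = Pi.single (k, true) 1 := by
  ext ⟨j, _ | _⟩ <;> simp [strFa, Pi.single_apply]

theorem strFa_single_true (k : Fin (n + 1)) : strFa n (Pi.single (k, true) 1) = 0 := by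
  ext ⟨j, _ | _⟩ <;> simp [strFa]

theorem strFc_apply_false (v : Fin (n + 1) × Bool → ℂ) (k : Fin (n + 1)) :
    strFc n v (k, false) = v (k, true) := rfl

theorem strFc_apply_castSucc_true (v : Fin (n + 1) × Bool → ℂ) (k : Fin n) :
    strFc n v (k.castSucc, true) = v (k.succ, false) :=
  dif_pos (Nat.succ_lt_succ k.isLt)

theorem strFc_apply_last_true (v : Fin (n + 1) × Bool → ℂ) :
    strFc n v (Fin.last n, true) = 0 :=
  dif_neg (lt_irrefl _)

theorem strFc_single_true (k : Fin (n + 1)) :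
    strFc n (Pi.single (k, true) 1) = Pi.single (k, false) 1 := by
  ext ⟨j, _ | _⟩
  · simp [strFc_apply_false, Pi.single_apply]
  · cases j using Fin.lastCases <;>
      simp [strFc_apply_last_true, strFc_apply_castSucc_true]

theorem strFc_single_zero_false : strFc n (Pi.single (0, false) 1) = 0 := by
  ext ⟨j, _ | _⟩
  · simp [strFc_apply_false]
  · cases j using Fin.lastCases <;>
      simp [strFc_apply_last_true, strFc_apply_castSucc_true]

theorem strFc_single_succ_false (k : Fin n) :
    strFc n (Pi.single (k.succ, false) 1) = Pi.single (k.castSucc, true) 1 := by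
  ext ⟨j, _ | _⟩
  · simp [strFc_apply_false]
  · cases j using Fin.lastCases <;>
      simp [strFc_apply_last_true, strFc_apply_castSucc_true, Pi.single_apply,
        (Fin.castSucc_ne_last _).symm]

theorem hasContraction_strFa (n : ℕ) : HasContraction (strFa n) := by
  refine ⟨LinearMap.pi fun p => if p.2 then 0 else LinearMap.proj (p.1, true), ?_⟩
  refine LinearMap.ext fun v => funext fun ⟨k, b⟩ => ?_
  cases b <;> simp [strFa]

variable {V : Type*} [AddCommGroup V] [Module ℂ V] {f : V →ₗ[ℂ] V}

/-- The map out of a string module that sends the generators `(k, false)` to `u k` and intertwines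
`strFa` with `f`. -/
def stringLift (f : V →ₗ[ℂ] V) (u : Fin (n + 1) → V) : (Fin (n + 1) × Bool → ℂ) →ₗ[ℂ] V :=
  (Pi.basisFun ℂ _).constr ℂ fun p => if p.2 then f (u p.1) else u p.1

theorem stringLift_single_false (f : V →ₗ[ℂ] V) (u : Fin (n + 1) → V) (k : Fin (n + 1)) :
    stringLift f u (Pi.single (k, false) 1) = u k := by
  rw [stringLift, ← Pi.basisFun_apply, Basis.constr_basis]
  rfl

theorem stringLift_single_true (f : V →ₗ[ℂ] V) (u : Fin (n + 1) → V) (k : Fin (n + 1)) :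
    stringLift f u (Pi.single (k, true) 1) = f (u k) := by
  rw [stringLift, ← Pi.basisFun_apply, Basis.constr_basis]
  rfl

theorem stringLift_comp_strFa (hf : f ∘ₗ f = 0) (u : Fin (n + 1) → V) :
    stringLift f u ∘ₗ strFa n = f ∘ₗ stringLift f u := by
  have hff (x : V) : f (f x) = 0 := LinearMap.congr_fun hf x
  refine (Pi.basisFun ℂ _).ext fun ⟨k, b⟩ => ?_
  cases b <;> simp [strFa_single_false, strFa_single_true, stringLift_single_false,
    stringLift_single_true, hff]

/-- The map into a string module whose coordinates at `(k, true)` are the functionals `φ k` and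
which intertwines `f` with `strFa`. -/
def stringColift (f : V →ₗ[ℂ] V) (φ : Fin (n + 1) → Dual ℂ V) :
    V →ₗ[ℂ] (Fin (n + 1) × Bool → ℂ) :=
  LinearMap.pi fun p => if p.2 then φ p.1 else φ p.1 ∘ₗ f

theorem stringColift_apply_false (f : V →ₗ[ℂ] V) (φ : Fin (n + 1) → Dual ℂ V) (x : V)
    (k : Fin (n + 1)) : stringColift f φ x (k, false) = φ k (f x) := rfl

theorem stringColift_apply_true (f : V →ₗ[ℂ] V) (φ : Fin (n + 1) → Dual ℂ V) (x : V)
    (k : Fin (n + 1)) : stringColift f φ x (k, true) = φ k x := rfl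

theorem stringColift_comp (hf : f ∘ₗ f = 0) (φ : Fin (n + 1) → Dual ℂ V) :
    stringColift f φ ∘ₗ f = strFa n ∘ₗ stringColift f φ := by
  have hff (x : V) : f (f x) = 0 := LinearMap.congr_fun hf x
  refine LinearMap.ext fun x => funext fun ⟨k, b⟩ => ?_
  cases b <;> simp [strFa, stringColift_apply_false, stringColift_apply_true, hff]

end StringModules

namespace BarbellRep

variable {M : BarbellRep}

theorem arrowExtVanishes_Mstring_left (hM : Function.Surjective M.fc) (n : ℕ) :
    ArrowExtVanishes (Mstring n) M := by
  intro (h : (Fin (n + 1) × Bool → ℂ) →ₗ[ℂ] M.V2)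
  let v (k : Fin (n + 1)) (y : M.V1) : M.V2 := M.fc (M.fa y) + h (Pi.single (k, true) 1)
  obtain ⟨u, u_zero, u_succ⟩ := exists_fin_forward_seq hM (-h (Pi.single (0, false) 1))
    fun k y => M.fb (v k.castSucc y) - h (Pi.single (k.succ, false) 1)
  let s1 := stringLift M.fa u
  let s2 := stringLift M.fb fun k => v k (u k)
  refine ⟨s1, s2, stringLift_comp_strFa M.rel_a _, stringLift_comp_strFa M.rel_b _, ?_⟩
  change s2 ∘ₗ strFc n - M.fc ∘ₗ s1 = h
  refine (Pi.basisFun ℂ _).ext fun ⟨k, b⟩ => ?_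
  simp only [Pi.basisFun_apply, LinearMap.sub_apply, LinearMap.comp_apply, s1, s2]
  cases b with
  | true =>
    rw [strFc_single_true, stringLift_single_false, stringLift_single_true, add_sub_cancel_left]
  | false =>
    rw [stringLift_single_false]
    cases k using Fin.cases with
    | zero => rw [strFc_single_zero_false, map_zero, u_zero, zero_sub, neg_neg]
    | succ k => rw [strFc_single_succ_false, stringLift_single_true, u_succ, sub_sub_cancel]

theorem arrowExtVanishes_Mstring_right (hM : Function.Injective M.fc) (n : ℕ) :
    ArrowExtVanishes M (Mstring n) := by
  intro (h : M.V1 →ₗ[ℂ] (Fin (n + 1) × Bool → ℂ))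
  let φ (k : Fin (n + 1)) (χ : Dual ℂ M.V2) : Dual ℂ M.V1 :=
    χ ∘ₗ M.fb ∘ₗ M.fc - LinearMap.proj (k, false) ∘ₗ h
  obtain ⟨ψ, ψ_last, ψ_castSucc⟩ := exists_fin_backward_seq
    (LinearMap.dualMap_surjective_of_injective hM) (LinearMap.proj (Fin.last n, true) ∘ₗ h)
    fun k χ => φ k.succ χ ∘ₗ M.fa + LinearMap.proj (k.castSucc, true) ∘ₗ h
  let s1 := stringColift M.fa fun k => φ k (ψ k)
  let s2 := stringColift M.fb ψ
  refine ⟨s1, s2, stringColift_comp M.rel_a _, stringColift_comp M.rel_b _, ?_⟩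
  change s2 ∘ₗ M.fc - strFc n ∘ₗ s1 = h
  refine LinearMap.ext fun x => funext fun ⟨k, b⟩ => ?_
  simp only [LinearMap.sub_apply, LinearMap.comp_apply, Pi.sub_apply, s1, s2]
  cases b with
  | false =>
    rw [strFc_apply_false, stringColift_apply_false, stringColift_apply_true]
    exact sub_sub_cancel _ _
  | true =>
    rw [stringColift_apply_true]
    cases k using Fin.lastCases with
    | last =>
      rw [strFc_apply_last_true, sub_zero]
      exact LinearMap.congr_fun ψ_last x
    | cast k =>
      rw [strFc_apply_castSucc_true, stringColift_apply_false, sub_eq_iff_eq_add']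
      exact LinearMap.congr_fun (ψ_castSucc k) x

theorem extVanishes_Mstring_left (hM : Function.Surjective M.fc) (n : ℕ) :
    ExtVanishes (Mstring n) M :=
  (arrowExtVanishes_Mstring_left hM n).extVanishes_of_source
    (hasContraction_strFa n) (hasContraction_strFa n)

theorem extVanishes_Mstring_right (hM : Function.Injective M.fc) (n : ℕ) :
    ExtVanishes M (Mstring n) :=
  (arrowExtVanishes_Mstring_right hM n).extVanishes_of_target
    (hasContraction_strFa n) (hasContraction_strFa n)

end BarbellRep

theorem barbell_no_extensions_general (M : BarbellRep) (l : List ℕ) :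
    (Function.Surjective M.fc → ∀ ξ : BSES M (dsumList (l.map Mstring)), ξ.IsSplit) ∧
    (Function.Injective M.fc → ∀ ξ : BSES (dsumList (l.map Mstring)) M, ξ.IsSplit) :=
  ⟨fun hM ξ => ξ.isSplit_of_extVanishes <| .dsumList_left <|
      List.forall_mem_map.2 fun n _ => extVanishes_Mstring_left hM n,
    fun hM ξ => ξ.isSplit_of_extVanishes <| .dsumList_right <|
      List.forall_mem_map.2 fun n _ => extVanishes_Mstring_right hM n⟩

/-- Let `M` be a representation of the barbell quiver with potential whose
map `f_c` is an isomorphism, and let `N = ⊕_{n ∈ l} M(acb(c⁻¹acb)ⁿ)` be a finite direct sum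
of the string modules.  Then every short exact sequence `0 → M → E → N → 0` splits and every
short exact sequence `0 → N → E → M → 0` splits; equivalently, `Ext¹(N, M) = 0` and
`Ext¹(M, N) = 0`. -/
theorem barbell_no_extensions
    (M : BarbellRep) (hM : Function.Bijective M.fc) (l : List ℕ) :
    (∀ ξ : BSES M (dsumList (l.map Mstring)), ξ.IsSplit) ∧
    (∀ ξ : BSES (dsumList (l.map Mstring)) M, ξ.IsSplit) :=
  ⟨(barbell_no_extensions_general M l).1 hM.2, (barbell_no_extensions_general M l).2 hM.1⟩
end
end
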